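/- arXiv:1507.04132 — 6 statements merged into one kernel-verified Lean document; each statement's English description precedes it below -/
import Mathlib

section
/- Let (X,T) be a uniquely ergodic topological dynamical system on a compact metric space with unique invariant probability measure μ. Assume that for every uniquely ergodic model (Y,S) of (X,μ,T) — i.e., every uniquely ergodic continuous map S of a compact metric space Y whose unique invariant probability measure ν makes (Y,ν,S) measure-theoretically isomorphic to (X,μ,T) — the following holds: for every multiplicative u : ℕ → ℂ with |u| ≤ 1, every continuous f with ∫_Y f dν = 0 and every y ∈ Y, (1/N) Σ_{n ≤ N} f(Sⁿy) u(n) → 0. Let 1 = b₁ < b₂ < ⋯ be an increasing sequence of integers with b_{k+1} − b_k → ∞, and let (x_k) be an arbitrary sequence of points in X. Then for every multiplicative function u : ℕ → ℂ with |u(n)| ≤ 1 and every continuous f : X → ℂ with ∫_X f dμ = 0, one has (1/b_{K+1}) Σ_{1 ≤ k ≤ K} Σ_{b_k ≤ n < b_{k+1}} f(Tⁿx_k) u(n) → 0 as K → ∞. -/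
open MeasureTheory Filter

universe u

/-- `S` is uniquely ergodic with unique invariant Borel probability measure `ν`. -/
def UniquelyErgodicWith {Y : Type*} [MeasurableSpace Y] (S : Y → Y) (ν : Measure Y) : Prop :=
  IsProbabilityMeasure ν ∧ ν.map S = ν ∧
  ∀ μ' : Measure Y, IsProbabilityMeasure μ' → μ'.map S = μ' → μ' = ν

/-- `(X,μ,T)` and `(Y,ν,S)` are measure-theoretically isomorphic: there is an invertible
(mod 0) measure-preserving map intertwining the transformations almost everywhere. -/
def MeasureIso {X Y : Type*} [MeasurableSpace X] [MeasurableSpace Y]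
    (T : X → X) (μ : Measure X) (S : Y → Y) (ν : Measure Y) : Prop :=
  ∃ φ : X → Y, ∃ ψ : Y → X, Measurable φ ∧ Measurable ψ ∧
    μ.map φ = ν ∧
    (∀ᵐ x ∂μ, ψ (φ x) = x) ∧ (∀ᵐ y ∂ν, φ (ψ y) = y) ∧
    (∀ᵐ x ∂μ, φ (T x) = S (φ x))

/-- A set visited by every orbit with frequency zero, uniformly over orbits, is null for every
invariant probability measure. -/
theorem measure_eq_zero_of_card_visits_le {Y : Type*} [MeasurableSpace Y] {S : Y → Y}
    {ν : Measure Y} [IsProbabilityMeasure ν] (hS : MeasurePreserving S ν ν)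
    {U : Set Y} (hU : MeasurableSet U) (C : ℕ → ℕ)
    (hC : ∀ M N y, ∀ A ⊆ Finset.range N, (∀ n ∈ A, S^[n] y ∈ U) → A.card * M ≤ C M + N) :
    ν U = 0 := by
  classical
  have h_integrable (n : ℕ) : Integrable ((S^[n] ⁻¹' U).indicator (fun _ => (1 : ℝ))) ν :=
    (integrable_const _).indicator ((hS.iterate n).measurable hU)
  have hbound (M N : ℕ) : (N : ℝ) * ν.real U * M ≤ C M + N := by
    have hsum : ∫ y, (∑ n ∈ Finset.range N, (S^[n] ⁻¹' U).indicator (fun _ => (1 : ℝ)) y) * M ∂ν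
        = N * ν.real U * M := by
      rw [integral_mul_const, integral_finsetSum _ fun n _ => h_integrable n]
      congr 1
      have hn (n : ℕ) : ∫ y, (S^[n] ⁻¹' U).indicator (fun _ => (1 : ℝ)) y ∂ν = ν.real U := by
        rw [integral_indicator_const _ ((hS.iterate n).measurable hU), Measure.real,
          (hS.iterate n).measure_preimage hU.nullMeasurableSet]
        simp [Measure.real]
      simp [hn]
    rw [← hsum]
    calc _ ≤ ∫ _, ((C M : ℝ) + N) ∂ν := by
          refine integral_mono ((integrable_finsetSum _ fun n _ => h_integrable n).mul_const _)
            (integrable_const _) fun y => ?_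
          have h := hC M N y {n ∈ Finset.range N | S^[n] y ∈ U} (Finset.filter_subset _ _)
            (by simp)
          have hcard : ∑ n ∈ Finset.range N, (S^[n] ⁻¹' U).indicator (fun _ => (1 : ℝ)) y
              = (Finset.card {n ∈ Finset.range N | S^[n] y ∈ U} : ℝ) := by
            simp [Set.indicator_apply, Finset.sum_boole]
          simp only [hcard]
          exact_mod_cast h
      _ = _ := by simp
  have hle (M : ℕ) : ν.real U * M ≤ 1 := by
    by_contra! h
    obtain ⟨N, hN⟩ := exists_nat_gt ((C M : ℝ) / (ν.real U * M - 1))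
    rw [div_lt_iff₀ (by linarith)] at hN
    nlinarith [hbound M N]
  have h0 : ν.real U = 0 := by
    by_contra h
    have hpos : 0 < ν.real U := lt_of_le_of_ne measureReal_nonneg (Ne.symm h)
    obtain ⟨M, hM⟩ := exists_nat_gt (1 / ν.real U)
    rw [div_lt_iff₀ hpos] at hM
    nlinarith [hle M]
  exact (measureReal_eq_zero_iff).1 h0

/-- If the gaps of `b` tend to infinity, then the values of `b` have uniform density zero. -/
theorem exists_card_le_of_tendsto_gap {b : ℕ → ℕ}
    (hbgap : Tendsto (fun k : ℕ => b (k + 1) - b k) atTop atTop) (M : ℕ) :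
    ∃ C : ℕ, ∀ j N, ∀ A ⊆ Finset.Ico j (j + N),
      (∀ n ∈ A, ∃ k, n + 1 = b k) → A.card * M ≤ C + N := by
  classical
  obtain ⟨K, hK⟩ := (tendsto_atTop.1 hbgap (M + 1)).exists_forall_of_atTop
  have hstep (k : ℕ) (hk : K ≤ k) (d : ℕ) : b k + d * M ≤ b (k + d) := by
    induction d with
    | zero => simp
    | succ d ih =>
      have := hK (k + d) (by omega)
      rw [← add_assoc, add_mul]
      omega
  refine ⟨(K + 1) * M, fun j N A hA hAb => ?_⟩
  choose! κ hκ using hAb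
  have hinj : Set.InjOn κ A := fun m hm n hn h => by
    have h₁ := hκ m hm
    have h₂ := hκ n hn
    rw [h] at h₁
    omega
  rw [← Finset.card_image_of_injOn hinj]
  set B := A.image κ
  have hBb : ∀ k ∈ B, j < b k ∧ b k ≤ j + N := by
    intro k hk
    obtain ⟨n, hn, rfl⟩ := Finset.mem_image.1 hk
    have h₁ := hκ n hn
    have h₂ := Finset.mem_Ico.1 (hA hn)
    omega
  set B' := B.filter (K ≤ ·)
  have hcard : B.card ≤ K + B'.card := by
    rw [← Finset.card_filter_add_card_filter_not (s := B) (K ≤ ·), add_comm]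
    gcongr
    calc _ ≤ (Finset.range K).card := Finset.card_le_card fun k hk => by
          simpa using (Finset.mem_filter.1 hk).2
      _ = K := Finset.card_range K
  have hcard' : B'.card * M ≤ M + N := by
    rcases B'.eq_empty_or_nonempty with h | h
    · simp [h]
    · have hmin := B'.min'_mem h
      have hmax := B'.max'_mem h
      have hmm := B'.min'_le_max' h
      have hsub : B' ⊆ Finset.Icc (B'.min' h) (B'.max' h) := fun k hk =>
        Finset.mem_Icc.2 ⟨B'.min'_le k hk, B'.le_max' k hk⟩
      have hc := Finset.card_le_card hsub
      rw [Nat.card_Icc] at hc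
      have h₁ := hstep _ (Finset.mem_filter.1 hmin).2 (B'.max' h - B'.min' h)
      rw [Nat.add_sub_cancel' hmm] at h₁
      have h₂ := hBb _ (Finset.mem_filter.1 hmin).1
      have h₃ := hBb _ (Finset.mem_filter.1 hmax).1
      have h₄ : B'.card * M ≤ (B'.max' h - B'.min' h + 1) * M :=
        Nat.mul_le_mul_right _ (by omega)
      rw [add_mul, one_mul] at h₄
      omega
  calc B.card * M ≤ (K + B'.card) * M := Nat.mul_le_mul_right _ hcard
    _ ≤ (K + 1) * M + N := by rw [add_mul, add_mul]; omega

/-- Sequences in `X` that fail to follow the map `T` only on a sparse set of times, with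
sparseness quantified by `C`. -/
def sparseSwitching {X : Type*} (T : X → X) (C : ℕ → ℕ) : Set (ℕ → X) :=
  {w | ∀ M j N, ∀ A ⊆ Finset.Ico j (j + N), C M + N < A.card * M →
    ∃ n ∈ A, w (n + 1) = T (w n)}

theorem isClosed_sparseSwitching {X : Type*} [TopologicalSpace X] [T2Space X] {T : X → X}
    (hT : Continuous T) (C : ℕ → ℕ) : IsClosed (sparseSwitching T C) := by
  have : sparseSwitching T C = ⋂ (M : ℕ) (j : ℕ) (N : ℕ) (A : Finset ℕ)
      (_ : A ⊆ Finset.Ico j (j + N)) (_ : C M + N < A.card * M),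
      ⋃ n ∈ A, {w : ℕ → X | w (n + 1) = T (w n)} := by
    ext w
    simp [sparseSwitching]
  rw [this]
  refine isClosed_iInter fun M => isClosed_iInter fun j => isClosed_iInter fun N =>
    isClosed_iInter fun A => isClosed_iInter fun _ => isClosed_iInter fun _ =>
    A.finite_toSet.isClosed_biUnion fun n _ => isClosed_eq (by fun_prop) (by fun_prop)

theorem shift_mem_sparseSwitching {X : Type*} {T : X → X} {C : ℕ → ℕ} {w : ℕ → X}
    (hw : w ∈ sparseSwitching T C) : (fun n => w (n + 1)) ∈ sparseSwitching T C := by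
  intro M j N A hA hc
  obtain ⟨n, hn, h⟩ := hw M (j + 1) N (A.map (addRightEmbedding 1))
    (fun n hn => by
      obtain ⟨m, hm, rfl⟩ := Finset.mem_map.1 hn
      have := Finset.mem_Ico.1 (hA hm)
      simp only [addRightEmbedding_apply, Finset.mem_Ico]
      omega) (by simpa using hc)
  obtain ⟨m, hm, rfl⟩ := Finset.mem_map.1 hn
  exact ⟨m, hm, h⟩

theorem orbit_mem_sparseSwitching {X : Type*} (T : X → X) (C : ℕ → ℕ) (a : X) :
    (fun n => T^[n] a) ∈ sparseSwitching T C := by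
  intro M j N A _ hc
  have : A.Nonempty := by
    rw [Finset.nonempty_iff_ne_empty]
    rintro rfl
    simp at hc
  obtain ⟨n, hn⟩ := this
  exact ⟨n, hn, Function.iterate_succ_apply' T n a⟩

/-- The shift on the space of sparsely switching sequences. -/
def sparseShift {X : Type*} (T : X → X) (C : ℕ → ℕ) (w : sparseSwitching T C) :
    sparseSwitching T C :=
  ⟨fun n => w.1 (n + 1), shift_mem_sparseSwitching w.2⟩

/-- The orbit of a point, as a sparsely switching sequence. -/
def orbitPoint {X : Type*} (T : X → X) (C : ℕ → ℕ) (a : X) : sparseSwitching T C :=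
  ⟨fun n => T^[n] a, orbit_mem_sparseSwitching T C a⟩

theorem sparseShift_iterate_apply {X : Type*} (T : X → X) (C : ℕ → ℕ) (n : ℕ)
    (w : sparseSwitching T C) (m : ℕ) : ((sparseShift T C)^[n] w).1 m = w.1 (m + n) := by
  induction n generalizing w with
  | zero => rfl
  | succ n ih =>
    rw [Function.iterate_succ_apply, ih]
    simp [sparseShift, add_assoc]

theorem orbitPoint_map {X : Type*} (T : X → X) (C : ℕ → ℕ) (a : X) :
    orbitPoint T C (T a) = sparseShift T C (orbitPoint T C a) :=
  Subtype.ext (funext fun n => (Function.iterate_succ_apply T n a).symm)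

theorem continuous_sparseSwitching_eval {X : Type*} [TopologicalSpace X] {T : X → X}
    {C : ℕ → ℕ} (n : ℕ) : Continuous fun w : sparseSwitching T C => w.1 n :=
  (continuous_apply n).comp continuous_subtype_val

theorem measurable_sparseSwitching_eval {X : Type*} [MeasurableSpace X] {T : X → X}
    {C : ℕ → ℕ} (n : ℕ) : Measurable fun w : sparseSwitching T C => w.1 n :=
  (measurable_pi_apply n).comp measurable_subtype_coe

theorem continuous_sparseShift {X : Type*} [TopologicalSpace X] {T : X → X} {C : ℕ → ℕ} :
    Continuous (sparseShift T C) :=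
  Continuous.subtype_mk (continuous_pi fun n => continuous_sparseSwitching_eval (n + 1)) _

theorem measurable_sparseShift {X : Type*} [MeasurableSpace X] {T : X → X} {C : ℕ → ℕ} :
    Measurable (sparseShift T C) :=
  (measurable_pi_lambda _ fun n => measurable_sparseSwitching_eval (n + 1)).subtype_mk

theorem measurable_orbitPoint {X : Type*} [MeasurableSpace X] {T : X → X} {C : ℕ → ℕ}
    (hT : Measurable T) : Measurable (orbitPoint T C) :=
  (measurable_pi_lambda _ fun n => hT.iterate n).subtype_mk

section Dynamics

variable {X : Type*} [MetricSpace X] [CompactSpace X] [MeasurableSpace X] [BorelSpace X]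
  {T : X → X} {C : ℕ → ℕ}

/-- Almost every sparsely switching sequence is an orbit, for every invariant measure. -/
theorem ae_eq_orbitPoint (hT : Continuous T) {ν : Measure (sparseSwitching T C)}
    [IsProbabilityMeasure ν] (hν : ν.map (sparseShift T C) = ν) :
    ∀ᵐ w ∂ν, orbitPoint T C (w.1 0) = w := by
  have hS : MeasurePreserving (sparseShift T C) ν ν := ⟨measurable_sparseShift, hν⟩
  set U : Set (sparseSwitching T C) := {w | w.1 1 = T (w.1 0)}ᶜ
  have hU : MeasurableSet U := (measurableSet_eq_fun (measurable_sparseSwitching_eval 1)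
    (hT.measurable.comp (measurable_sparseSwitching_eval 0))).compl
  have hmem (n : ℕ) (w : sparseSwitching T C) :
      (sparseShift T C)^[n] w ∈ U ↔ w.1 (n + 1) ≠ T (w.1 n) := by
    simp [U, sparseShift_iterate_apply, add_comm]
  have hnull : ν U = 0 := by
    refine measure_eq_zero_of_card_visits_le hS hU C fun M N w A hA hAU => ?_
    by_contra! h
    obtain ⟨n, hn, hne⟩ := w.2 M 0 N A (by rwa [zero_add, ← Finset.range_eq_Ico]) h
    exact (hmem n w).1 (hAU n hn) hne
  have hae : ∀ᵐ w ∂ν, ∀ n, w.1 (n + 1) = T (w.1 n) := by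
    refine ae_all_iff.2 fun n => ?_
    have h := (hS.iterate n).measure_preimage hU.nullMeasurableSet
    rw [hnull] at h
    refine measure_mono_null (fun w hw => ?_) h
    exact (hmem n w).2 hw
  filter_upwards [hae] with w hw
  refine Subtype.ext (funext fun n => ?_)
  induction n with
  | zero => rfl
  | succ n ih =>
    rw [hw n, ← ih]
    exact Function.iterate_succ_apply' T n _

theorem uniquelyErgodicWith_sparseShift (hT : Continuous T) {μ : Measure X}
    (h : UniquelyErgodicWith T μ) :
    UniquelyErgodicWith (sparseShift T C) (μ.map (orbitPoint T C)) := by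
  obtain ⟨hμ, hinv, huniq⟩ := h
  have hφ := measurable_orbitPoint (C := C) hT.measurable
  refine ⟨Measure.isProbabilityMeasure_map hφ.aemeasurable, ?_, fun ν hν hνinv => ?_⟩
  · rw [Measure.map_map measurable_sparseShift hφ]
    have : sparseShift T C ∘ orbitPoint T C = orbitPoint T C ∘ T :=
      funext fun a => (orbitPoint_map T C a).symm
    rw [this, ← Measure.map_map hφ hT.measurable, hinv]
  · have hae := ae_eq_orbitPoint hT hνinv
    have hπ := measurable_sparseSwitching_eval (T := T) (C := C) 0
    have hmarg : ν.map (fun w => w.1 0) = μ := by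
      refine huniq _ (Measure.isProbabilityMeasure_map hπ.aemeasurable) ?_
      conv_rhs => rw [← hνinv, Measure.map_map hπ measurable_sparseShift]
      rw [Measure.map_map hT.measurable hπ]
      refine Measure.map_congr ?_
      filter_upwards [hae] with w hw
      exact congrFun (congrArg Subtype.val hw) 1
    rw [← hmarg, Measure.map_map hφ hπ]
    conv_lhs => rw [← Measure.map_id (μ := ν)]
    refine Measure.map_congr ?_
    filter_upwards [hae] with w hw
    exact hw.symm

theorem measureIso_sparseShift (hT : Continuous T) {μ : Measure X}
    (h : UniquelyErgodicWith T μ) :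
    MeasureIso T μ (sparseShift T C) (μ.map (orbitPoint T C)) := by
  obtain ⟨hν, hνinv, -⟩ := uniquelyErgodicWith_sparseShift (C := C) hT h
  exact ⟨orbitPoint T C, fun w => w.1 0, measurable_orbitPoint hT.measurable,
    measurable_sparseSwitching_eval 0, rfl, .of_forall fun _ => rfl,
    ae_eq_orbitPoint hT hνinv, .of_forall fun a => orbitPoint_map T C a⟩

end Dynamics

/-- An index function for the partition of the positive integers into the blocks
`[b k, b (k + 1))`. -/
theorem exists_block_index {b : ℕ → ℕ} (hb1 : b 1 = 1) (hbmono : ∀ k ≥ 1, b k < b (k + 1)) :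
    ∃ κ : ℕ → ℕ, (∀ k ≥ 1, ∀ n ∈ Finset.Ico (b k) (b (k + 1)), κ n = k) ∧
      ∀ n, κ (n + 1) ≠ κ n → ∃ k, n + 1 = b k := by
  have hmono (k : ℕ) (hk : 1 ≤ k) (l : ℕ) (hl : k ≤ l) : b k ≤ b l := by
    induction l, hl using Nat.le_induction with
    | base => exact le_rfl
    | succ l hl ih => exact ih.trans (hbmono l (hk.trans hl)).le
  have hex (n : ℕ) (hn : 1 ≤ n) : ∃ k, 1 ≤ k ∧ b k ≤ n ∧ n < b (k + 1) := by
    induction n, hn using Nat.le_induction with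
    | base => exact ⟨1, le_rfl, hb1.le, hb1.symm.trans_lt (hbmono 1 le_rfl)⟩
    | succ n hn ih =>
      obtain ⟨k, hk, h₁, h₂⟩ := ih
      by_cases h : n + 1 < b (k + 1)
      · exact ⟨k, hk, by omega, h⟩
      · have := hbmono (k + 1) (by omega)
        exact ⟨k + 1, by omega, by omega, by omega⟩
  choose! κ hκ₁ hκ₂ hκ₃ using hex
  have hκ (k : ℕ) (hk : 1 ≤ k) (n : ℕ) (hn : n ∈ Finset.Ico (b k) (b (k + 1))) : κ n = k := by
    have hkn := Finset.mem_Ico.1 hn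
    have hn1 : 1 ≤ n := by
      have := hmono 1 le_rfl k hk
      omega
    have h₁ := hκ₁ n hn1
    have h₂ := hκ₂ n hn1
    have h₃ := hκ₃ n hn1
    rcases lt_trichotomy (κ n) k with h | h | h
    · have := hmono (κ n + 1) (by omega) k h
      omega
    · exact h
    · have := hmono (k + 1) (by omega) (κ n) h
      omega
  refine ⟨κ, hκ, fun n hne => ?_⟩
  rcases Nat.eq_zero_or_pos n with rfl | hn
  · exact ⟨1, by rw [hb1]⟩
  · refine ⟨κ (n + 1), le_antisymm ?_ (hκ₂ (n + 1) (by omega))⟩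
    by_contra! h
    refine hne (hκ _ (hκ₁ (n + 1) (by omega)) n (Finset.mem_Ico.2 ⟨by omega, ?_⟩)).symm
    have := hκ₃ (n + 1) (by omega)
    omega

/-- **Theorem 1.4.** Let `(X,T)` be uniquely ergodic with unique invariant measure `μ`.
Assume that in every uniquely ergodic model `(Y,S)` of `(X,μ,T)`, averages of
`f(Sⁿ y) u(n)` vanish for each multiplicative `u`, `|u| ≤ 1`, each continuous `f` of zero
mean and each `y`. Then for every sequence `1 = b₁ < b₂ < ⋯` with `b_{k+1} - b_k → ∞`,
every sequence `(x_k)` of points of `X`, every multiplicative `u`, `|u| ≤ 1`, and every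
continuous `f` with `∫ f dμ = 0`,
`(1/b_{K+1}) ∑_{1 ≤ k ≤ K} ∑_{b_k ≤ n < b_{k+1}} f(Tⁿ x_k) u(n) → 0`. -/
theorem sarnak_orbit_switching
    {X : Type u} [MetricSpace X] [CompactSpace X] [MeasurableSpace X] [BorelSpace X]
    (T : X → X) (hTcont : Continuous T) (μ : Measure X)
    (huniq : UniquelyErgodicWith T μ)
    (hmodels : ∀ (Y : Type u) (_ : MetricSpace Y) (_ : CompactSpace Y)
      (_ : MeasurableSpace Y) (_ : BorelSpace Y) (S : Y → Y) (ν : Measure Y),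
      Continuous S → UniquelyErgodicWith S ν → MeasureIso T μ S ν →
      ∀ u : ℕ → ℂ, (∀ m n : ℕ, Nat.Coprime m n → u (m * n) = u m * u n) →
        (∀ n, ‖u n‖ ≤ 1) →
        ∀ f : Y → ℂ, Continuous f → (∫ y, f y ∂ν) = 0 → ∀ y : Y,
          Tendsto (fun N : ℕ => (N : ℂ)⁻¹ * ∑ n ∈ Finset.Icc 1 N, f (S^[n] y) * u n)
            atTop (nhds 0))
    (b : ℕ → ℕ) (hb1 : b 1 = 1) (hbmono : ∀ k ≥ 1, b k < b (k + 1))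
    (hbgap : Tendsto (fun k : ℕ => b (k + 1) - b k) atTop atTop)
    (x : ℕ → X)
    (u : ℕ → ℂ) (hu_mult : ∀ m n : ℕ, Nat.Coprime m n → u (m * n) = u m * u n)
    (hu_bd : ∀ n, ‖u n‖ ≤ 1)
    (f : X → ℂ) (hf : Continuous f) (hf_int : (∫ z, f z ∂μ) = 0) :
    Tendsto (fun K : ℕ => (b (K + 1) : ℂ)⁻¹ *
        ∑ k ∈ Finset.Icc 1 K, ∑ n ∈ Finset.Ico (b k) (b (k + 1)), f (T^[n] (x k)) * u n)
      atTop (nhds 0) := by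
  choose C hC using exists_card_le_of_tendsto_gap hbgap
  obtain ⟨κ, hκ, hκb⟩ := exists_block_index hb1 hbmono
  have hy : (fun n => T^[n] (x (κ n))) ∈ sparseSwitching T C := by
    intro M j N A hA hc
    by_contra! h
    refine hc.not_ge (hC M j N A hA fun n hn => hκb n fun heq => h n hn ?_)
    rw [heq, Function.iterate_succ_apply']
  have hcomp : CompactSpace (sparseSwitching T C) :=
    isCompact_iff_compactSpace.1 (isClosed_sparseSwitching hTcont C).isCompact
  have hlim := hmodels (sparseSwitching T C) (TopologicalSpace.metrizableSpaceMetric _) hcomp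
    inferInstance inferInstance (sparseShift T C) _ continuous_sparseShift
    (uniquelyErgodicWith_sparseShift hTcont huniq) (measureIso_sparseShift hTcont huniq)
    u hu_mult hu_bd (fun w => f (w.1 0))
    (hf.comp (continuous_sparseSwitching_eval 0))
    (by
      refine (integral_map (measurable_orbitPoint hTcont.measurable).aemeasurable
        (hf.measurable.comp (measurable_sparseSwitching_eval 0)).aestronglyMeasurable).trans ?_
      exact hf_int)
    ⟨_, hy⟩
  simp only [sparseShift_iterate_apply, zero_add] at hlim
  have hb_ge (K : ℕ) : K + 1 ≤ b (K + 1) := by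
    induction K with
    | zero => exact hb1.ge
    | succ K ih =>
      have := hbmono (K + 1) (by omega)
      omega
  have hsum (K : ℕ) : ∑ k ∈ Finset.Icc 1 K, ∑ n ∈ Finset.Ico (b k) (b (k + 1)),
      f (T^[n] (x k)) * u n
      = ∑ n ∈ Finset.Icc 1 (b (K + 1) - 1), f (T^[n] (x (κ n))) * u n := by
    have hIcc : Finset.Icc 1 (b (K + 1) - 1) = Finset.Ico 1 (b (K + 1)) := by
      ext n
      have := hb_ge K
      simp only [Finset.mem_Icc, Finset.mem_Ico]
      omega
    rw [hIcc]
    induction K with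
    | zero => simp [hb1]
    | succ K ih =>
      have h₁ := hb_ge K
      have h₂ := hbmono (K + 1) (by omega)
      rw [Finset.sum_Icc_succ_top (by omega), ih, ← Finset.sum_Ico_consecutive _
        (show 1 ≤ b (K + 1) by omega) h₂.le]
      · congr 1
        refine Finset.sum_congr rfl fun n hn => ?_
        rw [hκ (K + 1) (by omega) n hn]
      · ext n
        simp only [Finset.mem_Icc, Finset.mem_Ico]
        omega
  have htend : Tendsto (fun K => b (K + 1) - 1) atTop atTop :=
    tendsto_atTop_mono (fun K => Nat.le_sub_one_of_lt (hb_ge K)) tendsto_id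
  refine squeeze_zero_norm (fun K => ?_) (tendsto_zero_iff_norm_tendsto_zero.1 (hlim.comp htend))
  rw [hsum, Function.comp_apply, norm_mul, norm_mul]
  rcases Nat.eq_zero_or_pos (b (K + 1) - 1) with h | h
  · simp [h]
  · gcongr
    simp only [norm_inv, Complex.norm_natCast]
    gcongr
    omega
end

section
/- Let u : ℕ → ℂ be a multiplicative function with |u(n)| ≤ 1 for all n. Let 1 = b₁ < b₂ < ⋯ be an increasing sequence of integers with b_{k+1} − b_k → ∞, and let P ∈ ℝ[x] be a non-constant polynomial whose leading coefficient is irrational. Then (1/b_{K+1}) Σ_{k ≤ K} | Σ_{b_k ≤ n < b_{k+1}} e^{2πi P(n)} u(n) | → 0 as K → ∞. -/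
open MeasureTheory Filter
open scoped ComplexConjugate

/-- The additive character `x ↦ exp (2πix)` of `ℝ`. -/
noncomputable def expTwoPi (x : ℝ) : ℂ := Complex.exp (2 * Real.pi * Complex.I * (x : ℂ))

lemma norm_expTwoPi (x : ℝ) : ‖expTwoPi x‖ = 1 := by
  rw [expTwoPi, show 2 * Real.pi * Complex.I * (x : ℂ) =
    ((2 * Real.pi * x : ℝ) : ℂ) * Complex.I by push_cast; ring]
  exact Complex.norm_exp_ofReal_mul_I _

lemma expTwoPi_add (x y : ℝ) : expTwoPi (x + y) = expTwoPi x * expTwoPi y := by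
  simp only [expTwoPi, ← Complex.exp_add]
  push_cast
  ring_nf

lemma expTwoPi_sub (x y : ℝ) : expTwoPi (x - y) = expTwoPi x * conj (expTwoPi y) := by
  simp only [expTwoPi, ← Complex.exp_conj, ← Complex.exp_add]
  congr 1
  simp only [map_mul, Complex.conj_ofReal, Complex.conj_I, map_ofNat]
  push_cast
  ring

lemma expTwoPi_nat_mul (n : ℕ) (x : ℝ) : expTwoPi (n * x) = expTwoPi x ^ n := by
  simp only [expTwoPi, ← Complex.exp_nat_mul]
  push_cast
  ring_nf

lemma expTwoPi_ne_one {x : ℝ} (hx : Irrational x) : expTwoPi x ≠ 1 := by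
  intro h
  obtain ⟨n, hn⟩ := Complex.exp_eq_one_iff.1 h
  rw [mul_comm (n : ℂ)] at hn
  have h2 : (x : ℂ) = ((n : ℝ) : ℂ) := by
    simpa using mul_left_cancel₀ Complex.two_pi_I_ne_zero hn
  exact hx.ne_int n (Complex.ofReal_injective h2)

lemma le_mul_add_div_of_sq_le {x δ N C : ℝ} (hδ : 0 < δ) (hN : 0 ≤ N) (hC : 0 ≤ C)
    (h : x ^ 2 ≤ N * (δ ^ 2 * N + C)) : x ≤ δ * N + C / (2 * δ) := by
  refine le_of_sq_le_sq ?_ (by positivity)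
  have : (δ * N + C / (2 * δ)) ^ 2 = N * (δ ^ 2 * N + C) + (C / (2 * δ)) ^ 2 := by
    field_simp
    ring
  nlinarith [sq_nonneg (C / (2 * δ))]

/-- Cauchy–Schwarz followed by expanding the square. -/
lemma sq_sum_norm_sum_le {ι : Type*} (I : Finset ι) (S : Finset ℕ) (z : ι → ℕ → ℂ) :
    (∑ n ∈ S, ‖∑ i ∈ I, z i n‖) ^ 2 ≤
      S.card * ∑ i ∈ I, ∑ j ∈ I, ‖∑ n ∈ S, z i n * conj (z j n)‖ := by
  refine sq_sum_le_card_mul_sum_sq.trans (mul_le_mul_of_nonneg_left ?_ (Nat.cast_nonneg _))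
  have key : ((∑ n ∈ S, ‖∑ i ∈ I, z i n‖ ^ 2 : ℝ) : ℂ) =
      ∑ i ∈ I, ∑ j ∈ I, ∑ n ∈ S, z i n * conj (z j n) := by
    push_cast
    simp_rw [← Complex.mul_conj', map_sum, Finset.sum_mul_sum]
    rw [Finset.sum_comm]
    exact Finset.sum_congr rfl fun i _ ↦ Finset.sum_comm
  have hnn : 0 ≤ ∑ n ∈ S, ‖∑ i ∈ I, z i n‖ ^ 2 := Finset.sum_nonneg fun _ _ ↦ sq_nonneg _
  rw [← Complex.norm_of_nonneg hnn, key]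
  refine (norm_sum_le _ _).trans (Finset.sum_le_sum fun i _ ↦ norm_sum_le _ _)

lemma norm_sum_shift_sub_le {z : ℕ → ℂ} (hz : ∀ n, ‖z n‖ ≤ 1) (N h : ℕ) :
    ‖∑ n ∈ Finset.range N, z (n + h) - ∑ n ∈ Finset.range N, z n‖ ≤ 2 * h := by
  induction h with
  | zero => simp
  | succ h ih =>
    have h1 : ∑ n ∈ Finset.range N, z (n + (h + 1)) - ∑ n ∈ Finset.range N, z n =
        (∑ n ∈ Finset.range N, z (n + h) - ∑ n ∈ Finset.range N, z n) + (z (N + h) - z h) := by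
      have := Finset.sum_range_sub (fun n ↦ z (n + h)) N
      rw [Finset.sum_sub_distrib] at this
      simp only [zero_add] at this
      rw [← this]
      simp only [add_right_comm, add_assoc]
      ring
    rw [h1]
    refine (norm_add_le _ _).trans ?_
    have := norm_sub_le (z (N + h)) (z h)
    push_cast
    linarith [hz (N + h), hz h]

/-- A sum is close to the average of its translates. -/
lemma mul_norm_sum_le {z : ℕ → ℂ} (hz : ∀ n, ‖z n‖ ≤ 1) (N H : ℕ) :
    H * ‖∑ n ∈ Finset.range N, z n‖ ≤
      2 * (H : ℝ) ^ 2 + ∑ n ∈ Finset.range N, ‖∑ h ∈ Finset.range H, z (n + h)‖ := by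
  have h1 : (H : ℂ) * ∑ n ∈ Finset.range N, z n =
      ∑ n ∈ Finset.range N, ∑ h ∈ Finset.range H, z (n + h) -
      ∑ h ∈ Finset.range H, (∑ n ∈ Finset.range N, z (n + h) - ∑ n ∈ Finset.range N, z n) := by
    rw [Finset.sum_sub_distrib, Finset.sum_comm]
    simp
  have h2 : ‖∑ h ∈ Finset.range H,
      (∑ n ∈ Finset.range N, z (n + h) - ∑ n ∈ Finset.range N, z n)‖ ≤ 2 * (H : ℝ) ^ 2 := by
    refine (norm_sum_le_of_le (f := fun h ↦ ∑ n ∈ Finset.range N, z (n + h) -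
      ∑ n ∈ Finset.range N, z n) _ (n := fun _ ↦ 2 * (H : ℝ)) fun h hh ↦ ?_).trans ?_
    · refine (norm_sum_shift_sub_le hz N h).trans ?_
      have : (h : ℝ) ≤ H := by exact_mod_cast (Finset.mem_range.1 hh).le
      linarith
    · simp only [Finset.sum_const, Finset.card_range, nsmul_eq_mul]
      apply le_of_eq
      ring
  have h3 := norm_sub_le (∑ n ∈ Finset.range N, ∑ h ∈ Finset.range H, z (n + h))
    (∑ h ∈ Finset.range H, (∑ n ∈ Finset.range N, z (n + h) - ∑ n ∈ Finset.range N, z n))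
  rw [← h1, norm_mul, Complex.norm_natCast] at h3
  have h4 := norm_sum_le (Finset.range N) (fun n ↦ ∑ h ∈ Finset.range H, z (n + h))
  linarith

open Polynomial in
lemma coeff_taylor_of_natDegree_le {Q : ℝ[X]} {d : ℕ} (hQ : Q.natDegree ≤ d) (r : ℝ) :
    (taylor r Q).coeff d = Q.coeff d := by
  rcases hQ.lt_or_eq with h | h
  · rw [coeff_eq_zero_of_natDegree_lt h, coeff_eq_zero_of_natDegree_lt]
    rwa [natDegree_taylor]
  · rw [← h, coeff_taylor_natDegree, leadingCoeff]

open Polynomial in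
lemma natDegree_taylor_sub_taylor_le {Q : ℝ[X]} {d : ℕ} (hQ : Q.natDegree ≤ d + 1) (r s : ℝ) :
    (taylor r Q - taylor s Q).natDegree ≤ d ∧
      (taylor r Q - taylor s Q).coeff d = (d + 1) * Q.coeff (d + 1) * (r - s) := by
  have hnext : ∀ r : ℝ, (taylor r Q).coeff d = Q.coeff d + (d + 1) * Q.coeff (d + 1) * r := by
    intro r
    have hdeg : (hasseDeriv d Q).natDegree < 2 :=
      (natDegree_hasseDeriv_le Q d).trans_lt (by omega)
    rw [taylor_coeff, eval_eq_sum_range' hdeg]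
    simp [Finset.sum_range_succ, hasseDeriv_coeff, add_comm 1 d]
  constructor
  · rw [natDegree_le_iff_coeff_eq_zero]
    intro n hn
    rcases (Nat.succ_le_of_lt hn).lt_or_eq with h | h
    · rw [coeff_sub, coeff_eq_zero_of_natDegree_lt, coeff_eq_zero_of_natDegree_lt, sub_zero] <;>
      · rw [natDegree_taylor]
        exact hQ.trans_lt h
    · rw [coeff_sub, ← h, Nat.succ_eq_add_one, coeff_taylor_of_natDegree_le hQ,
        coeff_taylor_of_natDegree_le hQ, sub_self]
  · rw [coeff_sub, hnext, hnext]
    ring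

open Polynomial in
/-- Weyl's theorem, uniformly over all polynomials with a given irrational leading coefficient. -/
theorem norm_sum_expTwoPi_polynomial_le (d : ℕ) {α : ℝ} (hα : Irrational α) {ε : ℝ} (hε : 0 < ε) :
    ∃ C : ℝ, 0 ≤ C ∧ ∀ Q : ℝ[X], Q.natDegree ≤ d + 1 → Q.coeff (d + 1) = α →
      ∀ N : ℕ, ‖∑ n ∈ Finset.range N, expTwoPi (Q.eval (n : ℝ))‖ ≤ ε * N + C := by
  induction d generalizing α ε with
  | zero =>
    refine ⟨2 / ‖expTwoPi α - 1‖, by positivity, fun Q hQ hc N ↦ ?_⟩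
    have he : ∀ n : ℕ, expTwoPi (Q.eval (n : ℝ)) = expTwoPi α ^ n * expTwoPi (Q.coeff 0) := by
      intro n
      rw [eval_eq_sum_range' (show Q.natDegree < 2 by omega), ← expTwoPi_nat_mul, ← expTwoPi_add,
        ← hc]
      simp only [Finset.sum_range_succ, Finset.sum_range_zero]
      congr 1
      simp
      ring
    simp_rw [he, ← Finset.sum_mul]
    rw [geom_sum_eq (expTwoPi_ne_one hα), norm_mul, norm_expTwoPi, mul_one, norm_div]
    have h1 : ‖expTwoPi α ^ N - 1‖ ≤ 2 := by
      refine (norm_sub_le _ _).trans ?_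
      rw [norm_pow, norm_expTwoPi]
      norm_num
    have h2 : ‖expTwoPi α ^ N - 1‖ / ‖expTwoPi α - 1‖ ≤ 2 / ‖expTwoPi α - 1‖ := by gcongr
    have : 0 ≤ ε * N := by positivity
    linarith
  | succ d ih =>
    obtain ⟨R, hR⟩ := exists_nat_gt (2 / ε ^ 2)
    have hRpos : (0 : ℝ) < R := lt_trans (by positivity) hR
    have hirr : ∀ r s : ℕ, r ≠ s → Irrational ((d + 1 + 1 : ℝ) * α * (r - s)) := by
      intro r s hrs
      have h1 : Irrational (((((d + 1 + 1 : ℕ) : ℤ) * ((r : ℤ) - s) : ℤ) : ℝ) * α) := by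
        refine hα.intCast_mul ?_
        exact mul_ne_zero (by omega) (by omega)
      convert h1 using 1
      push_cast
      ring
    have hex : ∀ r s : ℕ, ∃ C : ℝ, 0 ≤ C ∧ (r ≠ s → ∀ Q : ℝ[X], Q.natDegree ≤ d + 1 →
        Q.coeff (d + 1) = (d + 1 + 1 : ℝ) * α * (r - s) →
        ∀ N : ℕ, ‖∑ n ∈ Finset.range N, expTwoPi (Q.eval (n : ℝ))‖ ≤ ε ^ 2 / 2 * N + C) := by
      intro r s
      by_cases hrs : r = s
      · exact ⟨0, le_rfl, fun h ↦ (h hrs).elim⟩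
      · obtain ⟨C, hC, h⟩ := ih (hirr r s hrs) (show 0 < ε ^ 2 / 2 by positivity)
        exact ⟨C, hC, fun _ ↦ h⟩
    choose C hC0 hC using hex
    set D := ∑ r ∈ Finset.range R, ∑ s ∈ Finset.range R, C r s with hD
    have hD0 : 0 ≤ D := Finset.sum_nonneg fun r _ ↦ Finset.sum_nonneg fun s _ ↦ hC0 r s
    refine ⟨2 * R + D / R ^ 2 / (2 * ε), by positivity, fun Q hQ hc N ↦ ?_⟩
    have hA := mul_norm_sum_le (z := fun n ↦ expTwoPi (Q.eval (n : ℝ)))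
      (fun n ↦ (norm_expTwoPi _).le) N R
    have hB := sq_sum_norm_sum_le (Finset.range R) (Finset.range N)
      (fun h n ↦ expTwoPi (Q.eval ((n + h : ℕ) : ℝ)))
    simp only [Finset.card_range] at hB
    set X := ∑ n ∈ Finset.range N, ‖∑ h ∈ Finset.range R, expTwoPi (Q.eval ((n + h : ℕ) : ℝ))‖
      with hX
    have hcorr : ∀ r s : ℕ, ‖∑ n ∈ Finset.range N, expTwoPi (Q.eval ((n + r : ℕ) : ℝ)) *
        conj (expTwoPi (Q.eval ((n + s : ℕ) : ℝ)))‖ ≤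
        (ε ^ 2 / 2 * N + C r s) + if r = s then (N : ℝ) else 0 := by
      intro r s
      split_ifs with hrs
      · subst hrs
        have h1 : ∀ x : ℝ, expTwoPi x * conj (expTwoPi x) = 1 := fun x ↦ by
          rw [Complex.mul_conj', norm_expTwoPi]; simp
        simp only [h1]
        have := hC0 r r
        have : 0 ≤ ε ^ 2 / 2 * N := by positivity
        simp
        linarith
      · obtain ⟨h1, h2⟩ := natDegree_taylor_sub_taylor_le hQ (r : ℝ) (s : ℝ)
        have h3 := hC r s hrs _ h1 (by rw [h2, hc]; push_cast; ring) N
        simp only [eval_sub, taylor_eval, expTwoPi_sub] at h3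
        push_cast
        simpa using h3
    have hsum : ∑ r ∈ Finset.range R, ∑ s ∈ Finset.range R,
        ‖∑ n ∈ Finset.range N, expTwoPi (Q.eval ((n + r : ℕ) : ℝ)) *
        conj (expTwoPi (Q.eval ((n + s : ℕ) : ℝ)))‖ ≤ R ^ 2 * (ε ^ 2 / 2 * N) + D + R * N := by
      refine (Finset.sum_le_sum fun r _ ↦ Finset.sum_le_sum fun s _ ↦ hcorr r s).trans ?_
      simp only [Finset.sum_add_distrib, ← hD, Finset.sum_const, Finset.card_range, nsmul_eq_mul]
      have : ∑ r ∈ Finset.range R, ∑ s ∈ Finset.range R, (if r = s then (N : ℝ) else 0) =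
          R * N := by
        rw [Finset.sum_congr rfl (g := fun _ ↦ (N : ℝ))]
        · simp
        · intro r hr
          rw [Finset.sum_ite_eq]
          simp [Finset.mem_range.1 hr]
      rw [this]
      apply le_of_eq
      ring
    have hR2 : (R : ℝ) ≤ R ^ 2 * (ε ^ 2 / 2) := by
      rw [div_lt_iff₀ (by positivity)] at hR
      nlinarith
    have hX2 : (X / R) ^ 2 ≤ N * (ε ^ 2 * N + D / R ^ 2) := by
      rw [div_pow, div_le_iff₀ (by positivity)]
      have h5 : (N : ℝ) * (ε ^ 2 * N + D / R ^ 2) * R ^ 2 =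
          N * (R ^ 2 * (ε ^ 2 / 2 * N) + D + R ^ 2 * (ε ^ 2 / 2) * N) := by
        field_simp
        ring
      rw [h5]
      refine hB.trans (mul_le_mul_of_nonneg_left (hsum.trans ?_) (Nat.cast_nonneg _))
      gcongr
    have hfin := le_mul_add_div_of_sq_le hε (Nat.cast_nonneg N) (by positivity) hX2
    have hA' : ‖∑ n ∈ Finset.range N, expTwoPi (Q.eval (n : ℝ))‖ ≤ 2 * R + X / R := by
      rw [← mul_le_mul_iff_right₀ hRpos]
      refine hA.trans (le_of_eq ?_)
      field_simp
    linarith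

lemma sum_shift_sub_le_of_monotone {κ : ℕ → ℝ} (hκ : Monotone κ) (hκ0 : 0 ≤ κ 0) (N H : ℕ) :
    ∑ n ∈ Finset.range N, (κ (n + H) - κ n) ≤ H * κ (N + H) := by
  have h1 : ∀ H : ℕ, ∑ n ∈ Finset.range N, (κ (n + H) - κ n) =
      ∑ j ∈ Finset.range H, (κ (N + j) - κ j) := by
    intro H
    have h2 := Finset.sum_range_add κ N H
    have h3 := Finset.sum_range_add κ H N
    rw [add_comm H N, h2] at h3
    simp only [Finset.sum_sub_distrib, add_comm _ H]
    linarith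
  rw [h1]
  calc ∑ j ∈ Finset.range H, (κ (N + j) - κ j) ≤ ∑ j ∈ Finset.range H, κ (N + H) := by
        refine Finset.sum_le_sum fun j hj ↦ ?_
        have := hκ (show N + j ≤ N + H by have := Finset.mem_range.1 hj; omega)
        have := hκ (Nat.zero_le j)
        linarith
    _ = H * κ (N + H) := by simp

/-- A sequence with uniformly small averages over long intervals does not correlate with a
bounded sequence whose variation is dominated by a function of sublinear growth. -/
lemma norm_sum_mul_le_of_variation {w g : ℕ → ℂ} {κ : ℕ → ℝ} (hw1 : ∀ n, ‖w n‖ ≤ 1)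
    (hg1 : ∀ n, ‖g n‖ ≤ 1)
    (hw : ∀ ε : ℝ, 0 < ε → ∃ C : ℝ, 0 ≤ C ∧ ∀ x N : ℕ,
      ‖∑ n ∈ Finset.range N, w (x + n)‖ ≤ ε * N + C)
    (hκ0 : 0 ≤ κ 0) (hκ : ∀ n, ‖g (n + 1) - g n‖ ≤ κ (n + 1) - κ n)
    (hκlin : ∀ ε : ℝ, 0 < ε → ∃ C : ℝ, 0 ≤ C ∧ ∀ N : ℕ, κ N ≤ ε * N + C)
    {ε : ℝ} (hε : 0 < ε) :
    ∃ C : ℝ, 0 ≤ C ∧ ∀ N : ℕ, ‖∑ n ∈ Finset.range N, g n * w n‖ ≤ ε * N + C := by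
  have hmono : Monotone κ := monotone_nat_of_le_succ fun n ↦ by
    linarith [hκ n, norm_nonneg (g (n + 1) - g n)]
  have hdiff : ∀ n h : ℕ, ‖g (n + h) - g n‖ ≤ κ (n + h) - κ n := by
    intro n h
    induction h with
    | zero => simp
    | succ h ih =>
      have := norm_add_le (g (n + h + 1) - g (n + h)) (g (n + h) - g n)
      rw [sub_add_sub_cancel] at this
      rw [← add_assoc]
      linarith [hκ (n + h)]
  obtain ⟨C₁, hC₁, hwC⟩ := hw (ε / 4) (by positivity)
  obtain ⟨H, hH⟩ := exists_nat_gt (4 * C₁ / ε)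
  have hHpos : (0 : ℝ) < H := lt_of_le_of_lt (by positivity) hH
  have hC₁H : C₁ ≤ ε / 4 * H := by
    rw [div_lt_iff₀ hε] at hH
    linarith
  obtain ⟨C₂, hC₂, hκC⟩ := hκlin (ε / (2 * H)) (by positivity)
  refine ⟨2 * H + H * (C₂ + ε / 2), by positivity, fun N ↦ ?_⟩
  have hA := mul_norm_sum_le (z := fun n ↦ g n * w n) (fun n ↦ by
    rw [norm_mul]; exact mul_le_one₀ (hg1 n) (norm_nonneg _) (hw1 n)) N H
  have hinner : ∀ n, ‖∑ h ∈ Finset.range H, g (n + h) * w (n + h)‖ ≤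
      H * (κ (n + H) - κ n) + ε / 2 * H := by
    intro n
    have h1 : ∑ h ∈ Finset.range H, g (n + h) * w (n + h) =
        ∑ h ∈ Finset.range H, (g (n + h) - g n) * w (n + h) +
        g n * ∑ h ∈ Finset.range H, w (n + h) := by
      rw [Finset.mul_sum, ← Finset.sum_add_distrib]
      exact Finset.sum_congr rfl fun _ _ ↦ by ring
    have h2 : ‖∑ h ∈ Finset.range H, (g (n + h) - g n) * w (n + h)‖ ≤
        H * (κ (n + H) - κ n) := by
      calc _ ≤ ∑ h ∈ Finset.range H, (κ (n + H) - κ n) := by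
            refine norm_sum_le_of_le _ fun h hh ↦ ?_
            rw [norm_mul]
            refine (mul_le_of_le_one_right (norm_nonneg _) (hw1 _)).trans ((hdiff n h).trans ?_)
            have := hmono (show n + h ≤ n + H by have := Finset.mem_range.1 hh; omega)
            linarith
        _ = H * (κ (n + H) - κ n) := by
            rw [Finset.sum_const, Finset.card_range, nsmul_eq_mul]
    have h3 : ‖g n * ∑ h ∈ Finset.range H, w (n + h)‖ ≤ ε / 2 * H := by
      rw [norm_mul]
      refine (mul_le_of_le_one_left (norm_nonneg _) (hg1 _)).trans ?_
      linarith [hwC n H]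
    rw [h1]
    exact (norm_add_le _ _).trans (add_le_add h2 h3)
  have hsum := Finset.sum_le_sum fun n (_ : n ∈ Finset.range N) ↦ hinner n
  rw [Finset.sum_add_distrib, ← Finset.mul_sum, Finset.sum_const, Finset.card_range,
    nsmul_eq_mul] at hsum
  have hvar : ∑ n ∈ Finset.range N, (κ (n + H) - κ n) ≤ ε / 2 * N + H * (C₂ + ε / 2) := by
    refine (sum_shift_sub_le_of_monotone hmono hκ0 N H).trans ?_
    refine (mul_le_mul_of_nonneg_left (hκC (N + H)) hHpos.le).trans (le_of_eq ?_)
    push_cast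
    field_simp
    ring
  rw [← mul_le_mul_iff_right₀ hHpos]
  have := mul_le_mul_of_nonneg_left hvar hHpos.le
  nlinarith

/-- The Turán–Kubilius inequality for a finite set of primes. -/
lemma sum_sq_card_dvd_sub_le (I : Finset ℕ) (hI : ∀ p ∈ I, p.Prime) (N : ℕ) :
    ∑ n ∈ Finset.Ioc 0 N, (∑ p ∈ I, (if p ∣ n then (1 : ℝ) else 0) - ∑ p ∈ I, (1 : ℝ) / p) ^ 2 ≤
      (∑ p ∈ I, (1 : ℝ) / p) * N + 2 * (∑ p ∈ I, (1 : ℝ) / p) * I.card := by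
  set L := ∑ p ∈ I, (1 : ℝ) / p with hL
  have hL0 : 0 ≤ L := Finset.sum_nonneg fun p _ ↦ by positivity
  have hcount : ∀ m : ℕ, ∑ n ∈ Finset.Ioc 0 N, (if m ∣ n then (1 : ℝ) else 0) = (N / m : ℕ) := by
    intro m
    rw [Finset.sum_boole, Nat.Ioc_filter_dvd_card_eq_div]
  have hfirst : N * L - I.card ≤
      ∑ n ∈ Finset.Ioc 0 N, ∑ p ∈ I, (if p ∣ n then (1 : ℝ) else 0) := by
    rw [Finset.sum_comm, hL, Finset.mul_sum]
    have : (I.card : ℝ) = ∑ p ∈ I, (1 : ℝ) := by simp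
    rw [this, ← Finset.sum_sub_distrib]
    refine Finset.sum_le_sum fun p hp ↦ ?_
    rw [hcount]
    have hp0 : (0 : ℝ) < p := by exact_mod_cast (hI p hp).pos
    rw [sub_le_iff_le_add, mul_one_div, div_le_iff₀ hp0]
    have := Nat.lt_div_mul_add (a := N) (hI p hp).pos
    have h2 : (N : ℝ) ≤ (N / p : ℕ) * p + p := by exact_mod_cast this.le
    linarith
  have hsecond : ∑ n ∈ Finset.Ioc 0 N, (∑ p ∈ I, (if p ∣ n then (1 : ℝ) else 0)) ^ 2 ≤
      N * L ^ 2 + N * L := by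
    have h1 : ∀ p ∈ I, ∀ q ∈ I, ∑ n ∈ Finset.Ioc 0 N,
        ((if p ∣ n then (1 : ℝ) else 0) * (if q ∣ n then (1 : ℝ) else 0)) ≤
        N * ((1 / p : ℝ) * (1 / q)) + if p = q then N * (1 / p : ℝ) else 0 := by
      intro p hp q hq
      by_cases hpq : p = q
      · subst hpq
        simp only [ite_mul, one_mul, zero_mul, if_true]
        have h2 : ∀ n, (if p ∣ n then (if p ∣ n then (1 : ℝ) else 0) else 0) =
            if p ∣ n then (1 : ℝ) else 0 := fun n ↦ by split_ifs <;> rfl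
        simp only [h2, hcount]
        have h3 : ((N / p : ℕ) : ℝ) ≤ N / p := Nat.cast_div_le
        have h4 : (0 : ℝ) ≤ N * ((1 / p : ℝ) * (1 / p)) := by positivity
        rw [mul_one_div (N : ℝ) (p : ℝ)]
        linarith
      · have hcop : Nat.Coprime p q := (Nat.coprime_primes (hI p hp) (hI q hq)).2 hpq
        have h2 : ∀ n, (if p ∣ n then (1 : ℝ) else 0) * (if q ∣ n then (1 : ℝ) else 0) =
            if p * q ∣ n then (1 : ℝ) else 0 := fun n ↦ by
          have hiff : p * q ∣ n ↔ p ∣ n ∧ q ∣ n :=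
            ⟨fun h ↦ ⟨dvd_of_mul_right_dvd h, dvd_of_mul_left_dvd h⟩,
              fun h ↦ hcop.mul_dvd_of_dvd_of_dvd h.1 h.2⟩
          simp only [hiff]
          split_ifs <;> simp_all
        simp only [h2, hcount, if_neg hpq, add_zero]
        refine (Nat.cast_div_le (α := ℝ)).trans (le_of_eq ?_)
        push_cast
        rw [one_div_mul_one_div, mul_one_div]
    calc _ = ∑ p ∈ I, ∑ q ∈ I, ∑ n ∈ Finset.Ioc 0 N,
        ((if p ∣ n then (1 : ℝ) else 0) * (if q ∣ n then (1 : ℝ) else 0)) := by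
          simp_rw [sq, Finset.sum_mul_sum]
          rw [Finset.sum_comm]
          exact Finset.sum_congr rfl fun i _ ↦ Finset.sum_comm
      _ ≤ ∑ p ∈ I, ∑ q ∈ I,
          (N * ((1 / p : ℝ) * (1 / q)) + if p = q then N * (1 / p : ℝ) else 0) :=
          Finset.sum_le_sum fun p hp ↦ Finset.sum_le_sum fun q hq ↦ h1 p hp q hq
      _ = N * L ^ 2 + N * L := by
          simp_rw [Finset.sum_add_distrib, ← Finset.mul_sum, Finset.sum_ite_eq]
          rw [← Finset.sum_mul, sq, ← hL, Finset.sum_congr rfl fun p hp ↦ if_pos hp,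
            ← Finset.mul_sum]
  have hexp : ∑ n ∈ Finset.Ioc 0 N, (∑ p ∈ I, (if p ∣ n then (1 : ℝ) else 0) - L) ^ 2 =
      ∑ n ∈ Finset.Ioc 0 N, (∑ p ∈ I, (if p ∣ n then (1 : ℝ) else 0)) ^ 2 -
      2 * L * ∑ n ∈ Finset.Ioc 0 N, ∑ p ∈ I, (if p ∣ n then (1 : ℝ) else 0) + N * L ^ 2 := by
    simp_rw [sub_sq, Finset.sum_add_distrib, Finset.sum_sub_distrib, Finset.mul_sum]
    simp only [Finset.sum_const, Nat.card_Ioc, nsmul_eq_mul, Nat.sub_zero]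
    congr 2
    exact Finset.sum_congr rfl fun n _ ↦ by
      rw [Finset.sum_mul]; exact Finset.sum_congr rfl fun p _ ↦ by ring
  rw [hexp]
  nlinarith [mul_le_mul_of_nonneg_left hfirst hL0]

lemma exists_finset_primes_sum_one_div_ge (M : ℝ) :
    ∃ I : Finset ℕ, (∀ p ∈ I, p.Prime) ∧ M ≤ ∑ p ∈ I, (1 : ℝ) / p := by
  by_contra! h
  refine not_summable_one_div_on_primes (summable_of_sum_le (c := M)
    (fun n ↦ Set.indicator_nonneg (fun _ _ ↦ by positivity) n) fun S ↦ ?_)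
  simp only [Set.indicator_apply, Set.mem_ofPred_eq]
  rw [← Finset.sum_filter]
  exact (h _ fun p hp ↦ (Finset.mem_filter.1 hp).2).le

lemma sum_Ioc_ite_dvd {M : Type*} [AddCommMonoid M] {p : ℕ} (hp : 0 < p) (N : ℕ) (f : ℕ → M) :
    ∑ n ∈ Finset.Ioc 0 N, (if p ∣ n then f n else 0) =
      ∑ m ∈ Finset.Ioc 0 N, (if p * m ≤ N then f (p * m) else 0) := by
  rw [← Finset.sum_filter, ← Finset.sum_filter]
  symm
  refine Finset.sum_bij (fun m _ ↦ p * m) ?_ ?_ ?_ ?_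
  · intro m hm
    simp only [Finset.mem_filter, Finset.mem_Ioc] at hm ⊢
    exact ⟨⟨Nat.mul_pos hp hm.1.1, hm.2⟩, dvd_mul_right _ _⟩
  · intro m _ m' _ h
    exact Nat.eq_of_mul_eq_mul_left hp h
  · intro n hn
    simp only [Finset.mem_filter, Finset.mem_Ioc] at hn
    obtain ⟨⟨h1, h2⟩, m, rfl⟩ := hn
    refine ⟨m, ?_, rfl⟩
    simp only [Finset.mem_filter, Finset.mem_Ioc]
    exact ⟨⟨Nat.pos_of_mul_pos_left h1, (Nat.le_mul_of_pos_left m hp).trans h2⟩, h2⟩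
  · intro m _
    rfl

lemma norm_sum_ite_mul_conj_le {a : ℕ → ℂ} {p q : ℕ} (hp : 0 < p) (hq : 0 < q) {ε C : ℝ}
    (hε : 0 ≤ ε) (h : ∀ M : ℕ, ‖∑ m ∈ Finset.Ioc 0 M, a (p * m) * conj (a (q * m))‖ ≤ ε * M + C)
    {s t : ℂ} (hs : ‖s‖ ≤ 1) (ht : ‖t‖ ≤ 1) (N : ℕ) :
    ‖∑ m ∈ Finset.Ioc 0 N, (if p * m ≤ N then s * a (p * m) else 0) *
      conj (if q * m ≤ N then t * a (q * m) else 0)‖ ≤ ε * N + C := by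
  have h1 : ∑ m ∈ Finset.Ioc 0 N, (if p * m ≤ N then s * a (p * m) else 0) *
      conj (if q * m ≤ N then t * a (q * m) else 0) =
      s * conj t * ∑ m ∈ Finset.Ioc 0 (min (N / p) (N / q)), a (p * m) * conj (a (q * m)) := by
    have h2 : Finset.Ioc 0 (min (N / p) (N / q)) =
        (Finset.Ioc 0 N).filter fun m ↦ p * m ≤ N ∧ q * m ≤ N := by
      ext m
      simp only [Finset.mem_Ioc, Finset.mem_filter, le_min_iff, Nat.le_div_iff_mul_le hp,
        Nat.le_div_iff_mul_le hq, mul_comm m]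
      constructor
      · rintro ⟨h3, h4, h5⟩
        exact ⟨⟨h3, (Nat.le_mul_of_pos_left m hp).trans h4⟩, h4, h5⟩
      · rintro ⟨⟨h3, _⟩, h4, h5⟩
        exact ⟨h3, h4, h5⟩
    rw [h2, Finset.sum_filter, Finset.mul_sum]
    refine Finset.sum_congr rfl fun m _ ↦ ?_
    by_cases h3 : p * m ≤ N <;> by_cases h4 : q * m ≤ N <;> simp [h3, h4]
    ring
  rw [h1, norm_mul]
  have hst : ‖s * conj t‖ ≤ 1 := by
    rw [norm_mul, RCLike.norm_conj]
    exact mul_le_one₀ hs (norm_nonneg _) ht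
  refine (mul_le_of_le_one_left (norm_nonneg _) hst).trans ((h _).trans ?_)
  have : ((min (N / p) (N / q) : ℕ) : ℝ) ≤ N := by
    exact_mod_cast (min_le_left _ _).trans (Nat.div_le_self N p)
  gcongr

lemma norm_sum_ite_mul_sub_le {u a : ℕ → ℂ}
    (hu_mult : ∀ m n : ℕ, Nat.Coprime m n → u (m * n) = u m * u n)
    (hu : ∀ n, ‖u n‖ ≤ 1) (ha : ∀ n, ‖a n‖ ≤ 1) {p : ℕ} (hp : p.Prime) (N : ℕ) :
    ‖∑ m ∈ Finset.Ioc 0 N, (if p * m ≤ N then a (p * m) * u (p * m) else 0) -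
      ∑ m ∈ Finset.Ioc 0 N, u m * (if p * m ≤ N then u p * a (p * m) else 0)‖ ≤
      2 * (1 / (p : ℝ) ^ 2) * N := by
  rw [← Finset.sum_sub_distrib]
  have hterm : ∀ m ∈ Finset.Ioc 0 N, ‖(if p * m ≤ N then a (p * m) * u (p * m) else 0) -
      u m * (if p * m ≤ N then u p * a (p * m) else 0)‖ ≤
      if p * m ≤ N then (if p ∣ p * m ∧ p * p ∣ p * m then (2 : ℝ) else 0) else 0 := by
    intro m _
    by_cases h1 : p * m ≤ N
    · by_cases h2 : p ∣ m
      · have h3 : p * p ∣ p * m := mul_dvd_mul_left p h2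
        simp only [h1, h3, dvd_mul_right, and_self, if_true]
        refine (norm_sub_le _ _).trans ?_
        rw [norm_mul, norm_mul, norm_mul]
        have h4 := mul_le_one₀ (ha (p * m)) (norm_nonneg _) (hu (p * m))
        have h5 := mul_le_one₀ (hu p) (norm_nonneg _) (ha (p * m))
        have h6 := mul_le_one₀ (hu m) (mul_nonneg (norm_nonneg _) (norm_nonneg _)) h5
        linarith
      · rw [hu_mult p m ((Nat.Prime.coprime_iff_not_dvd hp).2 h2)]
        simp only [h1, if_true]
        rw [show a (p * m) * (u p * u m) - u m * (u p * a (p * m)) = 0 by ring, norm_zero]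
        split_ifs <;> norm_num
    · simp [h1]
  refine (norm_sum_le_of_le _ hterm).trans ?_
  rw [← sum_Ioc_ite_dvd hp.pos N (fun n ↦ if p ∣ n ∧ p * p ∣ n then (2 : ℝ) else 0)]
  have h1 : ∀ n, (if p ∣ n then (if p ∣ n ∧ p * p ∣ n then (2 : ℝ) else 0) else 0) =
      2 * if p * p ∣ n then (1 : ℝ) else 0 := by
    intro n
    by_cases h : p * p ∣ n
    · simp [h, dvd_of_mul_right_dvd h]
    · simp [h]
  simp only [h1]
  rw [← Finset.mul_sum, Finset.sum_boole, Nat.Ioc_filter_dvd_card_eq_div, mul_assoc]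
  refine mul_le_mul_of_nonneg_left ((Nat.cast_div_le (α := ℝ)).trans (le_of_eq ?_)) two_pos.le
  push_cast
  ring

/-- The Kátai–Bourgain–Sarnak–Ziegler orthogonality criterion. -/
theorem norm_sum_mul_multiplicative_le {u a : ℕ → ℂ}
    (hu_mult : ∀ m n : ℕ, Nat.Coprime m n → u (m * n) = u m * u n)
    (hu : ∀ n, ‖u n‖ ≤ 1) (ha : ∀ n, ‖a n‖ ≤ 1)
    (hcorr : ∀ p q : ℕ, p.Prime → q.Prime → p ≠ q → ∀ ε : ℝ, 0 < ε → ∃ C : ℝ, 0 ≤ C ∧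
      ∀ N : ℕ, ‖∑ m ∈ Finset.Ioc 0 N, a (p * m) * conj (a (q * m))‖ ≤ ε * N + C)
    {ε : ℝ} (hε : 0 < ε) :
    ∃ C : ℝ, 0 ≤ C ∧ ∀ N : ℕ, ‖∑ n ∈ Finset.Ioc 0 N, a n * u n‖ ≤ ε * N + C := by
  have hsq : Summable fun n : ℕ ↦ (1 : ℝ) / (n : ℝ) ^ 2 :=
    Real.summable_one_div_nat_pow.2 one_lt_two
  set Z : ℝ := ∑' n : ℕ, (1 : ℝ) / (n : ℝ) ^ 2 with hZ
  have hZ0 : 0 ≤ Z := tsum_nonneg fun n ↦ by positivity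
  obtain ⟨I, hI, hIL⟩ := exists_finset_primes_sum_one_div_ge (max 1 (max (32 / ε ^ 2) (8 * Z / ε)))
  set L := ∑ p ∈ I, (1 : ℝ) / p with hL
  have hL1 : 1 ≤ L := (le_max_left _ _).trans hIL
  have hL2 : 32 / ε ^ 2 ≤ L := (le_max_left _ _).trans ((le_max_right _ _).trans hIL)
  have hL3 : 8 * Z / ε ≤ L := (le_max_right _ _).trans ((le_max_right _ _).trans hIL)
  have hLpos : 0 < L := by linarith
  rw [div_le_iff₀ (by positivity)] at hL2 hL3
  set δ := ε * L / 4 with hδ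
  have hδpos : 0 < δ := by positivity
  have hδL : 2 * L ≤ δ ^ 2 := by
    rw [hδ]
    nlinarith [mul_le_mul_of_nonneg_left hL2 hLpos.le]
  have hIcard : (0 : ℝ) < I.card := by
    rw [Nat.cast_pos, Finset.card_pos, Finset.nonempty_iff_ne_empty]
    rintro rfl
    simp at hL
    linarith
  have hex : ∀ p q : ℕ, ∃ C : ℝ, 0 ≤ C ∧ (p.Prime → q.Prime → p ≠ q → ∀ N : ℕ,
      ‖∑ m ∈ Finset.Ioc 0 N, a (p * m) * conj (a (q * m))‖ ≤ L / I.card ^ 2 * N + C) := by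
    intro p q
    by_cases h : p.Prime ∧ q.Prime ∧ p ≠ q
    · obtain ⟨C, hC, h1⟩ := hcorr p q h.1 h.2.1 h.2.2 (L / I.card ^ 2) (by positivity)
      exact ⟨C, hC, fun _ _ _ ↦ h1⟩
    · exact ⟨0, le_rfl, fun h1 h2 h3 ↦ (h ⟨h1, h2, h3⟩).elim⟩
  choose C hC0 hC using hex
  set D := ∑ p ∈ I, ∑ q ∈ I, C p q with hD
  have hD0 : 0 ≤ D := Finset.sum_nonneg fun p _ ↦ Finset.sum_nonneg fun q _ ↦ hC0 p q
  refine ⟨(2 * L * I.card / (2 * δ) + D / (2 * δ)) / L, by positivity, fun N ↦ ?_⟩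
  set ω : ℕ → ℝ := fun n ↦ ∑ p ∈ I, (if p ∣ n then (1 : ℝ) else 0) with hω
  set z : ℕ → ℕ → ℂ := fun p m ↦ if p * m ≤ N then u p * a (p * m) else 0 with hz
  have hau : ∀ n, ‖a n * u n‖ ≤ 1 := fun n ↦ by
    rw [norm_mul]; exact mul_le_one₀ (ha n) (norm_nonneg _) (hu n)
  -- the weight `ω` is close to `L` on average
  have hE1 : ∑ n ∈ Finset.Ioc 0 N, |ω n - L| ≤ δ * N + 2 * L * I.card / (2 * δ) := by
    refine le_mul_add_div_of_sq_le hδpos (Nat.cast_nonneg _) (by positivity) ?_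
    have h1 := sq_sum_le_card_mul_sum_sq (s := Finset.Ioc 0 N) (f := fun n ↦ |ω n - L|)
    simp only [sq_abs, Nat.card_Ioc, Nat.sub_zero] at h1
    refine h1.trans (mul_le_mul_of_nonneg_left ?_ (Nat.cast_nonneg _))
    refine (sum_sq_card_dvd_sub_le I hI N).trans ?_
    rw [← hL]
    gcongr
    linarith
  -- the bilinear sum
  have hE3 : ∑ m ∈ Finset.Ioc 0 N, ‖∑ p ∈ I, z p m‖ ≤ δ * N + D / (2 * δ) := by
    refine le_mul_add_div_of_sq_le hδpos (Nat.cast_nonneg _) hD0 ?_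
    have h1 := sq_sum_norm_sum_le I (Finset.Ioc 0 N) z
    simp only [Nat.card_Ioc, Nat.sub_zero] at h1
    refine h1.trans (mul_le_mul_of_nonneg_left ?_ (Nat.cast_nonneg _))
    have h2 : ∀ p ∈ I, ∀ q ∈ I, ‖∑ m ∈ Finset.Ioc 0 N, z p m * conj (z q m)‖ ≤
        (L / I.card ^ 2 * N + C p q) + if p = q then N * (1 / p : ℝ) else 0 := by
      intro p hp q hq
      split_ifs with hpq
      · subst hpq
        have h3 : ‖∑ m ∈ Finset.Ioc 0 N, z p m * conj (z p m)‖ ≤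
            ∑ m ∈ Finset.Ioc 0 N, if p * m ≤ N then (1 : ℝ) else 0 := by
          refine norm_sum_le_of_le _ fun m _ ↦ ?_
          simp only [hz]
          split_ifs
          · rw [norm_mul, RCLike.norm_conj, norm_mul]
            have h4 := mul_le_one₀ (hu p) (norm_nonneg _) (ha (p * m))
            exact mul_le_one₀ h4 (by positivity) h4
          · simp
        refine h3.trans ?_
        rw [← sum_Ioc_ite_dvd (hI p hp).pos N (fun _ ↦ (1 : ℝ)), Finset.sum_boole,
          Nat.Ioc_filter_dvd_card_eq_div, mul_one_div]
        have h5 : ((N / p : ℕ) : ℝ) ≤ N / p := Nat.cast_div_le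
        have h6 := hC0 p p
        have h7 : 0 ≤ L / I.card ^ 2 * N := by positivity
        linarith
      · rw [add_zero]
        exact norm_sum_ite_mul_conj_le (hI p hp).pos (hI q hq).pos (by positivity)
          (hC p q (hI p hp) (hI q hq) hpq) (hu p) (hu q) N
    refine (Finset.sum_le_sum fun p hp ↦ Finset.sum_le_sum fun q hq ↦ h2 p hp q hq).trans ?_
    simp_rw [Finset.sum_add_distrib, Finset.sum_ite_eq]
    have h9 : ∑ p ∈ I, (if p ∈ I then N * (1 / p : ℝ) else 0) = N * L := by
      rw [Finset.sum_congr rfl fun p hp ↦ if_pos hp, ← Finset.mul_sum]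
    rw [h9, ← hD]
    simp only [Finset.sum_const, nsmul_eq_mul]
    have h8 : (I.card : ℝ) * (I.card * (L / I.card ^ 2 * N)) = L * N := by
      field_simp
    rw [h8]
    nlinarith [mul_le_mul_of_nonneg_right hδL (Nat.cast_nonneg (α := ℝ) N)]
  -- passing from `u (p * m)` to `u p * u m`
  have hE2 : ‖∑ n ∈ Finset.Ioc 0 N, (ω n : ℂ) * (a n * u n) -
      ∑ m ∈ Finset.Ioc 0 N, u m * ∑ p ∈ I, z p m‖ ≤ 2 * Z * N := by
    have h1 : ∑ n ∈ Finset.Ioc 0 N, (ω n : ℂ) * (a n * u n) =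
        ∑ p ∈ I, ∑ m ∈ Finset.Ioc 0 N, (if p * m ≤ N then a (p * m) * u (p * m) else 0) := by
      rw [← Finset.sum_congr rfl fun p hp ↦ sum_Ioc_ite_dvd (hI p hp).pos N (fun n ↦ a n * u n),
        Finset.sum_comm]
      refine Finset.sum_congr rfl fun n _ ↦ ?_
      simp only [hω]
      push_cast
      rw [Finset.sum_mul]
      refine Finset.sum_congr rfl fun p _ ↦ ?_
      split_ifs <;> simp
    have h2 : ∑ m ∈ Finset.Ioc 0 N, u m * ∑ p ∈ I, z p m =
        ∑ p ∈ I, ∑ m ∈ Finset.Ioc 0 N, u m * z p m := by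
      rw [Finset.sum_comm]
      exact Finset.sum_congr rfl fun m _ ↦ Finset.mul_sum _ _ _
    rw [h1, h2, ← Finset.sum_sub_distrib]
    refine (norm_sum_le_of_le _ fun p hp ↦
      norm_sum_ite_mul_sub_le hu_mult hu ha (hI p hp) N).trans ?_
    rw [← Finset.sum_mul, ← Finset.mul_sum]
    gcongr
    exact hsq.sum_le_tsum I fun n _ ↦ by positivity
  have hsplit : (L : ℂ) * ∑ n ∈ Finset.Ioc 0 N, a n * u n =
      (∑ n ∈ Finset.Ioc 0 N, (ω n : ℂ) * (a n * u n) -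
        ∑ m ∈ Finset.Ioc 0 N, u m * ∑ p ∈ I, z p m) +
      ∑ m ∈ Finset.Ioc 0 N, u m * ∑ p ∈ I, z p m -
      ∑ n ∈ Finset.Ioc 0 N, ((ω n - L : ℝ) : ℂ) * (a n * u n) := by
    push_cast
    simp_rw [sub_mul, Finset.sum_sub_distrib, Finset.mul_sum]
    ring
  have hn1 : ‖∑ m ∈ Finset.Ioc 0 N, u m * ∑ p ∈ I, z p m‖ ≤
      ∑ m ∈ Finset.Ioc 0 N, ‖∑ p ∈ I, z p m‖ :=
    norm_sum_le_of_le _ fun m _ ↦ by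
      rw [norm_mul]; exact mul_le_of_le_one_left (norm_nonneg _) (hu m)
  have hn2 : ‖∑ n ∈ Finset.Ioc 0 N, ((ω n - L : ℝ) : ℂ) * (a n * u n)‖ ≤
      ∑ n ∈ Finset.Ioc 0 N, |ω n - L| :=
    norm_sum_le_of_le _ fun n _ ↦ by
      rw [norm_mul, Complex.norm_real, Real.norm_eq_abs]
      exact mul_le_of_le_one_right (abs_nonneg _) (hau n)
  have hnorm : L * ‖∑ n ∈ Finset.Ioc 0 N, a n * u n‖ ≤
      2 * Z * N + (δ * N + D / (2 * δ)) + (δ * N + 2 * L * I.card / (2 * δ)) := by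
    have hLn : L * ‖∑ n ∈ Finset.Ioc 0 N, a n * u n‖ =
        ‖(L : ℂ) * ∑ n ∈ Finset.Ioc 0 N, a n * u n‖ := by
      rw [norm_mul, Complex.norm_of_nonneg hLpos.le]
    rw [hLn, hsplit]
    refine (norm_sub_le _ _).trans (add_le_add ((norm_add_le _ _).trans ?_) (hn2.trans hE1))
    exact add_le_add hE2 (hn1.trans hE3)
  rw [← mul_le_mul_iff_right₀ hLpos]
  refine hnorm.trans ?_
  rw [mul_add, mul_div_cancel₀ _ hLpos.ne']
  have hZN : 2 * Z * N ≤ ε * L / 4 * N := by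
    gcongr
    linarith
  have : 0 ≤ ε * L * N := by positivity
  rw [hδ] at *
  nlinarith

lemma exists_le_mul_add_of_tendsto_sub {β : ℕ → ℕ}
    (hgap : Tendsto (fun k : ℕ => β (k + 1) - β k) atTop atTop) {ε : ℝ} (hε : 0 < ε) :
    ∃ C : ℝ, 0 ≤ C ∧ ∀ k : ℕ, (k : ℝ) ≤ ε * β k + C := by
  obtain ⟨M, hM⟩ := exists_nat_gt (1 / ε)
  have hMpos : 0 < M := by
    have : (0 : ℝ) < M := lt_trans (by positivity) hM
    exact_mod_cast this
  obtain ⟨k₀, hk₀⟩ := eventually_atTop.1 (hgap.eventually_ge_atTop M)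
  have hlin : ∀ j, M * j ≤ β (k₀ + j) := by
    intro j
    induction j with
    | zero => simp
    | succ j ih =>
      have := hk₀ (k₀ + j) (by omega)
      rw [← add_assoc, mul_add, mul_one]
      omega
  refine ⟨k₀, Nat.cast_nonneg _, fun k ↦ ?_⟩
  rcases le_total k k₀ with h | h
  · have h1 : (k : ℝ) ≤ k₀ := by exact_mod_cast h
    have h2 : 0 ≤ ε * β k := by positivity
    linarith
  · obtain ⟨j, rfl⟩ := Nat.exists_eq_add_of_le h
    have h1 : (M : ℝ) * j ≤ β (k₀ + j) := by exact_mod_cast hlin j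
    rw [div_lt_iff₀ hε] at hM
    have h2 : (j : ℝ) ≤ ε * β (k₀ + j) := by
      have h3 : (0 : ℝ) ≤ j := Nat.cast_nonneg j
      nlinarith [mul_le_mul_of_nonneg_left h1 hε.le, mul_le_mul_of_nonneg_right hM.le h3]
    push_cast
    linarith

/-- The index of the block `[β k, β (k + 1))` containing a given integer grows sublinearly when
the block lengths tend to infinity. -/
lemma exists_block_index_s4 {β : ℕ → ℕ} (hβ : StrictMono β)
    (hgap : Tendsto (fun k : ℕ => β (k + 1) - β k) atTop atTop) :
    ∃ κ : ℕ → ℕ, Monotone κ ∧ (∀ k n, β k ≤ n → n < β (k + 1) → κ n = k) ∧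
      ∀ ε : ℝ, 0 < ε → ∃ C : ℝ, 0 ≤ C ∧ ∀ N : ℕ, (κ N : ℝ) ≤ ε * N + C := by
  refine ⟨fun n ↦ Nat.findGreatest (fun k ↦ β k ≤ n) n, ?_, ?_, ?_⟩
  · intro m n hmn
    exact Nat.findGreatest_mono (fun k hk ↦ le_trans hk hmn) hmn
  · intro k n h1 h2
    rw [Nat.findGreatest_eq_iff]
    exact ⟨(hβ.le_apply).trans h1, fun _ ↦ h1,
      fun j hj _ hjn ↦ absurd (hβ.monotone (Nat.succ_le_of_lt hj)) (by
        simp only [Nat.succ_eq_add_one]; omega)⟩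
  · intro ε hε
    obtain ⟨C, hC, h⟩ := exists_le_mul_add_of_tendsto_sub hgap hε
    refine ⟨C, hC, fun N ↦ ?_⟩
    by_cases h0 : Nat.findGreatest (fun k ↦ β k ≤ N) N = 0
    · simp only [h0]
      push_cast
      positivity
    · have h1 : β (Nat.findGreatest (fun k ↦ β k ≤ N) N) ≤ N :=
        Nat.findGreatest_of_ne_zero (P := fun k ↦ β k ≤ N) rfl h0
      refine (h _).trans ?_
      gcongr

open Polynomial in
lemma norm_sum_expTwoPi_shift_le {Q : ℝ[X]} {d : ℕ} (hd : 0 < d) (hQ : Q.natDegree ≤ d)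
    (hirr : Irrational (Q.coeff d)) {ε : ℝ} (hε : 0 < ε) :
    ∃ C : ℝ, 0 ≤ C ∧ ∀ x N : ℕ,
      ‖∑ n ∈ Finset.range N, expTwoPi (Q.eval ((x + n : ℕ) : ℝ))‖ ≤ ε * N + C := by
  obtain ⟨d, rfl⟩ := Nat.exists_eq_add_of_le' hd
  obtain ⟨C, hC, h⟩ := norm_sum_expTwoPi_polynomial_le d hirr hε
  refine ⟨C, hC, fun x N ↦ ?_⟩
  have := h (taylor (x : ℝ) Q) (by rwa [natDegree_taylor]) (coeff_taylor_of_natDegree_le hQ _) N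
  simp only [taylor_eval] at this
  simpa [add_comm] using this

open Polynomial in
lemma norm_sum_block_phase_correlation_le {P : ℝ[X]} (hPdeg : 0 < P.natDegree)
    (hPirr : Irrational P.leadingCoeff) {κ : ℕ → ℕ} (hκ : Monotone κ)
    (hκlin : ∀ ε : ℝ, 0 < ε → ∃ C : ℝ, 0 ≤ C ∧ ∀ N : ℕ, (κ N : ℝ) ≤ ε * N + C)
    {c : ℕ → ℂ} (hc : ∀ k, ‖c k‖ = 1) {p q : ℕ} (hp : 0 < p) (hq : 0 < q) (hpq : p ≠ q)
    {ε : ℝ} (hε : 0 < ε) :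
    ∃ C : ℝ, 0 ≤ C ∧ ∀ N : ℕ,
      ‖∑ m ∈ Finset.Ioc 0 N, c (κ (p * m)) * expTwoPi (P.eval ((p * m : ℕ) : ℝ)) *
        conj (c (κ (q * m)) * expTwoPi (P.eval ((q * m : ℕ) : ℝ)))‖ ≤ ε * N + C := by
  set Q : ℝ[X] := P.comp (Polynomial.C (p : ℝ) * X) - P.comp (Polynomial.C (q : ℝ) * X) with hQ
  set g : ℕ → ℂ := fun m ↦ c (κ (p * m)) * conj (c (κ (q * m))) with hg
  set K : ℕ → ℝ := fun m ↦ 2 * ((κ (p * m) : ℝ) + κ (q * m)) with hK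
  have hdeg : Q.natDegree ≤ P.natDegree := by
    have hlin : ∀ r : ℝ, (P.comp (Polynomial.C r * X)).natDegree ≤ P.natDegree := fun r ↦
      natDegree_comp_le.trans
        ((Nat.mul_le_mul_left _ ((natDegree_C_mul_le r X).trans natDegree_X_le)).trans (mul_one _).le)
    exact (natDegree_sub_le _ _).trans (max_le (hlin _) (hlin _))
  have hirr : Irrational (Q.coeff P.natDegree) := by
    have h1 : Q.coeff P.natDegree =
        (((p : ℤ) ^ P.natDegree - (q : ℤ) ^ P.natDegree : ℤ) : ℝ) * P.leadingCoeff := by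
      rw [hQ, coeff_sub, comp_C_mul_X_coeff, comp_C_mul_X_coeff, leadingCoeff]
      push_cast
      ring
    rw [h1]
    refine hPirr.intCast_mul (sub_ne_zero.2 fun h ↦ hpq ?_)
    exact Nat.pow_left_injective hPdeg.ne' (by exact_mod_cast h)
  have hg1 : ∀ n, ‖g n‖ ≤ 1 := fun n ↦ by simp [hg, hc]
  have hvar : ∀ n, ‖g (n + 1) - g n‖ ≤ K (n + 1) - K n := by
    intro n
    have hp1 := hκ (Nat.mul_le_mul_left p n.le_succ)
    have hq1 := hκ (Nat.mul_le_mul_left q n.le_succ)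
    simp only [Nat.succ_eq_add_one] at hp1 hq1
    by_cases h : κ (p * (n + 1)) = κ (p * n) ∧ κ (q * (n + 1)) = κ (q * n)
    · simp [hg, hK, h.1, h.2]
    · have h1 : κ (p * n) + κ (q * n) + 1 ≤ κ (p * (n + 1)) + κ (q * (n + 1)) := by omega
      have h2 : (κ (p * n) : ℝ) + κ (q * n) + 1 ≤ κ (p * (n + 1)) + κ (q * (n + 1)) := by
        exact_mod_cast h1
      have h3 := norm_sub_le (g (n + 1)) (g n)
      simp only [hK]
      linarith [hg1 (n + 1), hg1 n]
  have hKlin : ∀ ε : ℝ, 0 < ε → ∃ C : ℝ, 0 ≤ C ∧ ∀ N : ℕ, K N ≤ ε * N + C := by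
    intro ε hε
    have hpq0 : (0 : ℝ) < p + q := by positivity
    obtain ⟨C, hC, h⟩ := hκlin (ε / (2 * (p + q))) (by positivity)
    refine ⟨4 * C, by positivity, fun N ↦ ?_⟩
    have h1 := h (p * N)
    have h2 := h (q * N)
    have h3 : 2 * (ε / (2 * (p + q)) * ((p * N : ℕ) : ℝ) + ε / (2 * (p + q)) * ((q * N : ℕ) : ℝ)) =
        ε * N := by
      push_cast
      field_simp
    simp only [hK]
    linarith
  obtain ⟨C, hC, h⟩ := norm_sum_mul_le_of_variation
    (w := fun n ↦ expTwoPi (Q.eval (n : ℝ))) (fun n ↦ (norm_expTwoPi _).le) hg1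
    (fun ε hε ↦ norm_sum_expTwoPi_shift_le hPdeg hdeg hirr hε)
    (by simp only [hK]; positivity) hvar hKlin hε
  refine ⟨C + ε + 1, by positivity, fun N ↦ ?_⟩
  have hterm : ∀ m : ℕ, c (κ (p * m)) * expTwoPi (P.eval ((p * m : ℕ) : ℝ)) *
      conj (c (κ (q * m)) * expTwoPi (P.eval ((q * m : ℕ) : ℝ))) =
      g m * expTwoPi (Q.eval (m : ℝ)) := by
    intro m
    simp only [hg, hQ, eval_sub, eval_comp, eval_mul, eval_C, eval_X, expTwoPi_sub, map_mul,
      Nat.cast_mul]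
    ring
  simp only [hterm]
  have hrange : ∑ m ∈ Finset.Ioc 0 N, g m * expTwoPi (Q.eval (m : ℝ)) =
      ∑ m ∈ Finset.range (N + 1), g m * expTwoPi (Q.eval (m : ℝ)) -
        g 0 * expTwoPi (Q.eval ((0 : ℕ) : ℝ)) := by
    rw [Finset.range_eq_Ico, Finset.sum_eq_sum_Ico_succ_bot (Nat.succ_pos N), add_sub_cancel_left]
    rfl
  rw [hrange]
  refine (norm_sub_le _ _).trans ?_
  have h1 := h (N + 1)
  have h2 : ‖g 0 * expTwoPi (Q.eval ((0 : ℕ) : ℝ))‖ ≤ 1 := by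
    rw [norm_mul, norm_expTwoPi, mul_one]
    exact hg1 0
  push_cast at h1 h2 ⊢
  linarith

/-- **Theorem 1.5.** For every multiplicative `u : ℕ → ℂ` with `|u| ≤ 1`, every increasing
sequence `1 = b₁ < b₂ < ⋯` with `b_{k+1} - b_k → ∞`, and every non-constant real polynomial
`P` with irrational leading coefficient,
`(1/b_{K+1}) ∑_{k ≤ K} |∑_{b_k ≤ n < b_{k+1}} e^{2πi P(n)} u(n)| → 0` as `K → ∞`. -/
theorem polynomial_short_interval_orthogonality
    (u : ℕ → ℂ) (hu_mult : ∀ m n : ℕ, Nat.Coprime m n → u (m * n) = u m * u n)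
    (hu_bd : ∀ n, ‖u n‖ ≤ 1)
    (b : ℕ → ℕ) (hb1 : b 1 = 1) (hbmono : ∀ k ≥ 1, b k < b (k + 1))
    (hbgap : Tendsto (fun k : ℕ => b (k + 1) - b k) atTop atTop)
    (P : Polynomial ℝ) (hPdeg : 0 < P.natDegree) (hPirr : Irrational P.leadingCoeff) :
    Tendsto (fun K : ℕ => (b (K + 1) : ℝ)⁻¹ *
        ∑ k ∈ Finset.Icc 1 K, ‖∑ n ∈ Finset.Ico (b k) (b (k + 1)),
          Complex.exp (2 * Real.pi * Complex.I * ((P.eval (n : ℝ) : ℝ) : ℂ)) * u n‖)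
      atTop (nhds 0) := by
  have hβ : StrictMono fun k ↦ b (k + 1) :=
    strictMono_nat_of_lt_succ fun k ↦ hbmono (k + 1) (by omega)
  obtain ⟨κ, hκ, hκblock, hκlin⟩ := exists_block_index_s4 hβ (hbgap.comp (tendsto_add_atTop_nat 1))
  have hphase : ∀ k, ∃ c : ℂ, ‖c‖ = 1 ∧
      (‖∑ n ∈ Finset.Ico (b (k + 1)) (b (k + 1 + 1)), expTwoPi (P.eval (n : ℝ)) * u n‖ : ℂ) =
        c * ∑ n ∈ Finset.Ico (b (k + 1)) (b (k + 1 + 1)), expTwoPi (P.eval (n : ℝ)) * u n :=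
    fun k ↦ RCLike.exists_norm_eq_mul_self _
  choose c hc hcsum using hphase
  set a : ℕ → ℂ := fun n ↦ c (κ n) * expTwoPi (P.eval (n : ℝ)) with ha
  have ha1 : ∀ n, ‖a n‖ ≤ 1 := fun n ↦ by simp [ha, hc, norm_expTwoPi]
  have hsum : ∀ K : ℕ, ((∑ k ∈ Finset.Icc 1 K, ‖∑ n ∈ Finset.Ico (b k) (b (k + 1)),
      expTwoPi (P.eval (n : ℝ)) * u n‖ : ℝ) : ℂ) = ∑ n ∈ Finset.Ico 1 (b (K + 1)), a n * u n := by
    intro K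
    induction K with
    | zero => simp [hb1]
    | succ K ih =>
      rw [Finset.sum_Icc_succ_top (by omega), Complex.ofReal_add, ih, hcsum K, Finset.mul_sum,
        ← Finset.sum_Ico_consecutive _ (hb1.symm.le.trans (hβ.monotone (Nat.zero_le K)))
          (hbmono (K + 1) (by omega)).le]
      congr 1
      refine Finset.sum_congr rfl fun n hn ↦ ?_
      rw [Finset.mem_Ico] at hn
      simp only [ha, hκblock K n hn.1 hn.2]
      ring
  change Tendsto (fun K : ℕ => (b (K + 1) : ℝ)⁻¹ *
    ∑ k ∈ Finset.Icc 1 K, ‖∑ n ∈ Finset.Ico (b k) (b (k + 1)), expTwoPi (P.eval (n : ℝ)) * u n‖)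
      atTop (nhds 0)
  rw [Metric.tendsto_atTop]
  intro ε hε
  obtain ⟨C, hC, h⟩ := norm_sum_mul_multiplicative_le hu_mult hu_bd ha1
    (fun p q hp hq hpq ε hε ↦ norm_sum_block_phase_correlation_le hPdeg hPirr hκ hκlin hc
      hp.pos hq.pos hpq hε) (half_pos hε)
  obtain ⟨K₀, hK₀⟩ := exists_nat_gt (2 * C / ε)
  refine ⟨K₀, fun K hK ↦ ?_⟩
  have hbK : (K : ℝ) ≤ b (K + 1) := by exact_mod_cast hβ.le_apply (x := K)
  have hb0 : 1 ≤ b (K + 1) := hb1.symm.le.trans (hβ.monotone (Nat.zero_le K))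
  have hb0' : (0 : ℝ) < b (K + 1) := by exact_mod_cast hb0
  have hnn : 0 ≤ ∑ k ∈ Finset.Icc 1 K, ‖∑ n ∈ Finset.Ico (b k) (b (k + 1)),
      expTwoPi (P.eval (n : ℝ)) * u n‖ := Finset.sum_nonneg fun _ _ ↦ norm_nonneg _
  rw [Real.dist_0_eq_abs, abs_of_nonneg (by positivity), inv_mul_lt_iff₀ hb0',
    ← Complex.norm_of_nonneg hnn, hsum]
  have hIco : Finset.Ico 1 (b (K + 1)) = Finset.Ioc 0 (b (K + 1) - 1) := by
    ext n
    simp only [Finset.mem_Ico, Finset.mem_Ioc]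
    omega
  rw [hIco]
  refine (h _).trans_lt ?_
  have h1 : ((b (K + 1) - 1 : ℕ) : ℝ) ≤ b (K + 1) := by exact_mod_cast Nat.sub_le _ _
  have h2 : (K₀ : ℝ) ≤ K := by exact_mod_cast hK
  have h3 : 2 * C < b (K + 1) * ε := by
    rw [← div_lt_iff₀ hε]
    linarith
  nlinarith [mul_le_mul_of_nonneg_left h1 hε.le]
end

section
/- Let u : ℕ → ℂ be a multiplicative function with |u(n)| ≤ 1 for all n, and let P ∈ ℝ[x] be a non-constant polynomial whose leading coefficient is irrational. Then (1/M) Σ_{M ≤ m < 2M} (1/H) | Σ_{m ≤ n < m+H} e^{2πi P(n)} u(n) | → 0 as M → ∞, H → ∞ and H/M → 0; precisely, for every ε > 0 there exist H₀ ∈ ℕ and δ > 0 such that for all integers H ≥ H₀ and M ≥ 1 with H/M ≤ δ, one has (1/M) Σ_{M ≤ m < 2M} (1/H) | Σ_{m ≤ n < m+H} e^{2πi P(n)} u(n) | < ε. -/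
open MeasureTheory Filter

namespace PolynomialPhase

open Finset

/-- The additive character `x ↦ e^{2πix}` of the real line. -/
noncomputable def phase (x : ℝ) : ℂ := Complex.exp (2 * Real.pi * Complex.I * (x : ℂ))

lemma norm_phase (x : ℝ) : ‖phase x‖ = 1 := by
  rw [phase, show 2 * (Real.pi : ℂ) * Complex.I * (x : ℂ) =
    ((2 * Real.pi * x : ℝ) : ℂ) * Complex.I by push_cast; ring]
  exact Complex.norm_exp_ofReal_mul_I _

lemma phase_add (x y : ℝ) : phase (x + y) = phase x * phase y := by
  simp only [phase, ← Complex.exp_add]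
  congr 1
  push_cast
  ring

lemma phase_sub (x y : ℝ) : phase (x - y) = phase x * (starRingEnd ℂ) (phase y) := by
  simp only [phase, ← Complex.exp_conj, ← Complex.exp_add]
  congr 1
  simp only [map_mul, map_ofNat, Complex.conj_ofReal, Complex.conj_I, Complex.ofReal_sub]
  ring

lemma phase_nat_mul (n : ℕ) (x : ℝ) : phase (n * x) = phase x ^ n := by
  simp only [phase, ← Complex.exp_nat_mul]
  congr 1
  push_cast
  ring

lemma phase_ne_one {x : ℝ} (hx : Irrational x) : phase x ≠ 1 := by
  intro h
  obtain ⟨n, hn⟩ := Complex.exp_eq_one_iff.1 h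
  have h2 : (2 * Real.pi * Complex.I : ℂ) ≠ 0 := Complex.two_pi_I_ne_zero
  have : (x : ℂ) = n := mul_left_cancel₀ h2 (by rw [hn]; ring)
  exact hx.ne_int n (by exact_mod_cast this)

/-- Cauchy-Schwarz followed by expanding the square. -/
lemma norm_sum_mul_sum_sq_le {ι κ : Type*} (S : Finset ι) (J : Finset κ) (b : ι → ℂ)
    (hb : ∀ n ∈ S, ‖b n‖ ≤ 1) (a : κ → ι → ℂ) :
    ‖∑ n ∈ S, b n * ∑ j ∈ J, a j n‖ ^ 2 ≤
      #S * ∑ j ∈ J, ∑ i ∈ J, ‖∑ n ∈ S, a j n * (starRingEnd ℂ) (a i n)‖ := by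
  have h1 : ‖∑ n ∈ S, b n * ∑ j ∈ J, a j n‖ ≤ ∑ n ∈ S, ‖∑ j ∈ J, a j n‖ := by
    refine norm_sum_le_of_le _ fun n hn => ?_
    rw [norm_mul]
    exact mul_le_of_le_one_left (norm_nonneg _) (hb n hn)
  have h2 : ∑ n ∈ S, ‖∑ j ∈ J, a j n‖ ^ 2 ≤
      ∑ j ∈ J, ∑ i ∈ J, ‖∑ n ∈ S, a j n * (starRingEnd ℂ) (a i n)‖ := by
    have h3 : ((∑ n ∈ S, ‖∑ j ∈ J, a j n‖ ^ 2 : ℝ) : ℂ) =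
        ∑ j ∈ J, ∑ i ∈ J, ∑ n ∈ S, a j n * (starRingEnd ℂ) (a i n) := by
      push_cast
      simp only [← Complex.mul_conj', map_sum, Finset.sum_mul_sum]
      rw [Finset.sum_comm]
      exact Finset.sum_congr rfl fun j _ => Finset.sum_comm
    calc ∑ n ∈ S, ‖∑ j ∈ J, a j n‖ ^ 2
        = ‖((∑ n ∈ S, ‖∑ j ∈ J, a j n‖ ^ 2 : ℝ) : ℂ)‖ := by
          rw [Complex.norm_real, Real.norm_of_nonneg]
          exact Finset.sum_nonneg fun _ _ => by positivity
      _ ≤ _ := by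
          rw [h3]
          exact norm_sum_le_of_le _ fun j _ => norm_sum_le _ _
  calc _ ≤ (∑ n ∈ S, ‖∑ j ∈ J, a j n‖) ^ 2 := by gcongr
    _ ≤ #S * ∑ n ∈ S, ‖∑ j ∈ J, a j n‖ ^ 2 := sq_sum_le_card_mul_sum_sq
    _ ≤ _ := by gcongr

/-- A slowly varying bounded weight does not destroy cancellation on short blocks. -/
lemma norm_sum_range_mul_le_of_block (E G : ℕ → ℂ) (L : ℕ) (hL : 0 < L) (η κ : ℝ)
    (hE : ∀ n, ‖E n‖ ≤ 1) (hG : ∀ n, ‖G n‖ ≤ 1)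
    (hκ : ∀ n, ‖G (n + 1) - G n‖ ≤ κ)
    (hblock : ∀ a, ‖∑ i ∈ range L, E (a + i)‖ ≤ η * L) (N : ℕ) :
    ‖∑ n ∈ range N, E n * G n‖ ≤ (η + κ * L) * N + L := by
  have hκ0 : 0 ≤ κ := (norm_nonneg _).trans (hκ 0)
  have hη0 : 0 ≤ η := by
    have := (norm_nonneg _).trans (hblock 0)
    have : (0 : ℝ) < L := by exact_mod_cast hL
    by_contra! h
    nlinarith
  have hdiff : ∀ a i, ‖G (a + i) - G a‖ ≤ κ * i := by
    intro a i
    induction i with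
    | zero => simp
    | succ i ih =>
      calc _ = ‖(G (a + i + 1) - G (a + i)) + (G (a + i) - G a)‖ := by congr 1; ring_nf
        _ ≤ κ + κ * i := (norm_add_le _ _).trans (add_le_add (hκ _) ih)
        _ = _ := by push_cast; ring
  have hone : ∀ a, ‖∑ i ∈ range L, E (a + i) * G (a + i)‖ ≤ (η + κ * L) * L := by
    intro a
    have : ∑ i ∈ range L, E (a + i) * G (a + i) =
        (∑ i ∈ range L, E (a + i)) * G a + ∑ i ∈ range L, E (a + i) * (G (a + i) - G a) := by
      rw [Finset.sum_mul, ← Finset.sum_add_distrib]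
      exact Finset.sum_congr rfl fun _ _ => by ring
    rw [this]
    have h1 : ‖(∑ i ∈ range L, E (a + i)) * G a‖ ≤ η * L := by
      rw [norm_mul]
      exact (mul_le_of_le_one_right (norm_nonneg _) (hG a)).trans (hblock a)
    have h2 : ‖∑ i ∈ range L, E (a + i) * (G (a + i) - G a)‖ ≤ ∑ i ∈ range L, κ * L := by
      refine norm_sum_le_of_le _ fun i hi => ?_
      rw [norm_mul]
      have hiL : (i : ℝ) ≤ L := by exact_mod_cast (mem_range.1 hi).le
      calc _ ≤ ‖G (a + i) - G a‖ := mul_le_of_le_one_left (norm_nonneg _) (hE _)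
        _ ≤ κ * i := hdiff a i
        _ ≤ κ * L := by gcongr
    rw [sum_const, card_range, nsmul_eq_mul] at h2
    calc _ ≤ _ := norm_add_le _ _
      _ ≤ η * L + L * (κ * L) := add_le_add h1 h2
      _ = _ := by ring
  induction N using Nat.strong_induction_on with
  | _ N ih =>
    rcases lt_or_ge N L with h | h
    · have h1 : ‖∑ n ∈ range N, E n * G n‖ ≤ ∑ n ∈ range N, (1 : ℝ) := by
        refine norm_sum_le_of_le _ fun n _ => ?_
        rw [norm_mul]
        exact mul_le_one₀ (hE n) (norm_nonneg _) (hG n)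
      rw [sum_const, card_range, nsmul_eq_mul, mul_one] at h1
      have : (N : ℝ) ≤ L := by exact_mod_cast h.le
      have : 0 ≤ (η + κ * L) * N := by positivity
      linarith
    · obtain ⟨k, rfl⟩ := Nat.exists_eq_add_of_le' h
      rw [sum_range_add]
      have := ih k (by omega)
      have := hone k
      refine (norm_add_le _ _).trans ?_
      push_cast
      linarith

open Polynomial in
/-- The difference of two translates of a polynomial has smaller degree, with explicit top
coefficient. -/
lemma natDegree_taylor_sub_taylor_le (P : ℝ[X]) (d : ℕ) (hP : P.natDegree ≤ d + 1) (r s : ℝ) :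
    (taylor r P - taylor s P).natDegree ≤ d ∧
      (taylor r P - taylor s P).coeff d = (d + 1) * (r - s) * P.coeff (d + 1) := by
  constructor
  · rw [natDegree_le_iff_coeff_eq_zero]
    intro n hn
    have h : (hasseDeriv n P).natDegree < 1 := by
      have := natDegree_hasseDeriv_le P n
      omega
    rw [coeff_sub, taylor_coeff, taylor_coeff, eval_eq_sum_range' h, eval_eq_sum_range' h]
    simp
  · have h : (hasseDeriv d P).natDegree < 2 := by
      have := natDegree_hasseDeriv_le P d
      omega
    rw [coeff_sub, taylor_coeff, taylor_coeff, eval_eq_sum_range' h, eval_eq_sum_range' h]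
    simp only [sum_range_succ, range_zero, sum_empty, hasseDeriv_coeff, add_comm 1 d,
      Nat.choose_succ_self_right]
    push_cast
    ring

open Polynomial in
/-- The Weyl theorem, uniformly over all polynomials with a given irrational top coefficient. -/
lemma exists_norm_sum_phase_eval_le (d : ℕ) (α : ℝ) (hα : Irrational α) (η : ℝ) (hη : 0 < η) :
    ∃ L₀ : ℕ, ∀ L ≥ L₀, ∀ P : ℝ[X], P.natDegree ≤ d + 1 → P.coeff (d + 1) = α →
      ‖∑ n ∈ range L, phase (P.eval (n : ℝ))‖ ≤ η * L := by
  induction d generalizing α η with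
  | zero =>
    have hpos : 0 < ‖phase α - 1‖ := norm_pos_iff.2 (sub_ne_zero.2 (phase_ne_one hα))
    obtain ⟨L₀, hL₀⟩ := exists_nat_ge (2 / (‖phase α - 1‖ * η))
    refine ⟨L₀, fun L hL P hP hc => ?_⟩
    have heval : ∀ n : ℕ, phase (P.eval (n : ℝ)) = phase (P.coeff 0) * phase α ^ n := by
      intro n
      rw [eval_eq_sum_range' (show P.natDegree < 2 by omega), ← phase_nat_mul, ← phase_add]
      simp only [sum_range_succ, range_zero, sum_empty, ← hc]
      congr 1
      ring_nf
    simp only [heval, ← Finset.mul_sum, norm_mul, norm_phase, one_mul]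
    have hgeom : ‖∑ n ∈ range L, phase α ^ n‖ * ‖phase α - 1‖ ≤ 2 := by
      rw [← norm_mul, geom_sum_mul]
      refine (norm_sub_le _ _).trans ?_
      rw [norm_pow, norm_phase]
      norm_num
    have hL' : 2 / (‖phase α - 1‖ * η) ≤ L := hL₀.trans (by exact_mod_cast hL)
    rw [div_le_iff₀ (by positivity)] at hL'
    refine le_of_mul_le_mul_right (hgeom.trans ?_) hpos
    linarith
  | succ d ih =>
    -- van der Corput differencing with `K` shifts
    obtain ⟨K, hK⟩ := exists_nat_ge (8 / η ^ 2 + 1)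
    have hK1 : (1 : ℝ) ≤ K := by
      have : 0 ≤ 8 / η ^ 2 := by positivity
      linarith
    have hKη : 8 ≤ η ^ 2 * K := by
      have : 8 / η ^ 2 ≤ K := by linarith
      rw [div_le_iff₀ (by positivity)] at this
      linarith
    have hirr : ∀ i j : ℕ, i ≠ j → Irrational ((d + 1 + 1) * ((i : ℝ) - j) * α) := by
      intro i j hij
      have h0 : (((d : ℤ) + 1 + 1) * ((i : ℤ) - j)) ≠ 0 :=
        mul_ne_zero (by positivity) (sub_ne_zero.2 (by exact_mod_cast hij))
      have := hα.intCast_mul h0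
      push_cast at this
      exact this
    have hpair : ∀ i j : ℕ, ∃ L₀ : ℕ, ∀ L ≥ L₀, ∀ P : ℝ[X], i ≠ j → P.natDegree ≤ d + 1 →
        P.coeff (d + 1) = (d + 1 + 1) * ((i : ℝ) - j) * α →
        ‖∑ n ∈ range L, phase (P.eval (n : ℝ))‖ ≤ η ^ 2 / 8 * L := by
      intro i j
      by_cases hij : i = j
      · exact ⟨0, fun _ _ _ h => absurd hij h⟩
      · obtain ⟨L₀, h⟩ := ih _ (hirr i j hij) (η ^ 2 / 8) (by positivity)
        exact ⟨L₀, fun L hL P _ => h L hL P⟩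
    choose Λ hΛ using hpair
    obtain ⟨L₁, hL₁⟩ := exists_nat_ge (4 * K / η)
    refine ⟨L₁ + ∑ i ∈ range K, ∑ j ∈ range K, Λ i j, fun L hL P hP hc => ?_⟩
    set z : ℕ → ℂ := fun n => phase (P.eval (n : ℝ)) with hz
    have hz1 : ∀ n, ‖z n‖ = 1 := fun n => norm_phase _
    have hcorr : ∀ i ∈ range K, ∀ j ∈ range K, i ≠ j →
        ‖∑ n ∈ range L, z (n + i) * (starRingEnd ℂ) (z (n + j))‖ ≤ η ^ 2 / 8 * L := by
      intro i hi j hj hij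
      have hLΛ : Λ i j ≤ L := by
        have h1 : Λ i j ≤ ∑ j ∈ range K, Λ i j :=
          single_le_sum (f := fun j => Λ i j) (fun _ _ => Nat.zero_le _) hj
        have h2 : ∑ j ∈ range K, Λ i j ≤ ∑ i ∈ range K, ∑ j ∈ range K, Λ i j :=
          single_le_sum (f := fun i => ∑ j ∈ range K, Λ i j) (fun _ _ => Nat.zero_le _) hi
        omega
      obtain ⟨hdeg, hco⟩ := natDegree_taylor_sub_taylor_le P (d + 1) hP i j
      rw [hc] at hco
      convert hΛ i j L hLΛ _ hij hdeg (by rw [hco]; push_cast; ring) using 4 with n hn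
      rw [hz, ← phase_sub, eval_sub, taylor_eval, taylor_eval]
      push_cast
      rfl
    have hshift : ∀ j ∈ range K, ‖∑ n ∈ range L, z n - ∑ n ∈ range L, z (n + j)‖ ≤ 2 * K := by
      intro j hj
      have h1 : ∑ n ∈ range L, z n - ∑ n ∈ range L, z (n + j) =
          ∑ n ∈ range j, z n - ∑ n ∈ range j, z (L + n) := by
        have h2 := sum_range_add z j L
        have h3 := sum_range_add z L j
        rw [add_comm j L] at h2
        simp only [add_comm _ j]
        linear_combination h2 - h3
      have hj' : (j : ℝ) ≤ K := by exact_mod_cast (mem_range.1 hj).le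
      have h4 : ‖∑ n ∈ range j, z n‖ ≤ j := by
        simpa [hz1] using norm_sum_le (range j) z
      have h5 : ‖∑ n ∈ range j, z (L + n)‖ ≤ j := by
        simpa [hz1] using norm_sum_le (range j) fun n => z (L + n)
      rw [h1]
      refine (norm_sub_le _ _).trans ?_
      linarith
    set T : ℂ := ∑ n ∈ range L, 1 * ∑ j ∈ range K, z (n + j) with hT
    have hTsq : ‖T‖ ^ 2 ≤ L * ∑ j ∈ range K, ∑ i ∈ range K,
        ((if i = j then (L : ℝ) else 0) + η ^ 2 / 8 * L) := by
      have := norm_sum_mul_sum_sq_le (range L) (range K) (fun _ => 1) (by simp)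
        (fun j n => z (n + j))
      rw [card_range] at this
      refine this.trans ?_
      gcongr with j hj i hi
      split_ifs with hij
      · subst hij
        have : ‖∑ n ∈ range L, z (n + i) * (starRingEnd ℂ) (z (n + i))‖ ≤ L := by
          simpa [hz1] using norm_sum_le (range L) fun n => z (n + i) * (starRingEnd ℂ) (z (n + i))
        have : 0 ≤ η ^ 2 / 8 * L := by positivity
        linarith
      · rw [zero_add]
        exact hcorr j hj i hi (Ne.symm hij)
    have hTsq' : ‖T‖ ^ 2 ≤ (η / 2 * L * K) ^ 2 := by
      refine hTsq.trans ?_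
      have : ∑ j ∈ range K, ∑ i ∈ range K, ((if i = j then (L : ℝ) else 0) + η ^ 2 / 8 * L) =
          K * L + K * K * (η ^ 2 / 8 * L) := by
        simp only [sum_add_distrib, sum_ite_eq', sum_const, card_range, nsmul_eq_mul]
        rw [sum_congr rfl fun j hj => if_pos hj]
        simp
        ring
      rw [this]
      nlinarith [mul_le_mul_of_nonneg_left hKη (show 0 ≤ (L : ℝ) * L * K by positivity)]
    have hTle : ‖T‖ ≤ η / 2 * L * K := abs_le_of_sq_le_sq' hTsq' (by positivity) |>.2
    have hKS : ‖K * ∑ n ∈ range L, z n - T‖ ≤ K * (2 * K) := by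
      have : K * ∑ n ∈ range L, z n - T =
          ∑ j ∈ range K, (∑ n ∈ range L, z n - ∑ n ∈ range L, z (n + j)) := by
        rw [sum_sub_distrib, sum_const, card_range, nsmul_eq_mul, hT, sum_comm]
        simp
      rw [this]
      refine (norm_sum_le_of_le _ hshift).trans_eq ?_
      simp
    have hfinal : K * ‖∑ n ∈ range L, z n‖ ≤ K * (2 * K) + η / 2 * L * K := by
      calc K * ‖∑ n ∈ range L, z n‖ = ‖(K * ∑ n ∈ range L, z n - T) + T‖ := by simp
        _ ≤ _ := (norm_add_le _ _).trans (add_le_add hKS hTle)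
    have hLK : 4 * K ≤ η * L := by
      have h1 : (L₁ : ℝ) ≤ L := by
        exact_mod_cast (Nat.le_add_right _ _).trans hL
      have := hL₁.trans h1
      rw [div_le_iff₀ hη] at this
      linarith
    refine le_of_mul_le_mul_left (hfinal.trans ?_) (zero_lt_one.trans_le hK1)
    nlinarith

/-- Summing over the multiples of `p` a function that vanishes beyond `N`. -/
lemma sum_filter_dvd_Ioc {R : Type*} [AddCommMonoid R] (g : ℕ → R) (N p : ℕ) (hp : 0 < p)
    (hg : ∀ n, N < n → g n = 0) :
    ∑ n ∈ Ioc 0 N with p ∣ n, g n = ∑ k ∈ Ioc 0 N, g (p * k) := by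
  rw [← sum_image (s := Ioc 0 N) (g := fun k => p * k) (f := g)
    fun a _ b _ h => Nat.eq_of_mul_eq_mul_left hp h]
  refine sum_subset (fun n hn => ?_) fun n hn hn' => hg n ?_
  · obtain ⟨hn1, k, rfl⟩ := mem_filter.1 hn
    rw [mem_Ioc] at hn1
    exact mem_image_of_mem _ (mem_Ioc.2 ⟨Nat.pos_of_mul_pos_left hn1.1,
      (Nat.le_mul_of_pos_left k hp).trans hn1.2⟩)
  · obtain ⟨k, hk, rfl⟩ := mem_image.1 hn
    by_contra! h
    exact hn' (mem_filter.2 ⟨mem_Ioc.2 ⟨Nat.mul_pos hp (mem_Ioc.1 hk).1, h⟩, dvd_mul_right _ _⟩)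

/-- The Turán-Kubilius variance bound for the number of prime divisors in a finite set. -/
lemma sum_card_prime_dvd_sub_sq_le (Pr : Finset ℕ) (hPr : ∀ p ∈ Pr, p.Prime) (N : ℕ)
    (hN : 2 * #Pr ≤ N) :
    ∑ n ∈ Ioc 0 N, ((∑ p ∈ Pr, if p ∣ n then (1 : ℝ) else 0) - ∑ p ∈ Pr, (1 / p : ℝ)) ^ 2 ≤
      2 * N * ∑ p ∈ Pr, (1 / p : ℝ) := by
  set A := ∑ p ∈ Pr, (1 / p : ℝ) with hA
  have hA0 : 0 ≤ A := sum_nonneg fun _ _ => by positivity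
  have hcount : ∀ d : ℕ, ∑ n ∈ Ioc 0 N, (if d ∣ n then (1 : ℝ) else 0) = (N / d : ℕ) := by
    intro d
    rw [sum_boole, Nat.Ioc_filter_dvd_card_eq_div]
  have hlin : N * A - #Pr ≤ ∑ n ∈ Ioc 0 N, ∑ p ∈ Pr, (if p ∣ n then (1 : ℝ) else 0) := by
    rw [sum_comm, hA, mul_sum, card_eq_sum_ones]
    push_cast
    rw [← sum_sub_distrib]
    refine sum_le_sum fun p hp => ?_
    rw [hcount, mul_one_div, sub_le_iff_le_add]
    have := (Nat.lt_floor_add_one ((N : ℝ) / p)).le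
    rwa [Nat.floor_div_eq_div] at this
  have hquad : ∑ n ∈ Ioc 0 N, (∑ p ∈ Pr, if p ∣ n then (1 : ℝ) else 0) ^ 2 ≤ N * A ^ 2 + N * A := by
    have hexp : ∑ n ∈ Ioc 0 N, (∑ p ∈ Pr, if p ∣ n then (1 : ℝ) else 0) ^ 2 =
        ∑ p ∈ Pr, ∑ q ∈ Pr, ∑ n ∈ Ioc 0 N,
          (if p ∣ n then (1 : ℝ) else 0) * (if q ∣ n then (1 : ℝ) else 0) := by
      simp only [sq, sum_mul_sum]
      rw [sum_comm]
      exact sum_congr rfl fun _ _ => sum_comm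
    have hterm : ∀ p ∈ Pr, ∀ q ∈ Pr, ∑ n ∈ Ioc 0 N,
        (if p ∣ n then (1 : ℝ) else 0) * (if q ∣ n then (1 : ℝ) else 0) ≤
          N * ((1 / p) * (1 / q)) + if p = q then (N * (1 / p) : ℝ) else 0 := by
      intro p hp q hq
      split_ifs with hpq
      · subst hpq
        simp only [mul_ite, mul_one, mul_zero, ← ite_and, and_self]
        rw [hcount]
        have := Nat.cast_div_le (α := ℝ) (m := N) (n := p)
        have : (0 : ℝ) ≤ N * ((1 / p) * (1 / p)) := by positivity
        rw [mul_one_div (N : ℝ) (p : ℝ)]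
        linarith
      · have hco : Nat.Coprime p q := (Nat.coprime_primes (hPr p hp) (hPr q hq)).2 hpq
        have : ∀ n, (if p ∣ n then (1 : ℝ) else 0) * (if q ∣ n then (1 : ℝ) else 0) =
            if p * q ∣ n then 1 else 0 := by
          intro n
          have hiff : p * q ∣ n ↔ p ∣ n ∧ q ∣ n :=
            ⟨fun h => ⟨dvd_of_mul_right_dvd h, dvd_of_mul_left_dvd h⟩,
              fun h => hco.mul_dvd_of_dvd_of_dvd h.1 h.2⟩
          by_cases h1 : p ∣ n <;> by_cases h2 : q ∣ n <;> simp [hiff, h1, h2]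
        simp only [this]
        rw [hcount, add_zero]
        refine Nat.cast_div_le.trans_eq ?_
        push_cast
        rw [one_div_mul_one_div, mul_one_div]
    rw [hexp]
    refine (sum_le_sum fun p hp => sum_le_sum (hterm p hp)).trans_eq ?_
    simp only [sum_add_distrib, sum_ite_eq]
    rw [sum_congr rfl (fun p hp => if_pos hp), ← mul_sum, ← hA]
    simp only [← mul_sum, ← hA, ← sum_mul]
    ring
  have hexpand : ∑ n ∈ Ioc 0 N, ((∑ p ∈ Pr, if p ∣ n then (1 : ℝ) else 0) - A) ^ 2 =
      ∑ n ∈ Ioc 0 N, (∑ p ∈ Pr, if p ∣ n then (1 : ℝ) else 0) ^ 2 -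
        2 * A * ∑ n ∈ Ioc 0 N, ∑ p ∈ Pr, (if p ∣ n then (1 : ℝ) else 0) + N * A ^ 2 := by
    have : (N : ℝ) * A ^ 2 = ∑ n ∈ Ioc 0 N, A ^ 2 := by simp
    rw [this, mul_sum, ← sum_sub_distrib, ← sum_add_distrib]
    exact sum_congr rfl fun _ _ => by ring
  have hN' : (2 * #Pr : ℝ) ≤ N := by exact_mod_cast hN
  rw [hexpand]
  nlinarith [mul_le_mul_of_nonneg_left hlin hA0, mul_le_mul_of_nonneg_left hN' hA0]

/-- A quantitative form of the Kátai orthogonality criterion. -/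
lemma katai_inequality (u : ℕ → ℂ) (hu_mult : ∀ m n : ℕ, Nat.Coprime m n → u (m * n) = u m * u n)
    (hu_bd : ∀ n, ‖u n‖ ≤ 1) (Pr : Finset ℕ) (hPr : ∀ p ∈ Pr, p.Prime) (N : ℕ) (hN : 2 * #Pr ≤ N)
    (F : ℕ → ℂ) (hF : ∀ n, ‖F n‖ ≤ 1) (hFN : ∀ n, N < n → F n = 0) (η : ℝ) (hη : 0 ≤ η)
    (hcorr : ∀ p ∈ Pr, ∀ q ∈ Pr, p ≠ q →
      ‖∑ k ∈ Ioc 0 N, F (p * k) * (starRingEnd ℂ) (F (q * k))‖ ≤ η * N) :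
    (∑ p ∈ Pr, (1 / p : ℝ)) * ‖∑ n ∈ Ioc 0 N, F n * u n‖ ≤
      N * (√(2 * ∑ p ∈ Pr, (1 / p : ℝ)) + 2 * ∑ p ∈ Pr, (1 / (p : ℝ) ^ 2) +
        √(∑ p ∈ Pr, (1 / p : ℝ) + #Pr ^ 2 * η)) := by
  set A := ∑ p ∈ Pr, (1 / p : ℝ) with hA
  have hA0 : 0 ≤ A := sum_nonneg fun _ _ => by positivity
  set ω : ℕ → ℝ := fun n => ∑ p ∈ Pr, if p ∣ n then (1 : ℝ) else 0 with hω
  have hprod : ∀ n m, ‖F n * u m‖ ≤ 1 := fun n m => by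
    rw [norm_mul]
    exact mul_le_one₀ (hF n) (norm_nonneg _) (hu_bd m)
  have hvar : ‖∑ n ∈ Ioc 0 N, F n * u n * ((A - ω n : ℝ) : ℂ)‖ ≤ N * √(2 * A) := by
    have h1 : ‖∑ n ∈ Ioc 0 N, F n * u n * ((A - ω n : ℝ) : ℂ)‖ ≤ ∑ n ∈ Ioc 0 N, |ω n - A| := by
      refine norm_sum_le_of_le _ fun n _ => ?_
      rw [norm_mul, Complex.norm_real, Real.norm_eq_abs, abs_sub_comm]
      exact mul_le_of_le_one_left (abs_nonneg _) (hprod n n)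
    have h2 : (∑ n ∈ Ioc 0 N, |ω n - A|) ^ 2 ≤ (N * √(2 * A)) ^ 2 := by
      refine sq_sum_le_card_mul_sum_sq.trans ?_
      simp only [sq_abs, Nat.card_Ioc, tsub_zero]
      rw [mul_pow, Real.sq_sqrt (by positivity)]
      have := mul_le_mul_of_nonneg_left (sum_card_prime_dvd_sub_sq_le Pr hPr N hN)
        (Nat.cast_nonneg (α := ℝ) N)
      refine this.trans_eq ?_
      ring
    exact h1.trans (abs_le_of_sq_le_sq' h2 (by positivity)).2
  have hweighted : ∑ n ∈ Ioc 0 N, F n * u n * (ω n : ℂ) =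
      ∑ p ∈ Pr, ∑ k ∈ Ioc 0 N, F (p * k) * u (p * k) := by
    have : ∀ n, F n * u n * (ω n : ℂ) = ∑ p ∈ Pr, if p ∣ n then F n * u n else 0 := by
      intro n
      rw [hω]
      push_cast
      rw [mul_sum]
      exact sum_congr rfl fun p _ => by split_ifs <;> simp
    simp only [this]
    rw [sum_comm]
    refine sum_congr rfl fun p hp => ?_
    rw [← sum_filter]
    exact sum_filter_dvd_Ioc (fun n => F n * u n) N p (hPr p hp).pos fun n hn => by simp [hFN n hn]
  have hmult : ‖∑ p ∈ Pr, ∑ k ∈ Ioc 0 N, F (p * k) * (u (p * k) - u p * u k)‖ ≤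
      N * (2 * ∑ p ∈ Pr, (1 / (p : ℝ) ^ 2)) := by
    rw [mul_sum, mul_sum]
    refine norm_sum_le_of_le _ fun p hp => ?_
    have hp0 : 0 < p := (hPr p hp).pos
    set D := (Ioc 0 (N / p)).filter fun k => p ∣ k
    have h1 : ‖∑ k ∈ Ioc 0 N, F (p * k) * (u (p * k) - u p * u k)‖ ≤
        ∑ k ∈ Ioc 0 N, if k ∈ D then (2 : ℝ) else 0 := by
      refine norm_sum_le_of_le _ fun k hk => ?_
      split_ifs with hkp
      · rw [mul_sub]
        refine (norm_sub_le _ _).trans ?_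
        have h2 : ‖F (p * k) * (u p * u k)‖ ≤ 1 := by
          rw [norm_mul, norm_mul]
          exact mul_le_one₀ (hF _) (by positivity)
            (mul_le_one₀ (hu_bd _) (norm_nonneg _) (hu_bd _))
        linarith [hprod (p * k) (p * k)]
      · by_cases hpk : N < p * k
        · simp [hFN _ hpk]
        · have hnd : ¬ p ∣ k := fun hd => hkp (mem_filter.2 ⟨mem_Ioc.2 ⟨(mem_Ioc.1 hk).1,
            (Nat.le_div_iff_mul_le hp0).2 (by rw [mul_comm]; omega)⟩, hd⟩)
          rw [hu_mult p k (((hPr p hp).coprime_iff_not_dvd).2 hnd)]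
          simp
    refine h1.trans ?_
    rw [← sum_filter, sum_const, nsmul_eq_mul]
    have hcard : #((Ioc 0 N).filter fun k => k ∈ D) ≤ N / p / p :=
      calc _ ≤ #D := card_le_card fun k hk => (mem_filter.1 hk).2
        _ = N / p / p := Nat.Ioc_filter_dvd_card_eq_div _ _
    have hcard' : (#((Ioc 0 N).filter fun k => k ∈ D) : ℝ) ≤ N / p / p :=
      (Nat.cast_le.2 hcard).trans (Nat.cast_div_le.trans (by gcongr; exact Nat.cast_div_le))
    refine (mul_le_mul_of_nonneg_right hcard' zero_le_two).trans_eq ?_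
    field_simp
  have hbilinear : ‖∑ k ∈ Ioc 0 N, u k * ∑ p ∈ Pr, F (p * k) * u p‖ ≤ N * √(A + #Pr ^ 2 * η) := by
    have h1 := norm_sum_mul_sum_sq_le (Ioc 0 N) Pr u (fun n _ => hu_bd n) fun p k => F (p * k) * u p
    have h2 : ∀ p ∈ Pr, ∀ q ∈ Pr,
        ‖∑ k ∈ Ioc 0 N, F (p * k) * u p * (starRingEnd ℂ) (F (q * k) * u q)‖ ≤
          (if p = q then (N * (1 / p) : ℝ) else 0) + η * N := by
      intro p hp q hq
      have h3 : ∑ k ∈ Ioc 0 N, F (p * k) * u p * (starRingEnd ℂ) (F (q * k) * u q) =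
          (u p * (starRingEnd ℂ) (u q)) *
            ∑ k ∈ Ioc 0 N, F (p * k) * (starRingEnd ℂ) (F (q * k)) := by
        rw [mul_sum]
        refine sum_congr rfl fun k _ => ?_
        rw [map_mul]
        ring
      have h4 : ‖u p * (starRingEnd ℂ) (u q)‖ ≤ 1 := by
        rw [norm_mul, RCLike.norm_conj]
        exact mul_le_one₀ (hu_bd _) (norm_nonneg _) (hu_bd _)
      rw [h3, norm_mul]
      refine (mul_le_of_le_one_left (norm_nonneg _) h4).trans ?_
      split_ifs with hpq
      · subst hpq
        have hp0 : 0 < p := (hPr p hp).pos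
        have h5 : ‖∑ k ∈ Ioc 0 N, F (p * k) * (starRingEnd ℂ) (F (p * k))‖ ≤
            ∑ k ∈ Ioc 0 N, if k ∈ Ioc 0 (N / p) then (1 : ℝ) else 0 := by
          refine norm_sum_le_of_le _ fun k hk => ?_
          split_ifs with hkp
          · rw [norm_mul, RCLike.norm_conj]
            exact mul_le_one₀ (hF _) (norm_nonneg _) (hF _)
          · have : N < p * k := by
              by_contra! h
              exact hkp (mem_Ioc.2 ⟨(mem_Ioc.1 hk).1,
                (Nat.le_div_iff_mul_le hp0).2 (by rwa [mul_comm])⟩)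
            simp [hFN _ this]
        rw [sum_boole] at h5
        have h6 : #{k ∈ Ioc 0 N | k ∈ Ioc 0 (N / p)} ≤ N / p := by
          calc _ ≤ #(Ioc 0 (N / p)) := card_le_card fun k hk => (mem_filter.1 hk).2
            _ = N / p := by simp
        have h7 : (#{k ∈ Ioc 0 N | k ∈ Ioc 0 (N / p)} : ℝ) ≤ N / p :=
          (Nat.cast_le.2 h6).trans Nat.cast_div_le
        have : 0 ≤ η * N := by positivity
        rw [mul_one_div]
        linarith
      · rw [zero_add]
        exact hcorr p hp q hq hpq
    have h3 : ∑ p ∈ Pr, ∑ q ∈ Pr, ((if p = q then (N * (1 / p) : ℝ) else 0) + η * N) =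
        N * (A + #Pr ^ 2 * η) := by
      simp only [sum_add_distrib, sum_ite_eq, sum_const, nsmul_eq_mul]
      rw [sum_congr rfl (fun p hp => if_pos hp), ← mul_sum, ← hA]
      ring
    have h4 : ‖∑ k ∈ Ioc 0 N, u k * ∑ p ∈ Pr, F (p * k) * u p‖ ^ 2 ≤
        (N * √(A + #Pr ^ 2 * η)) ^ 2 := by
      refine h1.trans ?_
      rw [mul_pow, Real.sq_sqrt (by positivity), Nat.card_Ioc, tsub_zero, sq (N : ℝ), mul_assoc,
        ← h3]
      gcongr with p hp q hq
      exact h2 p hp q hq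
    exact (abs_le_of_sq_le_sq' h4 (by positivity)).2
  have hdecomp : (A : ℂ) * ∑ n ∈ Ioc 0 N, F n * u n =
      ∑ n ∈ Ioc 0 N, F n * u n * ((A - ω n : ℝ) : ℂ) +
      ∑ p ∈ Pr, ∑ k ∈ Ioc 0 N, F (p * k) * (u (p * k) - u p * u k) +
      ∑ k ∈ Ioc 0 N, u k * ∑ p ∈ Pr, F (p * k) * u p := by
    have h1 : ∑ k ∈ Ioc 0 N, u k * ∑ p ∈ Pr, F (p * k) * u p =
        ∑ p ∈ Pr, ∑ k ∈ Ioc 0 N, F (p * k) * (u p * u k) := by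
      simp only [mul_sum]
      rw [sum_comm]
      exact sum_congr rfl fun p _ => sum_congr rfl fun k _ => by ring
    have h2 : ∑ n ∈ Ioc 0 N, F n * u n * ((A - ω n : ℝ) : ℂ) =
        (A : ℂ) * ∑ n ∈ Ioc 0 N, F n * u n - ∑ n ∈ Ioc 0 N, F n * u n * (ω n : ℂ) := by
      rw [mul_sum, ← sum_sub_distrib]
      exact sum_congr rfl fun n _ => by push_cast; ring
    rw [h1, h2, hweighted]
    simp only [mul_sub, sum_sub_distrib]
    ring
  calc A * ‖∑ n ∈ Ioc 0 N, F n * u n‖ = ‖(A : ℂ) * ∑ n ∈ Ioc 0 N, F n * u n‖ := by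
        rw [norm_mul, Complex.norm_real, Real.norm_of_nonneg hA0]
    _ ≤ N * √(2 * A) + N * (2 * ∑ p ∈ Pr, (1 / (p : ℝ) ^ 2)) + N * √(A + #Pr ^ 2 * η) := by
        rw [hdecomp]
        exact (norm_add₃_le).trans (add_le_add (add_le_add hvar hmult) hbilinear)
    _ = _ := by ring

open Polynomial in
/-- Uniform cancellation of `e(P(pk) - P(qk))` over all blocks of a suitable length. -/
lemma exists_block_norm_sum_phase_sub_le (P : ℝ[X]) (hPdeg : 0 < P.natDegree)
    (hPirr : Irrational P.leadingCoeff) (p q : ℕ) (hpq : p ≠ q) (η : ℝ) (hη : 0 < η) :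
    ∃ L : ℕ, 0 < L ∧ ∀ a : ℕ, ‖∑ i ∈ range L,
      phase (P.eval ((p * (a + i) : ℕ) : ℝ) - P.eval ((q * (a + i) : ℕ) : ℝ))‖ ≤ η * L := by
  obtain ⟨d, hd⟩ := Nat.exists_eq_add_of_lt hPdeg
  rw [zero_add] at hd
  have hne : ((p : ℤ) ^ (d + 1) - (q : ℤ) ^ (d + 1)) ≠ 0 :=
    sub_ne_zero.2 fun h => hpq (Nat.pow_left_injective (Nat.succ_ne_zero d) (by exact_mod_cast h))
  set Q : ℝ[X] := P.comp (C (p : ℝ) * X) - P.comp (C (q : ℝ) * X) with hQ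
  have hQcoeff : ∀ n, Q.coeff n = ((p : ℝ) ^ n - (q : ℝ) ^ n) * P.coeff n := by
    intro n
    rw [hQ, coeff_sub, comp_C_mul_X_coeff, comp_C_mul_X_coeff]
    ring
  have hQdeg : Q.natDegree ≤ d + 1 := by
    rw [natDegree_le_iff_coeff_eq_zero]
    intro n hn
    rw [hQcoeff, coeff_eq_zero_of_natDegree_lt (by omega), mul_zero]
  have hQirr : Irrational (Q.coeff (d + 1)) := by
    have := hPirr.intCast_mul hne
    rw [leadingCoeff, hd] at this
    rw [hQcoeff]
    push_cast at this
    exact this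
  have hQnat : Q.natDegree = d + 1 := by
    refine le_antisymm hQdeg (le_natDegree_of_ne_zero fun h => ?_)
    rw [h] at hQirr
    exact hQirr.ne_zero rfl
  obtain ⟨L₀, hL₀⟩ := exists_norm_sum_phase_eval_le d _ hQirr η hη
  refine ⟨L₀ + 1, Nat.succ_pos _, fun a => ?_⟩
  have hcoeff : (taylor (a : ℝ) Q).coeff (d + 1) = Q.coeff (d + 1) := by
    have := coeff_taylor_natDegree (a : ℝ) Q
    rwa [leadingCoeff, hQnat] at this
  convert hL₀ (L₀ + 1) (Nat.le_succ _) (taylor (a : ℝ) Q) (by rw [natDegree_taylor, hQnat]) hcoeff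
    using 4 with i
  rw [taylor_eval, hQ, eval_sub, eval_comp, eval_comp]
  simp [add_comm]

/-- Correlations along dilates of a polynomial phase times a slowly varying weight. -/
lemma exists_norm_correlation_le (P : Polynomial ℝ) (hPdeg : 0 < P.natDegree)
    (hPirr : Irrational P.leadingCoeff) (p q : ℕ) (hpq : p ≠ q) (η : ℝ) (hη : 0 < η) :
    ∃ H₁ : ℕ, ∀ H N : ℕ, H₁ ≤ H → 0 < H → H ≤ N → ∀ g : ℕ → ℂ, (∀ n, ‖g n‖ ≤ 1) →
      (∀ n j, ‖g (n + j) - g n‖ ≤ 2 * j / H) →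
      ‖∑ k ∈ Ioc 0 N, (phase (P.eval ((p * k : ℕ) : ℝ)) * g (p * k)) *
        (starRingEnd ℂ) (phase (P.eval ((q * k : ℕ) : ℝ)) * g (q * k))‖ ≤ η * N := by
  obtain ⟨L, hL, hblock⟩ :=
    exists_block_norm_sum_phase_sub_le P hPdeg hPirr p q hpq (η / 3) (by positivity)
  obtain ⟨H₁, hH₁⟩ := exists_nat_ge (6 * (p + q) * L / η)
  refine ⟨H₁, fun H N hH hH0 hHN g hg hglip => ?_⟩
  have hH0' : (0 : ℝ) < H := by exact_mod_cast hH0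
  have hHL : 6 * (p + q) * L ≤ η * H := by
    have := hH₁.trans (Nat.cast_le.2 hH)
    rw [div_le_iff₀ hη] at this
    linarith
  have hHN' : (H : ℝ) ≤ N := by exact_mod_cast hHN
  set E : ℕ → ℂ := fun k =>
    phase (P.eval ((p * (k + 1) : ℕ) : ℝ) - P.eval ((q * (k + 1) : ℕ) : ℝ)) with hE
  set G : ℕ → ℂ := fun k => g (p * (k + 1)) * (starRingEnd ℂ) (g (q * (k + 1))) with hG
  have hsum : ∑ k ∈ Ioc 0 N, (phase (P.eval ((p * k : ℕ) : ℝ)) * g (p * k)) *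
      (starRingEnd ℂ) (phase (P.eval ((q * k : ℕ) : ℝ)) * g (q * k)) =
      ∑ k ∈ range N, E k * G k := by
    have hset : Ioc 0 N = Ico (0 + 1) (N + 1) := by
      ext k
      simp only [mem_Ioc, mem_Ico]
      omega
    rw [hset, ← sum_Ico_add', range_eq_Ico]
    refine sum_congr rfl fun k _ => ?_
    simp only [hE, hG, phase_sub, map_mul]
    ring
  have hlip : ∀ k, ‖G (k + 1) - G k‖ ≤ 2 * (p + q) / H := by
    intro k
    have h1 := hglip (p * (k + 1)) p
    have h2 := hglip (q * (k + 1)) q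
    have h3 : G (k + 1) - G k =
        (g (p * (k + 1) + p) - g (p * (k + 1))) * (starRingEnd ℂ) (g (q * (k + 1) + q)) +
        g (p * (k + 1)) * (starRingEnd ℂ) (g (q * (k + 1) + q) - g (q * (k + 1))) := by
      simp only [hG, map_sub, mul_add_one]
      ring
    rw [h3]
    refine (norm_add_le _ _).trans ?_
    rw [norm_mul, norm_mul, RCLike.norm_conj, RCLike.norm_conj]
    have h4 := (mul_le_of_le_one_right (norm_nonneg _) (hg (q * (k + 1) + q))).trans h1
    have h5 := (mul_le_of_le_one_left (norm_nonneg _) (hg (p * (k + 1)))).trans h2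
    refine (add_le_add h4 h5).trans_eq ?_
    ring
  have hmain := norm_sum_range_mul_le_of_block E G L hL (η / 3) (2 * (p + q) / H)
    (fun n => (norm_phase _).le)
    (fun n => by
      rw [hG, norm_mul, RCLike.norm_conj]
      exact mul_le_one₀ (hg _) (norm_nonneg _) (hg _))
    hlip
    (fun a => by
      convert hblock (a + 1) using 4 with i
      rw [add_right_comm a 1 i])
    N
  rw [hsum]
  refine hmain.trans ?_
  have h1 : 2 * ((p : ℝ) + q) / H * L ≤ η / 3 := by
    rw [div_mul_eq_mul_div, div_le_iff₀ hH0']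
    linarith
  have h2 : (L : ℝ) ≤ η / 3 * N := by
    have hpq1 : (1 : ℝ) ≤ p + q := by
      exact_mod_cast (show 1 ≤ p + q by omega)
    have : (L : ℝ) ≤ (p + q) * L := le_mul_of_one_le_left (by positivity) hpq1
    have : η * H ≤ η * N := by gcongr
    have : (0 : ℝ) ≤ (p + q) * L := by positivity
    linarith
  have h3 : (η / 3 + 2 * ((p : ℝ) + q) / H * L) * N ≤ (η / 3 + η / 3) * N := by gcongr
  linarith

/-- Sums of a bounded sequence over a sliding window of length `H` are bounded by `H` and
vary slowly. -/
lemma norm_window_sum_le (c : ℕ → ℂ) (hc : ∀ m, ‖c m‖ ≤ 1) (H n j : ℕ) :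
    ‖∑ m ∈ Ico (n + 1 - H) (n + 1), c m‖ ≤ H ∧
    ‖∑ m ∈ Ico (n + j + 1 - H) (n + j + 1), c m - ∑ m ∈ Ico (n + 1 - H) (n + 1), c m‖ ≤ 2 * j := by
  have hIco : ∀ a b k : ℕ, b ≤ a + k → ‖∑ m ∈ Ico a b, c m‖ ≤ k := by
    intro a b k h
    refine (norm_sum_le_of_le _ fun m _ => hc m).trans ?_
    rw [sum_const, Nat.card_Ico, nsmul_eq_mul, mul_one]
    exact_mod_cast (show b - a ≤ k by omega)
  refine ⟨hIco _ _ _ (by omega), ?_⟩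
  have h1 := hIco (n + 1) (n + j + 1) j (by omega)
  have h2 := hIco (n + 1 - H) (n + j + 1 - H) j (by omega)
  have h3 : ∑ m ∈ Ico (n + j + 1 - H) (n + j + 1), c m - ∑ m ∈ Ico (n + 1 - H) (n + 1), c m =
      ∑ m ∈ Ico (n + 1) (n + j + 1), c m - ∑ m ∈ Ico (n + 1 - H) (n + j + 1 - H), c m := by
    rw [sum_Ico_eq_sub _ (show n + j + 1 - H ≤ n + j + 1 by omega),
      sum_Ico_eq_sub _ (show n + 1 - H ≤ n + 1 by omega),
      sum_Ico_eq_sub _ (show n + 1 ≤ n + j + 1 by omega),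
      sum_Ico_eq_sub _ (show n + 1 - H ≤ n + j + 1 - H by omega)]
    ring
  rw [h3]
  refine (norm_sub_le _ _).trans ?_
  linarith

lemma exists_finset_primes_sum_one_div_gt (B : ℝ) :
    ∃ Pr : Finset ℕ, (∀ p ∈ Pr, p.Prime) ∧ B < ∑ p ∈ Pr, (1 / p : ℝ) := by
  have h := (not_summable_iff_tendsto_nat_atTop_of_nonneg fun n =>
    Set.indicator_nonneg (fun _ _ => by positivity) n).1 not_summable_one_div_on_primes
  obtain ⟨n, hn⟩ := (h.eventually_gt_atTop B).exists
  refine ⟨{p ∈ range n | p.Prime}, fun p hp => (mem_filter.1 hp).2, ?_⟩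
  rw [sum_filter]
  simpa [Set.indicator_apply] using hn

/-- Dualizing the absolute values turns the average over short intervals into one long sum with
a slowly varying weight. -/
lemma exists_weight_sum_norm_eq (φ : ℕ → ℂ) (H M : ℕ) (hH : 0 < H) (hHM : H ≤ M) :
    ∃ g : ℕ → ℂ, (∀ n, ‖g n‖ ≤ 1) ∧ (∀ n j, ‖g (n + j) - g n‖ ≤ 2 * j / H) ∧
      (∀ n, 3 * M < n → g n = 0) ∧
      ∑ m ∈ Ico M (2 * M), (H : ℝ)⁻¹ * ‖∑ n ∈ Ico m (m + H), φ n‖ =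
        ‖∑ n ∈ Ioc 0 (3 * M), φ n * g n‖ := by
  choose s hs hsφ using fun m => RCLike.exists_norm_eq_mul_self (∑ n ∈ Ico m (m + H), φ n)
  set c : ℕ → ℂ := fun m => if m ∈ Ico M (2 * M) then s m else 0 with hcdef
  have hc : ∀ m, ‖c m‖ ≤ 1 := by
    intro m
    simp only [hcdef]
    split_ifs
    · exact (hs m).le
    · simp
  have hH' : (0 : ℝ) < H := by exact_mod_cast hH
  have hnorm : ‖(H : ℂ)⁻¹‖ = (H : ℝ)⁻¹ := by simp
  refine ⟨fun n => (H : ℂ)⁻¹ * ∑ m ∈ Ico (n + 1 - H) (n + 1), c m, fun n => ?_, fun n j => ?_,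
    fun n hn => ?_, ?_⟩
  · rw [norm_mul, hnorm, inv_mul_le_iff₀ hH', mul_one]
    exact (norm_window_sum_le c hc H n 0).1
  · rw [← mul_sub, norm_mul, hnorm, inv_mul_eq_div]
    gcongr
    exact (norm_window_sum_le c hc H n j).2
  · refine mul_eq_zero_of_right _ (sum_eq_zero fun m hm => ?_)
    rw [mem_Ico] at hm
    refine if_neg fun h => ?_
    rw [mem_Ico] at h
    omega
  · have hswap : ∑ m ∈ Ico M (2 * M), ∑ n ∈ Ico m (m + H), s m * φ n =
        ∑ n ∈ Ioc 0 (3 * M), ∑ m ∈ Ico (n + 1 - H) (n + 1) with m ∈ Ico M (2 * M), s m * φ n := by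
      refine sum_comm' fun m n => ?_
      simp only [mem_Ico, mem_filter, mem_Ioc]
      omega
    have hdual : ((∑ m ∈ Ico M (2 * M), (H : ℝ)⁻¹ * ‖∑ n ∈ Ico m (m + H), φ n‖ : ℝ) : ℂ) =
        ∑ n ∈ Ioc 0 (3 * M), φ n * ((H : ℂ)⁻¹ * ∑ m ∈ Ico (n + 1 - H) (n + 1), c m) := by
      have h1 : ∀ m, ((‖∑ n ∈ Ico m (m + H), φ n‖ : ℝ) : ℂ) = ∑ n ∈ Ico m (m + H), s m * φ n :=
        fun m => (hsφ m).trans (mul_sum _ _ _)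
      push_cast
      simp only [h1]
      rw [← mul_sum, hswap, mul_sum]
      refine sum_congr rfl fun n _ => ?_
      rw [sum_filter, mul_left_comm, mul_sum (a := φ n)]
      congr 1
      refine sum_congr rfl fun m _ => ?_
      simp only [hcdef]
      split_ifs <;> ring
    rw [← hdual, Complex.norm_real, Real.norm_of_nonneg]
    exact sum_nonneg fun _ _ => by positivity

end PolynomialPhase

/-- **Theorem 1.6.** For every multiplicative `u : ℕ → ℂ` with `|u| ≤ 1` and every
non-constant real polynomial `P` with irrational leading coefficient,
`(1/M) ∑_{M ≤ m < 2M} (1/H) |∑_{m ≤ n < m+H} e^{2πi P(n)} u(n)| → 0`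
as `M → ∞`, `H → ∞`, `H/M → 0`: for every `ε > 0` there are `H₀ ∈ ℕ` and `δ > 0` such
that for all integers `H ≥ H₀` and `M ≥ 1` with `H/M ≤ δ` the average is `< ε`. -/
theorem polynomial_short_interval_orthogonality_average
    (u : ℕ → ℂ) (hu_mult : ∀ m n : ℕ, Nat.Coprime m n → u (m * n) = u m * u n)
    (hu_bd : ∀ n, ‖u n‖ ≤ 1)
    (P : Polynomial ℝ) (hPdeg : 0 < P.natDegree) (hPirr : Irrational P.leadingCoeff) :
    ∀ ε > (0:ℝ), ∃ H₀ : ℕ, ∃ δ > (0:ℝ), ∀ H M : ℕ, H₀ ≤ H → 1 ≤ M →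
      (H : ℝ) / (M : ℝ) ≤ δ →
      (M : ℝ)⁻¹ * ∑ m ∈ Finset.Ico M (2 * M), (H : ℝ)⁻¹ *
        ‖∑ n ∈ Finset.Ico m (m + H),
          Complex.exp (2 * Real.pi * Complex.I * ((P.eval (n : ℝ) : ℝ) : ℂ)) * u n‖ < ε := by
  open PolynomialPhase Finset in
  intro ε hε
  set B : ℝ := ∑' n : ℕ, 1 / (n : ℝ) ^ 2 with hB
  have hB0 : 0 ≤ B := tsum_nonneg fun _ => by positivity
  obtain ⟨Pr, hPr, hPrA⟩ := exists_finset_primes_sum_one_div_gt ((3 * (4 + 2 * B) / ε) ^ 2 + 1)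
  set A := ∑ p ∈ Pr, (1 / p : ℝ) with hA
  have hA1 : 1 ≤ A := by
    have : 0 ≤ (3 * (4 + 2 * B) / ε) ^ 2 := sq_nonneg _
    linarith
  have hPrB : ∑ p ∈ Pr, (1 / (p : ℝ) ^ 2) ≤ B :=
    (Real.summable_one_div_nat_pow.2 one_lt_two).sum_le_tsum _ fun _ _ => by positivity
  set η : ℝ := 1 / (#Pr ^ 2 + 1) with hη
  have hη0 : 0 < η := by positivity
  have hPrη : #Pr ^ 2 * η ≤ 1 := by
    rw [hη, mul_one_div, div_le_one (by positivity)]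
    linarith
  have hpair : ∀ p q : ℕ, ∃ H₁ : ℕ, p ≠ q → ∀ H N : ℕ, H₁ ≤ H → 0 < H → H ≤ N →
      ∀ g : ℕ → ℂ, (∀ n, ‖g n‖ ≤ 1) → (∀ n j, ‖g (n + j) - g n‖ ≤ 2 * j / H) →
      ‖∑ k ∈ Ioc 0 N, (phase (P.eval ((p * k : ℕ) : ℝ)) * g (p * k)) *
        (starRingEnd ℂ) (phase (P.eval ((q * k : ℕ) : ℝ)) * g (q * k))‖ ≤ η * N := by
    intro p q
    by_cases hpq : p = q
    · exact ⟨0, fun h => absurd hpq h⟩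
    · obtain ⟨H₁, h⟩ := exists_norm_correlation_le P hPdeg hPirr p q hpq η hη0
      exact ⟨H₁, fun _ => h⟩
  choose Λ hΛ using hpair
  refine ⟨1 + #Pr + ∑ p ∈ Pr, ∑ q ∈ Pr, Λ p q, 1, one_pos, fun H M hH hM hHM => ?_⟩
  have hM0 : (0 : ℝ) < M := by exact_mod_cast hM
  have hHM' : H ≤ M := by
    rw [div_le_one hM0] at hHM
    exact_mod_cast hHM
  obtain ⟨g, hg, hglip, hgsupp, hgsum⟩ := exists_weight_sum_norm_eq
    (fun n => Complex.exp (2 * Real.pi * Complex.I * ((P.eval (n : ℝ) : ℝ) : ℂ)) * u n)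
    H M (by omega) hHM'
  rw [hgsum]
  have hkatai := katai_inequality u hu_mult hu_bd Pr hPr (3 * M) (by omega)
    (fun n => phase (P.eval (n : ℝ)) * g n)
    (fun n => by rw [norm_mul, norm_phase, one_mul]; exact hg n)
    (fun n hn => by simp [hgsupp n hn]) η hη0.le
    (fun p hp q hq hpq => by
      have h1 : Λ p q ≤ ∑ q ∈ Pr, Λ p q :=
        single_le_sum (f := fun q => Λ p q) (fun _ _ => Nat.zero_le _) hq
      have h2 : ∑ q ∈ Pr, Λ p q ≤ ∑ p ∈ Pr, ∑ q ∈ Pr, Λ p q :=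
        single_le_sum (f := fun p => ∑ q ∈ Pr, Λ p q) (fun _ _ => Nat.zero_le _) hp
      exact hΛ p q hpq H (3 * M) (by omega) (by omega) (by omega) g hg hglip)
  have hsum : ∑ n ∈ Ioc 0 (3 * M), phase (P.eval (n : ℝ)) * g n * u n = ∑ n ∈ Ioc 0 (3 * M),
      Complex.exp (2 * Real.pi * Complex.I * ((P.eval (n : ℝ) : ℝ) : ℂ)) * u n * g n :=
    sum_congr rfl fun n _ => mul_right_comm _ _ _
  rw [hsum, ← hA] at hkatai
  set S := ‖∑ n ∈ Ioc 0 (3 * M),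
      Complex.exp (2 * Real.pi * Complex.I * ((P.eval (n : ℝ) : ℝ) : ℂ)) * u n * g n‖
  have hsqrt1 : 1 ≤ √A := Real.one_le_sqrt.2 hA1
  have hsqrt2 : √(2 * A) ≤ 2 * √A := by
    rw [Real.sqrt_le_left (by positivity), mul_pow, Real.sq_sqrt (by positivity)]
    linarith
  have hsqrt3 : √(A + #Pr ^ 2 * η) ≤ 2 * √A := by
    rw [Real.sqrt_le_left (by positivity), mul_pow, Real.sq_sqrt (by positivity)]
    linarith
  have hsqrt4 : 3 * (4 + 2 * B) < ε * √A := by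
    have : 3 * (4 + 2 * B) / ε < √A := Real.lt_sqrt_of_sq_lt (by linarith)
    rw [div_lt_iff₀ hε] at this
    linarith
  have hbound : A * S ≤ 3 * M * ((4 + 2 * B) * √A) := by
    refine hkatai.trans ?_
    push_cast
    gcongr
    have : B ≤ B * √A := le_mul_of_one_le_right hB0 hsqrt1
    linarith
  have hlt : √A * S < √A * (M * ε) := by
    have hAA : A = √A * √A := (Real.mul_self_sqrt (by positivity)).symm
    have h1 : √A * S ≤ 3 * M * (4 + 2 * B) := by
      refine le_of_mul_le_mul_left (?_ : √A * _ ≤ √A * _) (by positivity)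
      calc √A * (√A * S) = A * S := by rw [← mul_assoc, ← hAA]
        _ ≤ _ := hbound
        _ = _ := by ring
    nlinarith [mul_lt_mul_of_pos_left hsqrt4 hM0]
  rw [inv_mul_lt_iff₀ hM0]
  exact lt_of_mul_lt_mul_left hlt (by positivity)
end

section
/- (Bourgain–Sarnak–Ziegler criterion.) Let (a_n)_{n≥1} be a bounded sequence of complex numbers. Assume that for every ε > 0 there exists K such that for all distinct primes r, s ≥ K, limsup_{N→∞} | (1/N) Σ_{n ≤ N} a_{rn} conj(a_{sn}) | ≤ ε. Then for every multiplicative function u : ℕ → ℂ with |u(n)| ≤ 1 for all n, one has (1/N) Σ_{n ≤ N} a_n u(n) → 0 as N → ∞. -/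
open MeasureTheory Filter

/-- Summing over the multiples of `d` up to `N`. -/
lemma sum_Icc_ite_dvd {M : Type*} [AddCommMonoid M] {d : ℕ} (hd : 0 < d) (N : ℕ) (f : ℕ → M) :
    ∑ n ∈ Finset.Icc 1 N, (if d ∣ n then f n else 0) =
      ∑ m ∈ Finset.Icc 1 (N / d), f (d * m) := by
  rw [← Finset.sum_filter]
  symm
  refine Finset.sum_bij (fun m _ => d * m) ?_ ?_ ?_ (fun _ _ => rfl)
  · intro m hm
    simp only [Finset.mem_Icc, Finset.mem_filter] at hm ⊢
    refine ⟨⟨Nat.mul_pos hd hm.1, ?_⟩, dvd_mul_right d m⟩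
    rw [mul_comm]
    exact (Nat.le_div_iff_mul_le hd).1 hm.2
  · intro m _ m' _ hmm
    exact Nat.eq_of_mul_eq_mul_left hd hmm
  · intro n hn
    simp only [Finset.mem_Icc, Finset.mem_filter] at hn
    obtain ⟨⟨hn1, hnN⟩, k, rfl⟩ := hn
    refine ⟨k, ?_, rfl⟩
    rw [Finset.mem_Icc, Nat.le_div_iff_mul_le hd, mul_comm k d]
    exact ⟨Nat.pos_of_mul_pos_left hn1, hnN⟩

lemma sum_Icc_ite_dvd_one {d : ℕ} (hd : 0 < d) (N : ℕ) :
    ∑ n ∈ Finset.Icc 1 N, (if d ∣ n then (1 : ℝ) else 0) = (N / d : ℕ) := by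
  simp [sum_Icc_ite_dvd hd N (fun _ => (1 : ℝ))]

/-- The Turán–Kubilius inequality for a finite set of primes. -/
lemma turan_kubilius (P : Finset ℕ) (hP : ∀ p ∈ P, p.Prime) (N : ℕ) :
    ∑ n ∈ Finset.Icc 1 N,
        ((∑ p ∈ P, if p ∣ n then (1 : ℝ) else 0) - ∑ p ∈ P, (1 / p : ℝ)) ^ 2 ≤
      (N + 2 * P.card) * ∑ p ∈ P, (1 / p : ℝ) := by
  set L : ℝ := ∑ p ∈ P, (1 / p : ℝ) with hL
  have hL0 : 0 ≤ L := Finset.sum_nonneg fun p _ => by positivity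
  have first : N * L - P.card ≤
      ∑ n ∈ Finset.Icc 1 N, ∑ p ∈ P, (if p ∣ n then (1 : ℝ) else 0) := by
    rw [Finset.sum_comm, hL, Finset.mul_sum, Finset.card_eq_sum_ones, Nat.cast_sum,
      ← Finset.sum_sub_distrib]
    refine Finset.sum_le_sum fun p hp => ?_
    rw [sum_Icc_ite_dvd_one (hP p hp).pos]
    have := (Nat.lt_floor_add_one ((N : ℝ) / p)).le
    rw [Nat.floor_div_eq_div] at this
    rw [mul_one_div]
    push_cast
    linarith
  have second : ∑ n ∈ Finset.Icc 1 N, (∑ p ∈ P, if p ∣ n then (1 : ℝ) else 0) ^ 2 ≤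
      N * L ^ 2 + N * L := by
    have expand : ∀ n, (∑ p ∈ P, if p ∣ n then (1 : ℝ) else 0) ^ 2 =
        ∑ p ∈ P, ∑ q ∈ P, (if p ∣ n then (1 : ℝ) else 0) * (if q ∣ n then (1 : ℝ) else 0) := by
      intro n
      rw [sq, Finset.sum_mul_sum]
    simp only [expand]
    rw [Finset.sum_comm]
    simp only [Finset.sum_comm (s := Finset.Icc 1 N)]
    have pair : ∀ p ∈ P, ∀ q ∈ P,
        ∑ n ∈ Finset.Icc 1 N, (if p ∣ n then (1 : ℝ) else 0) * (if q ∣ n then (1 : ℝ) else 0) ≤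
          N * ((1 / p : ℝ) * (1 / q)) + (if p = q then (N : ℝ) * (1 / p) else 0) := by
      intro p hp q hq
      by_cases hpq : p = q
      · subst hpq
        have hsq : ∀ n, (if p ∣ n then (1 : ℝ) else 0) * (if p ∣ n then (1 : ℝ) else 0) =
            if p ∣ n then (1 : ℝ) else 0 := fun n => by split_ifs <;> simp
        simp only [hsq]
        rw [sum_Icc_ite_dvd_one (hP p hp).pos, if_pos trivial]
        have := Nat.cast_div_le (α := ℝ) (m := N) (n := p)
        have h2 : (0 : ℝ) ≤ N * ((1 / p : ℝ) * (1 / p)) := by positivity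
        rw [div_eq_mul_one_div] at this
        linarith
      · have hcop := (Nat.coprime_primes (hP p hp) (hP q hq)).2 hpq
        have hmul : ∀ n, (if p ∣ n then (1 : ℝ) else 0) * (if q ∣ n then (1 : ℝ) else 0) =
            if p * q ∣ n then (1 : ℝ) else 0 := fun n => by
          have : p * q ∣ n ↔ p ∣ n ∧ q ∣ n :=
            ⟨fun h => ⟨dvd_of_mul_right_dvd h, dvd_of_mul_left_dvd h⟩,
              fun h => hcop.mul_dvd_of_dvd_of_dvd h.1 h.2⟩
          by_cases h1 : p ∣ n <;> by_cases h2 : q ∣ n <;> simp [this, h1, h2]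
        simp only [hmul]
        rw [sum_Icc_ite_dvd_one (Nat.mul_pos (hP p hp).pos (hP q hq).pos), if_neg hpq, add_zero]
        refine Nat.cast_div_le.trans (le_of_eq ?_)
        push_cast
        rw [one_div_mul_one_div, mul_one_div]
    refine (Finset.sum_le_sum fun p hp => Finset.sum_le_sum fun q hq => pair p hp q hq).trans
      (le_of_eq ?_)
    simp only [Finset.sum_add_distrib, Finset.sum_ite_eq, ← Finset.mul_sum]
    rw [Finset.sum_congr rfl fun p hp => if_pos hp, ← Finset.sum_mul, ← Finset.mul_sum, ← hL]
    ring
  have expand : ∑ n ∈ Finset.Icc 1 N, ((∑ p ∈ P, if p ∣ n then (1 : ℝ) else 0) - L) ^ 2 =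
      ∑ n ∈ Finset.Icc 1 N, (∑ p ∈ P, if p ∣ n then (1 : ℝ) else 0) ^ 2 -
        2 * L * ∑ n ∈ Finset.Icc 1 N, (∑ p ∈ P, if p ∣ n then (1 : ℝ) else 0) + N * L ^ 2 := by
    have : (N : ℝ) * L ^ 2 = ∑ n ∈ Finset.Icc 1 N, L ^ 2 := by simp
    rw [this, Finset.mul_sum, ← Finset.sum_sub_distrib, ← Finset.sum_add_distrib]
    exact Finset.sum_congr rfl fun n _ => by ring
  rw [expand]
  nlinarith [mul_le_mul_of_nonneg_left first hL0]

/-- Mean absolute deviation of the number of prime divisors taken from `P`. -/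
lemma sum_abs_card_dvd_sub_le (P : Finset ℕ) (hP : ∀ p ∈ P, p.Prime) {N : ℕ}
    (hN : 2 * P.card ≤ N) {δ : ℝ} (hδ : 0 < δ) (hL : 0 < ∑ p ∈ P, (1 / p : ℝ)) :
    ∑ n ∈ Finset.Icc 1 N,
        |(∑ p ∈ P, if p ∣ n then (1 : ℝ) else 0) - ∑ p ∈ P, (1 / p : ℝ)| ≤
      N / δ + N * δ * ∑ p ∈ P, (1 / p : ℝ) := by
  have tk := turan_kubilius P hP N
  set L : ℝ := ∑ p ∈ P, (1 / p : ℝ)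
  have hN' : (2 * P.card : ℝ) ≤ N := by exact_mod_cast hN
  have amgm : ∀ x : ℝ, |x| ≤ x ^ 2 / (2 * δ * L) + δ * L / 2 := by
    intro x
    have hpos : 0 < δ * L := mul_pos hδ hL
    rw [← sub_nonneg, ← sq_abs x]
    have : |x| ^ 2 / (2 * δ * L) + δ * L / 2 - |x| = (|x| - δ * L) ^ 2 / (2 * δ * L) := by
      field_simp
      ring
    rw [this]
    positivity
  refine (Finset.sum_le_sum fun n _ => amgm _).trans ?_
  rw [Finset.sum_add_distrib, ← Finset.sum_div]
  simp only [Finset.sum_const, Nat.card_Icc, add_tsub_cancel_right, nsmul_eq_mul]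
  have h1 : (∑ n ∈ Finset.Icc 1 N, ((∑ p ∈ P, if p ∣ n then (1 : ℝ) else 0) - L) ^ 2) /
      (2 * δ * L) ≤ N / δ := by
    rw [div_le_div_iff₀ (by positivity) hδ]
    have : (N + 2 * P.card : ℝ) * L * δ ≤ N * (2 * δ * L) := by
      have := mul_le_mul_of_nonneg_right hN' (mul_pos hδ hL).le
      linarith
    exact (mul_le_mul_of_nonneg_right tk hδ.le).trans this
  have h2 : 0 ≤ N * δ * L := by positivity
  linarith

/-- The bilinear sum over a set `P` of integers `≥ D` is controlled by the pair correlations. -/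
lemma norm_bilinear_sum_le {a u : ℕ → ℂ} {C δ : ℝ} (ha : ∀ n, ‖a n‖ ≤ C)
    (hu : ∀ n, ‖u n‖ ≤ 1) (hδ : 0 < δ) (P : Finset ℕ) {D : ℕ} (N : ℕ) (hD : 0 < D)
    (hP : ∀ p ∈ P, D ≤ p)
    (hcorr : ∀ p ∈ P, ∀ q ∈ P, p ≠ q →
      ‖∑ m ∈ Finset.Icc 1 (min (N / p) (N / q)),
        a (p * m) * (starRingEnd ℂ) (a (q * m))‖ ≤ δ ^ 2 * (N / D)) :
    ‖∑ p ∈ P, ∑ m ∈ Finset.Icc 1 (N / p), a (p * m) * (u p * u m)‖ ≤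
      N / D * (δ * P.card + C ^ 2 / (2 * δ)) := by
  have hC : 0 ≤ C := (norm_nonneg _).trans (ha 0)
  have hdiv : ∀ p ∈ P, N / p ≤ N / D := fun p hp => Nat.div_le_div_left (hP p hp) hD
  have hND : ((N / D : ℕ) : ℝ) ≤ N / D := Nat.cast_div_le
  set F : ℕ → ℂ := fun m => ∑ p ∈ P, if m ≤ N / p then u p * a (p * m) else 0 with hF
  have swap : ∑ p ∈ P, ∑ m ∈ Finset.Icc 1 (N / p), a (p * m) * (u p * u m) =
      ∑ m ∈ Finset.Icc 1 (N / D), u m * F m := by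
    simp only [hF, Finset.mul_sum]
    rw [Finset.sum_comm]
    refine Finset.sum_congr rfl fun p hp => ?_
    simp only [mul_ite, mul_zero]
    rw [← Finset.sum_filter]
    refine Finset.sum_congr ?_ fun m _ => by ring
    ext m
    have := hdiv p hp
    simp only [Finset.mem_Icc, Finset.mem_filter]
    omega
  have corr : ∀ p ∈ P, ∀ q ∈ P, ‖∑ m ∈ Finset.Icc 1 (N / D),
      (if m ≤ N / p then u p * a (p * m) else 0) *
        (starRingEnd ℂ) (if m ≤ N / q then u q * a (q * m) else 0)‖ ≤
      δ ^ 2 * (N / D) + if p = q then C ^ 2 * (N / D) else 0 := by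
    intro p hp q hq
    have key : ∑ m ∈ Finset.Icc 1 (N / D),
        (if m ≤ N / p then u p * a (p * m) else 0) *
          (starRingEnd ℂ) (if m ≤ N / q then u q * a (q * m) else 0) =
        u p * (starRingEnd ℂ) (u q) * ∑ m ∈ Finset.Icc 1 (min (N / p) (N / q)),
          a (p * m) * (starRingEnd ℂ) (a (q * m)) := by
      have hset : Finset.Icc 1 (min (N / p) (N / q)) =
          (Finset.Icc 1 (N / D)).filter (fun m => m ≤ N / p ∧ m ≤ N / q) := by
        ext m
        have := hdiv p hp
        simp only [Finset.mem_Icc, Finset.mem_filter]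
        omega
      rw [hset, Finset.sum_filter, Finset.mul_sum]
      refine Finset.sum_congr rfl fun m _ => ?_
      by_cases h1 : m ≤ N / p <;> by_cases h2 : m ≤ N / q <;> simp [h1, h2]
      ring
    rw [key, norm_mul, norm_mul, RCLike.norm_conj]
    have hle : ‖u p‖ * ‖u q‖ ≤ 1 := mul_le_one₀ (hu p) (norm_nonneg _) (hu q)
    refine (mul_le_of_le_one_left (norm_nonneg _) hle).trans ?_
    by_cases hpq : p = q
    · subst hpq
      rw [if_pos rfl, min_self]
      have : ‖∑ m ∈ Finset.Icc 1 (N / p), a (p * m) * (starRingEnd ℂ) (a (p * m))‖ ≤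
          ∑ m ∈ Finset.Icc 1 (N / p), C ^ 2 := by
        refine norm_sum_le_of_le _ fun m _ => ?_
        rw [norm_mul, RCLike.norm_conj, sq]
        exact mul_le_mul (ha _) (ha _) (norm_nonneg _) hC
      simp only [Finset.sum_const, Nat.card_Icc, add_tsub_cancel_right, nsmul_eq_mul] at this
      have h3 : ((N / p : ℕ) : ℝ) ≤ N / D := (Nat.cast_le.2 (hdiv p hp)).trans hND
      have h4 := mul_le_mul_of_nonneg_right h3 (sq_nonneg C)
      have h5 : 0 ≤ δ ^ 2 * (N / D : ℝ) := by positivity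
      linarith
    · rw [if_neg hpq, add_zero]
      exact hcorr p hp q hq hpq
  have sqsum : ∑ m ∈ Finset.Icc 1 (N / D), ‖F m‖ ^ 2 ≤
      N / D * (δ ^ 2 * P.card ^ 2 + C ^ 2 * P.card) := by
    have expand : ((∑ m ∈ Finset.Icc 1 (N / D), ‖F m‖ ^ 2 : ℝ) : ℂ) =
        ∑ p ∈ P, ∑ q ∈ P, ∑ m ∈ Finset.Icc 1 (N / D),
          (if m ≤ N / p then u p * a (p * m) else 0) *
            (starRingEnd ℂ) (if m ≤ N / q then u q * a (q * m) else 0) := by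
      push_cast
      simp only [← Complex.mul_conj', hF, map_sum, Finset.sum_mul_sum]
      rw [Finset.sum_comm]
      simp only [Finset.sum_comm (s := Finset.Icc 1 (N / D))]
    have hnonneg : 0 ≤ ∑ m ∈ Finset.Icc 1 (N / D), ‖F m‖ ^ 2 :=
      Finset.sum_nonneg fun m _ => sq_nonneg _
    rw [← Complex.norm_of_nonneg hnonneg, expand]
    refine (norm_sum_le_of_le P fun p hp => norm_sum_le_of_le P fun q hq =>
      corr p hp q hq).trans (le_of_eq ?_)
    simp only [Finset.sum_add_distrib, Finset.sum_ite_eq, Finset.sum_const, nsmul_eq_mul]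
    rw [Finset.sum_congr rfl fun p hp => if_pos hp]
    simp only [Finset.sum_const, nsmul_eq_mul]
    ring
  rw [swap]
  refine abs_le_of_sq_le_sq' ?_ (by positivity) |>.2
  have h1 : ‖∑ m ∈ Finset.Icc 1 (N / D), u m * F m‖ ≤ ∑ m ∈ Finset.Icc 1 (N / D), ‖F m‖ :=
    norm_sum_le_of_le _ fun m _ => by
      rw [norm_mul]
      exact mul_le_of_le_one_left (norm_nonneg _) (hu m)
  have h2 := sq_sum_le_card_mul_sum_sq (s := Finset.Icc 1 (N / D)) (f := fun m => ‖F m‖)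
  simp only [Nat.card_Icc, add_tsub_cancel_right] at h2
  calc ‖∑ m ∈ Finset.Icc 1 (N / D), u m * F m‖ ^ 2
      ≤ (∑ m ∈ Finset.Icc 1 (N / D), ‖F m‖) ^ 2 := by gcongr
    _ ≤ (N / D) * (N / D * (δ ^ 2 * P.card ^ 2 + C ^ 2 * P.card)) :=
        h2.trans (mul_le_mul hND sqsum (Finset.sum_nonneg fun m _ => sq_nonneg _)
          (by positivity))
    _ ≤ (N / D) * (N / D * (δ * P.card + C ^ 2 / (2 * δ)) ^ 2) := by
        gcongr
        have : (δ * P.card + C ^ 2 / (2 * δ)) ^ 2 =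
            δ ^ 2 * P.card ^ 2 + C ^ 2 * P.card + (C ^ 2 / (2 * δ)) ^ 2 := by
          field_simp
          ring
        rw [this]
        linarith [sq_nonneg (C ^ 2 / (2 * δ))]
    _ = (N / D * (δ * P.card + C ^ 2 / (2 * δ))) ^ 2 := by ring

/-- The bilinear sum over an arbitrary set of primes, by dyadic decomposition. -/
lemma norm_bilinear_sum_le_dyadic {a u : ℕ → ℂ} {C δ : ℝ} (ha : ∀ n, ‖a n‖ ≤ C)
    (hu : ∀ n, ‖u n‖ ≤ 1) (hδ : 0 < δ) (P : Finset ℕ) (N : ℕ) (hP : ∀ p ∈ P, 0 < p)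
    (hcorr : ∀ p ∈ P, ∀ q ∈ P, p ≠ q →
      ‖∑ m ∈ Finset.Icc 1 (min (N / p) (N / q)),
        a (p * m) * (starRingEnd ℂ) (a (q * m))‖ ≤ δ ^ 2 * (min (N / p) (N / q) : ℕ)) :
    ‖∑ p ∈ P, ∑ m ∈ Finset.Icc 1 (N / p), a (p * m) * (u p * u m)‖ ≤
      N * (2 * δ * (∑ p ∈ P, (1 / p : ℝ)) + C ^ 2 / δ) := by
  classical
  have hmaps : ∀ p ∈ P, Nat.log 2 p ∈ P.image (Nat.log 2) :=
    fun p hp => Finset.mem_image_of_mem _ hp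
  rw [← Finset.sum_fiberwise_of_maps_to hmaps, ← Finset.sum_fiberwise_of_maps_to hmaps]
  set J := P.image (Nat.log 2)
  have block : ∀ j ∈ J, ‖∑ p ∈ P with Nat.log 2 p = j,
      ∑ m ∈ Finset.Icc 1 (N / p), a (p * m) * (u p * u m)‖ ≤
      N * (2 * δ * (∑ p ∈ P with Nat.log 2 p = j, (1 / p : ℝ)) +
        C ^ 2 / (2 * δ) * (1 / 2) ^ j) := by
    intro j _
    have hlow : ∀ p ∈ P.filter (fun p => Nat.log 2 p = j), 2 ^ j ≤ p := by
      intro p hp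
      rw [Finset.mem_filter] at hp
      rw [← hp.2]
      exact Nat.pow_log_le_self 2 (hP p hp.1).ne'
    have hb := norm_bilinear_sum_le ha hu hδ (P.filter (fun p => Nat.log 2 p = j)) N
      (by positivity : 0 < 2 ^ j) hlow (by
        intro p hp q hq hpq
        refine (hcorr p (Finset.mem_filter.1 hp).1 q (Finset.mem_filter.1 hq).1 hpq).trans ?_
        gcongr
        exact (Nat.cast_le.2 ((min_le_left _ _).trans
          (Nat.div_le_div_left (hlow p hp) (by positivity)))).trans Nat.cast_div_le)
    refine hb.trans ?_
    have hcard : ((P.filter (fun p => Nat.log 2 p = j)).card : ℝ) / 2 ^ j ≤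
        2 * ∑ p ∈ P with Nat.log 2 p = j, (1 / p : ℝ) := by
      rw [Finset.card_eq_sum_ones, Nat.cast_sum, Finset.sum_div, Finset.mul_sum]
      refine Finset.sum_le_sum fun p hp => ?_
      rw [Finset.mem_filter] at hp
      have hlt : p < 2 ^ (j + 1) := by
        rw [← hp.2]
        exact Nat.lt_pow_succ_log_self one_lt_two p
      have hlt' : (p : ℝ) ≤ 2 ^ j * 2 := by
        rw [← pow_succ]
        exact_mod_cast hlt.le
      have hp0 : (0 : ℝ) < p := by exact_mod_cast hP p hp.1
      rw [mul_one_div, div_le_div_iff₀ (by positivity) hp0]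
      push_cast
      linarith
    have h1 := mul_le_mul_of_nonneg_left hcard (by positivity : 0 ≤ N * δ)
    rw [one_div_pow]
    push_cast
    calc _ = N * δ * (((P.filter (fun p => Nat.log 2 p = j)).card : ℝ) / 2 ^ j) +
          N * (C ^ 2 / (2 * δ) * (1 / 2 ^ j)) := by ring
      _ ≤ _ := by linarith
  refine (norm_sum_le_of_le J block).trans ?_
  rw [← Finset.mul_sum, Finset.sum_add_distrib, ← Finset.mul_sum, ← Finset.mul_sum]
  have hgeom : ∑ j ∈ J, (1 / 2 : ℝ) ^ j ≤ 2 :=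
    (summable_geometric_two.sum_le_tsum J fun j _ => by positivity).trans_eq tsum_geometric_two
  have : C ^ 2 / (2 * δ) * ∑ j ∈ J, (1 / 2 : ℝ) ^ j ≤ C ^ 2 / δ := by
    refine (mul_le_mul_of_nonneg_left hgeom (by positivity)).trans_eq ?_
    field_simp
  gcongr

/-- Replacing `u (p * m)` by `u p * u m` costs little when all primes of `P` are large. -/
lemma norm_sum_sub_bilinear_le {a u : ℕ → ℂ} {C δ : ℝ} (ha : ∀ n, ‖a n‖ ≤ C)
    (hu : ∀ n, ‖u n‖ ≤ 1) (hmul : ∀ m n : ℕ, Nat.Coprime m n → u (m * n) = u m * u n)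
    (P : Finset ℕ) (N : ℕ) (hP : ∀ p ∈ P, p.Prime) (hδP : ∀ p ∈ P, (1 / p : ℝ) ≤ δ) :
    ‖∑ p ∈ P, ∑ m ∈ Finset.Icc 1 (N / p),
      (a (p * m) * u (p * m) - a (p * m) * (u p * u m))‖ ≤
      N * (2 * C * δ * ∑ p ∈ P, (1 / p : ℝ)) := by
  have hC : 0 ≤ C := (norm_nonneg _).trans (ha 0)
  rw [Finset.mul_sum, Finset.mul_sum]
  refine norm_sum_le_of_le P fun p hp => ?_
  have hp0 := (hP p hp).pos
  have term : ∀ m ∈ Finset.Icc 1 (N / p),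
      ‖a (p * m) * u (p * m) - a (p * m) * (u p * u m)‖ ≤
        2 * C * if p ∣ m then (1 : ℝ) else 0 := by
    intro m _
    by_cases hd : p ∣ m
    · rw [if_pos hd, ← mul_sub, norm_mul, mul_one, mul_comm 2 C]
      refine mul_le_mul (ha _) ?_ (norm_nonneg _) hC
      refine (norm_sub_le _ _).trans ?_
      rw [norm_mul]
      have := mul_le_one₀ (hu p) (norm_nonneg _) (hu m)
      linarith [hu (p * m)]
    · rw [hmul p m ((Nat.Prime.coprime_iff_not_dvd (hP p hp)).2 hd)]
      simp [hd]
  refine (norm_sum_le_of_le _ term).trans ?_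
  rw [← Finset.mul_sum, sum_Icc_ite_dvd_one hp0]
  have h1 : ((N / p / p : ℕ) : ℝ) ≤ N * (1 / p) * (1 / p) := by
    rw [mul_one_div, mul_one_div]
    exact Nat.cast_div_le.trans (by gcongr; exact Nat.cast_div_le)
  calc 2 * C * ((N / p / p : ℕ) : ℝ) ≤ 2 * C * (N * (1 / p) * (1 / p)) := by gcongr
    _ ≤ 2 * C * (N * δ * (1 / p)) := by
        gcongr
        exact hδP p hp
    _ = N * (2 * C * δ * (1 / p)) := by ring

lemma exists_finset_primes_le_sum_one_div (K : ℕ) (B : ℝ) :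
    ∃ P : Finset ℕ, (∀ p ∈ P, p.Prime ∧ K ≤ p) ∧ B ≤ ∑ p ∈ P, (1 / p : ℝ) := by
  classical
  set f : ℕ → ℝ := Set.indicator {p : ℕ | p.Prime} (fun n : ℕ => (1 : ℝ) / n) with hf
  have hnn : ∀ n, 0 ≤ f n := fun n => Set.indicator_nonneg (fun x _ => by positivity) n
  have ht := (not_summable_iff_tendsto_nat_atTop_of_nonneg hnn).1
    not_summable_one_div_on_primes
  obtain ⟨M, hM, hKM⟩ :=
    ((ht.eventually_ge_atTop (B + ∑ i ∈ Finset.range K, f i)).and (eventually_ge_atTop K)).exists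
  refine ⟨(Finset.Ico K M).filter Nat.Prime, fun p hp => ?_, ?_⟩
  · simp only [Finset.mem_filter, Finset.mem_Ico] at hp
    exact ⟨hp.2, hp.1.1⟩
  · have hsum : ∑ p ∈ (Finset.Ico K M).filter Nat.Prime, (1 / p : ℝ) =
        ∑ i ∈ Finset.Ico K M, f i := by
      rw [Finset.sum_filter]
      exact Finset.sum_congr rfl fun i _ => by simp [hf, Set.indicator_apply]
    rw [hsum, Finset.sum_Ico_eq_sub _ hKM]
    linarith

/-- A finite form of the Bourgain–Sarnak–Ziegler criterion. -/
lemma norm_sum_mul_le_of_correlation {a u : ℕ → ℂ} {C δ : ℝ} (ha : ∀ n, ‖a n‖ ≤ C)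
    (hu : ∀ n, ‖u n‖ ≤ 1) (hmul : ∀ m n : ℕ, Nat.Coprime m n → u (m * n) = u m * u n)
    (hδ : 0 < δ) (P : Finset ℕ) {N : ℕ} (hP : ∀ p ∈ P, p.Prime)
    (hδP : ∀ p ∈ P, (1 / p : ℝ) ≤ δ) (hN : 2 * P.card ≤ N)
    (hL : 1 / δ ^ 2 ≤ ∑ p ∈ P, (1 / p : ℝ))
    (hcorr : ∀ p ∈ P, ∀ q ∈ P, p ≠ q →
      ‖∑ m ∈ Finset.Icc 1 (min (N / p) (N / q)),
        a (p * m) * (starRingEnd ℂ) (a (q * m))‖ ≤ δ ^ 2 * (min (N / p) (N / q) : ℕ)) :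
    ‖∑ n ∈ Finset.Icc 1 N, a n * u n‖ ≤ N * (δ * (C ^ 2 + 4 * C + 2)) := by
  have hC : 0 ≤ C := (norm_nonneg _).trans (ha 0)
  have hL0 : 0 < ∑ p ∈ P, (1 / p : ℝ) := lt_of_lt_of_le (by positivity) hL
  have dev := sum_abs_card_dvd_sub_le P hP hN hδ hL0
  have bil := norm_bilinear_sum_le_dyadic ha hu hδ P N (fun p hp => (hP p hp).pos) hcorr
  have err := norm_sum_sub_bilinear_le ha hu hmul P N hP hδP
  set L : ℝ := ∑ p ∈ P, (1 / p : ℝ)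
  have weighted : ∑ n ∈ Finset.Icc 1 N,
      a n * u n * ((∑ p ∈ P, if p ∣ n then (1 : ℝ) else 0 : ℝ) : ℂ) =
      ∑ p ∈ P, ∑ m ∈ Finset.Icc 1 (N / p),
        (a (p * m) * u (p * m) - a (p * m) * (u p * u m)) +
      ∑ p ∈ P, ∑ m ∈ Finset.Icc 1 (N / p), a (p * m) * (u p * u m) := by
    rw [← Finset.sum_add_distrib]
    push_cast
    simp only [Finset.mul_sum]
    rw [Finset.sum_comm]
    refine Finset.sum_congr rfl fun p hp => ?_
    rw [← Finset.sum_add_distrib]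
    simp only [sub_add_cancel, apply_ite (Complex.ofReal), Complex.ofReal_one,
      Complex.ofReal_zero, mul_ite, mul_one, mul_zero]
    exact sum_Icc_ite_dvd (hP p hp).pos N fun n => a n * u n
  have centred : ‖∑ n ∈ Finset.Icc 1 N,
      a n * u n * (((∑ p ∈ P, if p ∣ n then (1 : ℝ) else 0) - L : ℝ) : ℂ)‖ ≤
      C * (N / δ + N * δ * L) := by
    refine le_trans ?_ (mul_le_mul_of_nonneg_left dev hC)
    rw [Finset.mul_sum]
    refine norm_sum_le_of_le _ fun n _ => ?_
    rw [norm_mul, Complex.norm_real, Real.norm_eq_abs, norm_mul]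
    refine mul_le_mul_of_nonneg_right ?_ (abs_nonneg _)
    simpa using mul_le_mul (ha n) (hu n) (norm_nonneg _) hC
  have split : (L : ℂ) * ∑ n ∈ Finset.Icc 1 N, a n * u n =
      ∑ n ∈ Finset.Icc 1 N,
        a n * u n * ((∑ p ∈ P, if p ∣ n then (1 : ℝ) else 0 : ℝ) : ℂ) -
      ∑ n ∈ Finset.Icc 1 N,
        a n * u n * (((∑ p ∈ P, if p ∣ n then (1 : ℝ) else 0) - L : ℝ) : ℂ) := by
    rw [← Finset.sum_sub_distrib, Finset.mul_sum]
    refine Finset.sum_congr rfl fun n _ => ?_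
    rw [Complex.ofReal_sub]
    ring
  have total : L * ‖∑ n ∈ Finset.Icc 1 N, a n * u n‖ ≤
      N * (2 * C * δ * L) + N * (2 * δ * L + C ^ 2 / δ) + C * (N / δ + N * δ * L) := by
    rw [← Complex.norm_of_nonneg hL0.le, ← norm_mul, Complex.norm_of_nonneg hL0.le, split,
      weighted]
    exact (norm_sub_le _ _).trans
      (add_le_add ((norm_add_le _ _).trans (add_le_add err bil)) centred)
  have hinv : 1 / δ ≤ δ * L := by
    calc 1 / δ = δ * (1 / δ ^ 2) := by field_simp
      _ ≤ δ * L := by gcongr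
  refine le_of_mul_le_mul_left (total.trans ?_) hL0
  have h1 : N * (C ^ 2 + C) * (1 / δ) ≤ N * (C ^ 2 + C) * (δ * L) := by gcongr
  calc _ = N * (C ^ 2 + C) * (1 / δ) + N * (3 * C + 2) * (δ * L) := by ring
    _ ≤ N * (C ^ 2 + C) * (δ * L) + N * (3 * C + 2) * (δ * L) := by gcongr
    _ = _ := by ring

/-- A limsup bound on averages of a bounded sequence gives an eventual bound on its sums. -/
lemma eventually_norm_sum_le_of_limsup_lt {b : ℕ → ℂ} {B c : ℝ} (hb : ∀ n, ‖b n‖ ≤ B)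
    (hlim : limsup (fun N : ℕ => ‖(N : ℂ)⁻¹ * ∑ n ∈ Finset.Icc 1 N, b n‖) atTop < c) :
    ∀ᶠ N : ℕ in atTop, ‖∑ n ∈ Finset.Icc 1 N, b n‖ ≤ c * N := by
  have hbdd : IsBoundedUnder (· ≤ ·) atTop
      (fun N : ℕ => ‖(N : ℂ)⁻¹ * ∑ n ∈ Finset.Icc 1 N, b n‖) := by
    refine isBoundedUnder_of_eventually_le (a := B) ?_
    filter_upwards [eventually_gt_atTop 0] with N hN
    have hN' : (0 : ℝ) < N := by exact_mod_cast hN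
    rw [norm_mul, norm_inv, Complex.norm_natCast, inv_mul_le_iff₀ hN']
    refine (norm_sum_le_of_le _ fun n _ => hb n).trans_eq ?_
    simp
  filter_upwards [eventually_lt_of_limsup_lt hlim hbdd, eventually_gt_atTop 0] with N h1 hN
  have hN' : (0 : ℝ) < N := by exact_mod_cast hN
  rw [norm_mul, norm_inv, Complex.norm_natCast, inv_mul_lt_iff₀ hN'] at h1
  linarith

/-- **The Bourgain–Sarnak–Ziegler criterion** (Proposition 2.1). If `(a_n)` is a bounded
sequence of complex numbers such that for every `ε > 0` there exists `K` with
`limsup_N |(1/N) ∑_{n ≤ N} a_{rn} conj(a_{sn})| ≤ ε` for all distinct primes `r, s ≥ K`,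
then `(1/N) ∑_{n ≤ N} a_n u(n) → 0` for every multiplicative `u : ℕ → ℂ`, `|u| ≤ 1`. -/
theorem bourgain_sarnak_ziegler_criterion
    (a : ℕ → ℂ) (C : ℝ) (ha_bd : ∀ n, ‖a n‖ ≤ C)
    (h : ∀ ε > (0:ℝ), ∃ K : ℕ, ∀ r s : ℕ, r.Prime → s.Prime → r ≠ s → K ≤ r → K ≤ s →
      Filter.limsup (fun N : ℕ =>
        ‖(N : ℂ)⁻¹ * ∑ n ∈ Finset.Icc 1 N, a (r * n) * (starRingEnd ℂ) (a (s * n))‖)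
        atTop ≤ ε)
    (u : ℕ → ℂ) (hu_mult : ∀ m n : ℕ, Nat.Coprime m n → u (m * n) = u m * u n)
    (hu_bd : ∀ n, ‖u n‖ ≤ 1) :
    Tendsto (fun N : ℕ => (N : ℂ)⁻¹ * ∑ n ∈ Finset.Icc 1 N, a n * u n) atTop (nhds 0) := by
  have hC : 0 ≤ C := (norm_nonneg _).trans (ha_bd 0)
  rw [Metric.tendsto_atTop']
  intro η hη
  set δ : ℝ := η / (2 * (C ^ 2 + 4 * C + 2)) with hδdef
  have hδ : 0 < δ := by positivity
  obtain ⟨K, hK⟩ := h (δ ^ 2 / 2) (by positivity)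
  obtain ⟨K', hK'⟩ := exists_nat_ge (1 / δ)
  obtain ⟨P, hP, hL⟩ := exists_finset_primes_le_sum_one_div (max K K') (1 / δ ^ 2)
  have hcorr : ∀ᶠ N : ℕ in atTop, ∀ p ∈ P, ∀ q ∈ P, p ≠ q →
      ‖∑ m ∈ Finset.Icc 1 (min (N / p) (N / q)),
        a (p * m) * (starRingEnd ℂ) (a (q * m))‖ ≤ δ ^ 2 * (min (N / p) (N / q) : ℕ) := by
    rw [Filter.eventually_all_finset]
    intro p hp
    rw [Filter.eventually_all_finset]
    intro q hq
    by_cases hpq : p = q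
    · simp [hpq]
    have hlim := hK p q (hP p hp).1 (hP q hq).1 hpq ((le_max_left _ _).trans (hP p hp).2)
      ((le_max_left _ _).trans (hP q hq).2)
    have hev := eventually_norm_sum_le_of_limsup_lt (B := C * C) (fun n => by
      rw [norm_mul, RCLike.norm_conj]
      exact mul_le_mul (ha_bd _) (ha_bd _) (norm_nonneg _) hC)
      (hlim.trans_lt (half_lt_self (by positivity : 0 < δ ^ 2)))
    have hmin : Tendsto (fun N : ℕ => min (N / p) (N / q)) atTop atTop :=
      tendsto_atTop.2 fun b => by
        filter_upwards [(Nat.tendsto_div_const_atTop (hP p hp).1.ne_zero).eventually_ge_atTop b,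
          (Nat.tendsto_div_const_atTop (hP q hq).1.ne_zero).eventually_ge_atTop b] with N h1 h2
          using le_min h1 h2
    filter_upwards [hmin.eventually hev] with N hN _ using hN
  have hδP : ∀ p ∈ P, (1 / p : ℝ) ≤ δ := by
    intro p hp
    have hp0 : (0 : ℝ) < p := by exact_mod_cast (hP p hp).1.pos
    have : (K' : ℝ) ≤ p := by exact_mod_cast (le_max_right _ _).trans (hP p hp).2
    rw [one_div_le hp0 hδ]
    exact hK'.trans this
  obtain ⟨N₀, hN₀⟩ := eventually_atTop.1
    (hcorr.and ((eventually_ge_atTop (2 * P.card)).and (eventually_gt_atTop 0)))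
  refine ⟨N₀, fun N hN => ?_⟩
  obtain ⟨hc, hcard, hpos⟩ := hN₀ N hN.le
  have hN' : (0 : ℝ) < N := by exact_mod_cast hpos
  have key := norm_sum_mul_le_of_correlation ha_bd hu_bd hu_mult hδ P
    (fun p hp => (hP p hp).1) hδP hcard hL hc
  rw [dist_zero_right, norm_mul, norm_inv, Complex.norm_natCast, inv_mul_lt_iff₀ hN']
  refine key.trans_lt ?_
  have : δ * (C ^ 2 + 4 * C + 2) = η / 2 := by
    rw [hδdef]
    field_simp
  rw [this]
  gcongr
  exact half_lt_self hη
end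

section
/- Let T be an ergodic automorphism of a standard Borel probability space (X,μ), let k ≥ 1, and let f₀, f₁, …, f_k : X → ℂ be measurable functions with |f_j| = 1 μ-a.e. for every j, satisfying f_j∘T = f_{j-1}·f_j μ-a.e. for each 1 ≤ j ≤ k, where f₀ is the constant function with value c ∈ ℂ, |c| = 1 and cⁿ ≠ 1 for every integer n ≠ 0. Then ∫_X f_k dμ = 0. -/
open MeasureTheory Filter

open scoped ComplexConjugate

section QuasiEigenfunction

variable {X : Type*} [MeasurableSpace X] {μ : Measure X} {T : X → X}

/-- A measurable function of modulus one that is orthogonal to its translates under all positive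
iterates of a measure-preserving map
has integral zero. -/
theorem integral_eq_zero_of_integral_iterate_mul_conj_eq_zero [IsProbabilityMeasure μ]
    (hT : MeasurePreserving T μ μ) {f : X → ℂ} (hf : Measurable f)
    (hmod : ∀ᵐ x ∂μ, ‖f x‖ = 1)
    (horth : ∀ n : ℕ, 0 < n → ∫ x, f (T^[n] x) * conj (f x) ∂μ = 0) :
    ∫ x, f x ∂μ = 0 := by
  have hmeas (n : ℕ) : Measurable fun x => f (T^[n] x) := hf.comp (hT.iterate n).measurable
  have hmod' (n : ℕ) : ∀ᵐ x ∂μ, ‖f (T^[n] x)‖ = 1 :=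
    (hT.iterate n).quasiMeasurePreserving.ae hmod
  have hLp (n : ℕ) : MemLp (fun x => f (T^[n] x)) 2 μ :=
    MemLp.of_bound (hmeas n).aestronglyMeasurable 1 ((hmod' n).mono fun x hx => hx.le)
  have hone : MemLp (fun _ : X => (1 : ℂ)) 2 μ := memLp_const 1
  let v (n : ℕ) : Lp ℂ 2 μ := (hLp n).toLp
  have hinner (m n : ℕ) :
      inner ℂ (v m) (v n) = ∫ x, f (T^[n] x) * conj (f (T^[m] x)) ∂μ := by
    rw [L2.inner_def]
    apply integral_congr_ae
    filter_upwards [(hLp m).coeFn_toLp, (hLp n).coeFn_toLp] with x hm hn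
    simp only [v, hm, hn, RCLike.inner_apply]
  have hzero {m n : ℕ} (h : m < n) : inner ℂ (v m) (v n) = 0 := by
    obtain ⟨d, rfl⟩ := Nat.exists_eq_add_of_lt h
    rw [hinner, ← horth (d + 1) d.succ_pos]
    have hmap := integral_map (μ := μ) (hT.iterate m).measurable.aemeasurable
      (f := fun x => f (T^[d + 1] x) * conj (f x))
      ((hmeas _).mul (Complex.continuous_conj.measurable.comp hf)).aestronglyMeasurable
    rw [(hT.iterate m).map_eq] at hmap
    rw [hmap]
    simp only [← Function.iterate_add_apply]
    rw [show m + d + 1 = d + 1 + m by omega]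
  have horthonormal : Orthonormal ℂ v := by
    rw [orthonormal_iff_ite]
    intro m n
    rcases lt_trichotomy m n with h | rfl | h
    · rw [if_neg h.ne, hzero h]
    · rw [if_pos rfl, hinner, integral_congr_ae (g := fun _ => (1 : ℂ))]
      · simp
      · filter_upwards [hmod' m] with x hx
        simp [Complex.mul_conj, Complex.normSq_eq_norm_sq, hx]
    · rw [if_neg h.ne', ← inner_conj_symm, hzero h, map_zero]
  have hconst (n : ℕ) : inner ℂ (hone.toLp) (v n) = ∫ x, f x ∂μ := by
    have hmap := integral_map (μ := μ) (hT.iterate n).measurable.aemeasurable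
      hf.aestronglyMeasurable
    rw [(hT.iterate n).map_eq] at hmap
    rw [hmap, L2.inner_def]
    apply integral_congr_ae
    filter_upwards [(hLp n).coeFn_toLp] with x hn
    simp [v, hn]
  have hsum := horthonormal.inner_products_summable (hone.toLp)
  simp only [norm_inner_symm (v _), hconst, summable_const_iff] at hsum
  simpa using hsum

/-- Iterating an eigenfunction equation. -/
theorem ae_iterate_eq_pow_mul (hT : MeasurePreserving T μ μ) {f : X → ℂ} {c : ℂ}
    (hf : ∀ᵐ x ∂μ, f (T x) = c * f x) (n : ℕ) :
    ∀ᵐ x ∂μ, f (T^[n] x) = c ^ n * f x := by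
  induction n with
  | zero => simp
  | succ n ih =>
    filter_upwards [ih, (hT.iterate n).quasiMeasurePreserving.ae hf] with x hx hx'
    rw [Function.iterate_succ_apply', hx', hx, pow_succ', mul_assoc]

/-- A quasi-eigenfunction of positive level over a measure-preserving map, whose eigenvalue is not
a root of unity, has integral zero. -/
theorem integral_quasiEigenfunction_eq_zero [IsProbabilityMeasure μ]
    (hT : MeasurePreserving T μ μ) (k : ℕ) (f : ℕ → X → ℂ) (c : ℂ)
    (hmeas : ∀ j ≤ k + 1, Measurable (f j))
    (hmod : ∀ j ≤ k + 1, ∀ᵐ x ∂μ, ‖f j x‖ = 1)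
    (hc : ∀ n : ℕ, 0 < n → c ^ n ≠ 1)
    (hf0 : ∀ᵐ x ∂μ, f 0 x = c)
    (hchain : ∀ j ≤ k, ∀ᵐ x ∂μ, f (j + 1) (T x) = f j x * f (j + 1) x) :
    ∫ x, f (k + 1) x ∂μ = 0 := by
  have heigen : ∀ᵐ x ∂μ, f 1 (T x) = c * f 1 x := by
    filter_upwards [hf0, hchain 0 k.zero_le] with x h0 hx
    rw [hx, h0]
  induction k generalizing f c with
  | zero =>
    have hmap := integral_map (μ := μ) hT.measurable.aemeasurable
      (hmeas 1 le_rfl).aestronglyMeasurable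
    rw [hT.map_eq, integral_congr_ae heigen, integral_const_mul] at hmap
    have hmul : (1 - c) * ∫ x, f 1 x ∂μ = 0 := by linear_combination hmap
    refine (mul_eq_zero.mp hmul).resolve_left fun h => hc 1 one_pos ?_
    linear_combination -h
  | succ k ih =>
    refine integral_eq_zero_of_integral_iterate_mul_conj_eq_zero hT (hmeas _ le_rfl)
      (hmod _ le_rfl) fun n hn => ?_
    have hg0 : ∀ᵐ x ∂μ, f 1 (T^[n] x) * conj (f 1 x) = c ^ n := by
      filter_upwards [ae_iterate_eq_pow_mul hT heigen n, hmod 1 (by omega)] with x hx h1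
      rw [hx, mul_assoc, Complex.mul_conj, Complex.normSq_eq_norm_sq, h1]
      simp
    have hgchain (j : ℕ) (hj : j ≤ k) : ∀ᵐ x ∂μ,
        f (j + 2) (T^[n] (T x)) * conj (f (j + 2) (T x)) =
          (f (j + 1) (T^[n] x) * conj (f (j + 1) x)) *
            (f (j + 2) (T^[n] x) * conj (f (j + 2) x)) := by
      have hstep := hchain (j + 1) (by omega)
      filter_upwards [hstep, (hT.iterate n).quasiMeasurePreserving.ae hstep] with x hx hx'
      rw [← Function.iterate_succ_apply, Function.iterate_succ_apply', hx', hx, map_mul]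
      ring
    refine ih (fun j x => f (j + 1) (T^[n] x) * conj (f (j + 1) x)) (c ^ n)
      (fun j hj => ?_) (fun j hj => ?_) (fun m hm => ?_) hg0 hgchain ?_
    · exact ((hmeas _ (by omega)).comp (hT.iterate n).measurable).mul
        (Complex.continuous_conj.measurable.comp (hmeas _ (by omega)))
    · have hj' := hmod (j + 1) (by omega)
      filter_upwards [hj', (hT.iterate n).quasiMeasurePreserving.ae hj'] with x hx hx'
      rw [norm_mul, RCLike.norm_conj, hx, hx', one_mul]
    · rw [← pow_mul]
      exact hc _ (Nat.mul_pos hn hm)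
    · filter_upwards [hg0, hgchain 0 k.zero_le] with x h0 hx
      rw [← h0]
      exact hx

end QuasiEigenfunction

/-- **Lemma 3.2.** If `T` is an ergodic automorphism of a standard Borel probability space,
`k ≥ 1`, and `f₀, …, f_k` are measurable of modulus 1 a.e. with `f_j ∘ T = f_{j-1} · f_j`
a.e. for `1 ≤ j ≤ k`, where `f₀` is constant of irrational value `c` (|c| = 1, `cⁿ ≠ 1` for
all integers `n ≠ 0`), then `∫ f_k dμ = 0`. -/
theorem integral_eq_zero_of_irrational_quasiEigenfunction
    {X : Type*} [MeasurableSpace X] [StandardBorelSpace X]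
    (μ : Measure X) [IsProbabilityMeasure μ] (T : X ≃ᵐ X)
    (hTerg : Ergodic (⇑T) μ)
    (k : ℕ) (hk : 1 ≤ k)
    (f : ℕ → X → ℂ)
    (hmeas : ∀ j ≤ k, Measurable (f j))
    (hmod : ∀ j ≤ k, ∀ᵐ x ∂μ, ‖f j x‖ = 1)
    (c : ℂ) (hc : ‖c‖ = 1) (hcirr : ∀ n : ℤ, n ≠ 0 → c ^ n ≠ 1)
    (hf0 : ∀ x, f 0 x = c)
    (hchain : ∀ j, 1 ≤ j → j ≤ k → ∀ᵐ x ∂μ, f j (T x) = f (j - 1) x * f j x) :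
    (∫ x, f k x ∂μ) = 0 := by
  obtain ⟨k, rfl⟩ := Nat.exists_eq_add_of_le' hk
  refine integral_quasiEigenfunction_eq_zero hTerg.toMeasurePreserving k f c hmeas hmod
    (fun n hn => ?_) (ae_of_all _ hf0) fun j hj => hchain (j + 1) (by omega) (by omega)
  exact_mod_cast hcirr n (by omega)
end

section
/- Let T be an ergodic automorphism of a standard Borel probability space (X,μ), let k ≥ 1, and let f₀, f₁, …, f_k : X → ℂ be measurable with |f_j| = 1 μ-a.e. for every j, satisfying f_j∘T = f_{j-1}·f_j μ-a.e. for each 1 ≤ j ≤ k, where f₀ is the constant function with value c ∈ ℂ, |c| = 1. Let r ≥ 1 be an integer, and define g₀ := f_k and, for 1 ≤ j ≤ k, g_j := (g_{j-1}∘T^r)·conj(g_{j-1}). Then g_k equals the constant c^{r^k} μ-a.e. -/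
open MeasureTheory Filter

/-- If `φ - 1` lowers the index along a chain `u k, …, u 0` ending in a fixed vector `u 0`, then
`(φ ^ r - 1) ^ k` sends `u k` to `r ^ k • u 0`. -/
theorem pow_sub_one_pow_apply_of_chain {R A : Type*} [CommRing R] [AddCommGroup A] [Module R A]
    (φ : Module.End R A) (u : ℕ → A) (k r : ℕ) (h0 : φ (u 0) = u 0)
    (hstep : ∀ j < k, φ (u (j + 1)) = u j + u (j + 1)) :
    ((φ ^ r - 1) ^ k) (u k) = r ^ k • u 0 := by
  have hfix : ∀ i : ℕ, (φ ^ i) (u 0) = u 0 := by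
    intro i
    induction i with
    | zero => simp
    | succ i ih => rw [pow_succ, Module.End.mul_apply, h0, ih]
  have hdown : ∀ j ≤ k, ((φ - 1) ^ j) (u j) = u 0 := by
    intro j
    induction j with
    | zero => simp
    | succ j ih =>
      intro hj
      rw [pow_succ, Module.End.mul_apply, LinearMap.sub_apply, hstep j hj, Module.End.one_apply,
        add_sub_cancel_right, ih (by omega)]
  have hsum : ∀ j : ℕ, ((∑ i ∈ Finset.range r, φ ^ i) ^ j) (u 0) = r ^ j • u 0 := by
    intro j
    induction j with
    | zero => simp
    | succ j ih =>
      rw [pow_succ', Module.End.mul_apply, ih, map_nsmul, LinearMap.sum_apply]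
      simp only [hfix, Finset.sum_const, Finset.card_range]
      rw [smul_smul, pow_succ]
  have hcomm : Commute (∑ i ∈ Finset.range r, φ ^ i) (φ - 1) :=
    ((Commute.sum_left _ _ _ fun i _ => (Commute.refl φ).pow_left i).sub_right
      (Commute.one_right _))
  rw [← geom_sum_mul, hcomm.mul_pow, Module.End.mul_apply, hdown k le_rfl, hsum]

/-- A property holding almost everywhere holds along almost every orbit. -/
theorem ae_forall_iterate {X : Type*} [MeasurableSpace X] {μ : Measure X} {T : X → X}
    (hT : Measure.QuasiMeasurePreserving T μ μ) {p : X → Prop} (hp : ∀ᵐ x ∂μ, p x) :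
    ∀ᵐ x ∂μ, ∀ n : ℕ, p (T^[n] x) :=
  ae_all_iff.2 fun n => (hT.iterate n).ae hp

/-- **Lemma 3.3.** Let `T` be an ergodic automorphism of a standard Borel probability space,
`k ≥ 1`, and let `f₀, …, f_k` be measurable of modulus 1 a.e. with `f_j ∘ T = f_{j-1} · f_j`
a.e. for `1 ≤ j ≤ k`, where `f₀` is the constant `c`, `|c| = 1` (so `f_k ∈ E_k(T)` with
`W_T^k f_k = c`). Let `r ≥ 1` and define `g₀ := f_k`,
`g_j := (g_{j-1} ∘ T^r) · conj(g_{j-1})`. Then `g_k = c^(r^k)` a.e., i.e.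
`W_{T^r}^k f_k = (W_T^k f_k)^(r^k)`. -/
theorem quasiEigenfunction_power_iterate
    {X : Type*} [MeasurableSpace X] [StandardBorelSpace X]
    (μ : Measure X) [IsProbabilityMeasure μ] (T : X ≃ᵐ X)
    (hTerg : Ergodic (⇑T) μ)
    (k : ℕ) (hk : 1 ≤ k)
    (f : ℕ → X → ℂ)
    (hmeas : ∀ j ≤ k, Measurable (f j))
    (hmod : ∀ j ≤ k, ∀ᵐ x ∂μ, ‖f j x‖ = 1)
    (c : ℂ) (hc : ‖c‖ = 1)
    (hf0 : ∀ x, f 0 x = c)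
    (hchain : ∀ j, 1 ≤ j → j ≤ k → ∀ᵐ x ∂μ, f j (T x) = f (j - 1) x * f j x)
    (r : ℕ) (hr : 1 ≤ r)
    (g : ℕ → X → ℂ)
    (hg0 : g 0 = f k)
    (hgrec : ∀ j, 1 ≤ j → j ≤ k →
      ∀ x, g j x = g (j - 1) ((⇑T)^[r] x) * (starRingEnd ℂ) (g (j - 1) x)) :
    ∀ᵐ x ∂μ, g k x = c ^ (r ^ k) := by
  have hT : Measure.QuasiMeasurePreserving T μ μ :=
    hTerg.toMeasurePreserving.quasiMeasurePreserving
  have hmod_orbit : ∀ᵐ x ∂μ, ∀ n : ℕ, ∀ j ≤ k, ‖f j (T^[n] x)‖ = 1 :=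
    ae_forall_iterate hT ((ae_ball_iff (Set.finite_Iic k).countable).2 hmod)
  have hchain_orbit : ∀ᵐ x ∂μ, ∀ n : ℕ, ∀ j < k,
      f (j + 1) (T (T^[n] x)) = f j (T^[n] x) * f (j + 1) (T^[n] x) :=
    ae_forall_iterate hT ((ae_ball_iff (Set.finite_Iio k).countable).2
      fun j hj => hchain (j + 1) (by omega) hj)
  filter_upwards [hmod_orbit, hchain_orbit] with x hx hxc
  have hlift : ∀ j n : ℕ, ∃ z : Circle, j ≤ k → (z : ℂ) = f j (T^[n] x) := by
    intro j n
    by_cases hj : j ≤ k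
    · exact ⟨⟨f j (T^[n] x), mem_sphere_zero_iff_norm.2 (hx n j hj)⟩, fun _ => rfl⟩
    · exact ⟨1, fun h => absurd h hj⟩
  choose z hz using hlift
  let u : ℕ → ℕ → Additive Circle := fun j n => Additive.ofMul (z j n)
  let φ : Module.End ℤ (ℕ → Additive Circle) := LinearMap.funLeft ℤ (Additive Circle) Nat.succ
  have hφ : ∀ (i : ℕ) (v : ℕ → Additive Circle) (n : ℕ), (φ ^ i) v n = v (n + i) := by
    intro i
    induction i with
    | zero => simp
    | succ i ih =>
      intro v n
      rw [pow_succ, Module.End.mul_apply, ih]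
      rfl
  have hu0 : φ (u 0) = u 0 := by
    funext n
    refine congrArg Additive.ofMul (Circle.ext ?_)
    rw [hz 0 (n + 1) k.zero_le, hz 0 n k.zero_le, hf0, hf0]
  have hustep : ∀ j < k, φ (u (j + 1)) = u j + u (j + 1) := by
    intro j hj
    funext n
    refine congrArg Additive.ofMul (Circle.ext ?_ : z (j + 1) (n + 1) = z j n * z (j + 1) n)
    rw [Circle.coe_mul, hz _ _ hj, hz _ _ hj, hz _ _ hj.le, Function.iterate_succ_apply',
      hxc n j hj]
  have hg : ∀ j ≤ k, ∀ n : ℕ,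
      g j (T^[n] x) = ((((φ ^ r - 1) ^ j) (u k) n).toMul : ℂ) := by
    intro j
    induction j with
    | zero =>
      intro _ n
      rw [hg0, pow_zero, ← hz k n le_rfl]
      rfl
    | succ j ih =>
      intro hj n
      rw [hgrec (j + 1) (by omega) hj, Nat.add_sub_cancel, ← Function.iterate_add_apply,
        ih (by omega), ih (by omega), pow_succ', Module.End.mul_apply, LinearMap.sub_apply,
        Module.End.one_apply, Pi.sub_apply, hφ, toMul_sub, Circle.coe_div, div_eq_mul_inv,
        ← Circle.coe_inv, Circle.coe_inv_eq_conj, add_comm r n]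
  have hgk := hg k le_rfl 0
  rw [pow_sub_one_pow_apply_of_chain φ u k r hu0 hustep, Pi.smul_apply, toMul_nsmul,
    Circle.coe_pow] at hgk
  have hc0 : ((u 0 0).toMul : ℂ) = c := (hz 0 0 k.zero_le).trans (hf0 _)
  rw [hc0] at hgk
  exact hgk
end
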